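/- arXiv:1006.4762 — 2 statements merged into one kernel-verified Lean document; each statement's English description precedes it below -/
import Mathlib

section
/- For n ≥ 1, the invariant ring F_q[V ⊕ V*]^{B_n}, i.e. the subalgebra of F_q[x_1,…,x_n,y_1,…,y_n] of elements fixed by every element of B_n, equals the F_q-subalgebra generated by the 4n−1 elements f̃_1,…,f̃_n, f̃_1*,…,f̃_n*, and u_j for 1−n ≤ j ≤ n−1. -/
open MvPolynomial Matrix

variable (F : Type) [Field F] [Fintype F] (n : ℕ)

/-- `fX F n k` is the orbit product `f_k` (1-indexed, meaningful for `1 ≤ k ≤ n`). -/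
noncomputable def fX (k : ℕ) : MvPolynomial (Fin n ⊕ Fin n) F :=
  if h : 1 ≤ k ∧ k ≤ n then
    ∏ α : Fin (k - 1) → F,
      (X (Sum.inl ⟨k - 1, by omega⟩) +
        ∑ j : Fin (k - 1), C (α j) * X (Sum.inl ⟨j.val, by omega⟩))
  else 0

/-- `fY F n k` is `f_k^*` (1-indexed), the orbit product of `y_{n+1-k}`. -/
noncomputable def fY (k : ℕ) : MvPolynomial (Fin n ⊕ Fin n) F :=
  if h : 1 ≤ k ∧ k ≤ n then
    ∏ α : Fin (k - 1) → F,
      (X (Sum.inr ⟨n - k, by omega⟩) +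
        ∑ j : Fin (k - 1), C (α j) * X (Sum.inr ⟨n - 1 - j.val, by omega⟩))
  else 0

/-- `uInv F n j` is the invariant `u_j`, for `j : ℤ`. -/
noncomputable def uInv (j : ℤ) : MvPolynomial (Fin n ⊕ Fin n) F :=
  if 0 ≤ j then ∑ k : Fin n, X (Sum.inl k) ^ (Fintype.card F) ^ j.toNat * X (Sum.inr k)
  else ∑ k : Fin n, X (Sum.inl k) * X (Sum.inr k) ^ (Fintype.card F) ^ (-j).toNat

/-- `cX F n s t` is the Dickson-type invariant `c_{s,t}` (in the `x`-variables):
the sum over strictly increasing sequences `1 ≤ j_1 < ⋯ < j_{s-t} ≤ s` (encoded as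
strictly monotone functions `Fin (s-t) → Fin s`) of `∏_l f_{j_l}^{(q-1)·q^{t+l-j_l}}`. -/
noncomputable def cX (s t : ℕ) : MvPolynomial (Fin n ⊕ Fin n) F :=
  if s ≤ n then
    ∑ g ∈ Finset.univ.filter (fun g : Fin (s - t) → Fin s => ∀ a b : Fin (s - t), a < b → g a < g b),
      ∏ l : Fin (s - t),
        fX F n ((g l).val + 1) ^ ((Fintype.card F - 1) * (Fintype.card F) ^ (t + l.val - (g l).val))
  else 0

/-- `cY F n s t` is `c_{s,t}^*` (in the `y`-variables). -/
noncomputable def cY (s t : ℕ) : MvPolynomial (Fin n ⊕ Fin n) F :=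
  if s ≤ n then
    ∑ g ∈ Finset.univ.filter (fun g : Fin (s - t) → Fin s => ∀ a b : Fin (s - t), a < b → g a < g b),
      ∏ l : Fin (s - t),
        fY F n ((g l).val + 1) ^ ((Fintype.card F - 1) * (Fintype.card F) ^ (t + l.val - (g l).val))
  else 0

/-- The action of `σ ∈ GL_n(F)` on `F[V ⊕ V*] = F[x_1,…,x_n,y_1,…,y_n]`:
`σ` acts naturally on the span of the `x_j` (identified with `V`, so `σ·x_j = ∑_i σ_{ij} x_i`)
and by `σ·λ = λ ∘ σ⁻¹` on the span of the `y_j` (so `σ·y_j = ∑_i (σ⁻¹)_{ji} y_i`). -/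
noncomputable def gact (σ : GL (Fin n) F) :
    MvPolynomial (Fin n ⊕ Fin n) F →ₐ[F] MvPolynomial (Fin n ⊕ Fin n) F :=
  aeval (Sum.elim
    (fun j => ∑ i : Fin n, C ((σ : Matrix (Fin n) (Fin n) F) i j) * X (Sum.inl i))
    (fun j => ∑ i : Fin n,
      C (((σ⁻¹ : GL (Fin n) F) : Matrix (Fin n) (Fin n) F) j i) * X (Sum.inr i)))

/-- `σ` belongs to `U_n`: upper unipotent. -/
def isUpperUnipotent (σ : GL (Fin n) F) : Prop :=
  (∀ i : Fin n, (σ : Matrix (Fin n) (Fin n) F) i i = 1) ∧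
    ∀ i j : Fin n, j < i → (σ : Matrix (Fin n) (Fin n) F) i j = 0

/-- `σ` belongs to `B_n`: upper triangular (invertibility is part of `GL`). -/
def isUpperTriangular (σ : GL (Fin n) F) : Prop :=
  ∀ i j : Fin n, j < i → (σ : Matrix (Fin n) (Fin n) F) i j = 0


section core
variable {R : Type} [CommRing R] [Algebra F R]

/-- the additive polynomial vanishing on `z 0, …, z (k-1)` -/
noncomputable def LL (z : ℕ → R) : ℕ → (R →ₗ[F] R)
  | 0 => LinearMap.id
  | k + 1 => (FiniteField.frobeniusAlgHom F R).toLinearMap ∘ₗ LL z k -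
      LinearMap.mulLeft F ((LL z k (z k)) ^ (Fintype.card F - 1)) ∘ₗ LL z k

noncomputable def ff (z : ℕ → R) (k : ℕ) : R := LL F z k (z k)

lemma LL_zero (z : ℕ → R) (T : R) : LL F z 0 T = T := rfl

lemma LL_succ (z : ℕ → R) (k : ℕ) (T : R) : LL F z (k + 1) T =
    (LL F z k T) ^ Fintype.card F - ff F z k ^ (Fintype.card F - 1) * LL F z k T := rfl

lemma LL_vanish (z : ℕ → R) (k i : ℕ) (h : i < k) : LL F z k (z i) = 0 := by
  induction k with
  | zero => omega
  | succ k ih =>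
    rw [LL_succ]
    have hq : Fintype.card F - 1 + 1 = Fintype.card F := Nat.sub_add_cancel Fintype.card_pos
    rcases Nat.lt_succ_iff_lt_or_eq.mp h with h | rfl
    · rw [ih h, zero_pow Fintype.card_ne_zero]; simp
    · rw [show LL F z i (z i) = ff F z i from rfl, ← pow_succ, hq, sub_self]

lemma LL_expand (z : ℕ → R) (H : Subalgebra F R) (k : ℕ)
    (hH : ∀ i < k, ff F z i ^ (Fintype.card F - 1) ∈ H) :
    ∃ c : ℕ → R, (∀ s, c s ∈ H) ∧ c k = 1 ∧ (∀ s, k < s → c s = 0) ∧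
      ∀ T, LL F z k T = ∑ s ∈ Finset.range (k + 1), c s * T ^ (Fintype.card F ^ s) := by
  induction k with
  | zero =>
    refine ⟨fun s => if s = 0 then 1 else 0, fun s => ?_, by simp, fun s hs => ?_, fun T => ?_⟩
    · dsimp only; split_ifs
      exacts [one_mem _, zero_mem _]
    · simp; omega
    · simp [LL_zero]
  | succ k ih =>
    obtain ⟨c, hc, hk, h0, hT⟩ := ih fun i hi => hH i (by omega)
    refine ⟨fun s => (if s = 0 then 0 else (c (s - 1)) ^ Fintype.card F)
      - ff F z k ^ (Fintype.card F - 1) * c s, fun s => ?_, ?_, ?_, fun T => ?_⟩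
    · refine sub_mem ?_ (mul_mem (hH k (by omega)) (hc s))
      split_ifs
      exacts [zero_mem _, pow_mem (hc _) _]
    · simp [hk, h0]
    · intro s hs
      have h1 : k < s - 1 := by omega
      have h2 : k < s := by omega
      have h3 : s ≠ 0 := by omega
      simp [h0 _ h1, h0 _ h2, h3, Fintype.card_ne_zero]
    · rw [LL_succ, hT]
      simp only [sub_mul, Finset.sum_sub_distrib]
      congr 1
      · have := map_sum (FiniteField.frobeniusAlgHom F R)
          (fun s => c s * T ^ (Fintype.card F ^ s)) (Finset.range (k + 1))
        simp only [FiniteField.coe_frobeniusAlgHom] at this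
        rw [this, Finset.sum_range_succ' _ (k + 1)]
        simp [mul_pow, ← pow_mul, ← pow_succ]
      · rw [Finset.sum_range_succ _ (k + 1), h0 (k + 1) (by omega), Finset.mul_sum]
        simp [mul_assoc]

/-- triangular substitutions -/
def IsTri (z : ℕ → R) (m : ℕ) (τ : R →ₐ[F] R) : Prop :=
  ∀ i < m, ∃ c : F, c ≠ 0 ∧ ∃ a : ℕ → F, τ (z i) = c • z i + ∑ j ∈ Finset.range i, a j • z j

lemma LL_tri (z : ℕ → R) (m : ℕ) (τ : R →ₐ[F] R) (h : IsTri F z m τ) (k : ℕ) (hk : k ≤ m) :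
    ∀ T, τ (LL F z k T) = LL F z k (τ T) := by
  induction k with
  | zero => intro T; rfl
  | succ k ih =>
    intro T
    have ih := ih (by omega)
    obtain ⟨c, hc, a, hca⟩ := h k (by omega)
    have hf : τ (ff F z k) = c • ff F z k := by
      unfold ff
      rw [ih, hca, map_add, map_smul, map_sum]
      rw [Finset.sum_eq_zero, add_zero]
      intro j hj
      rw [map_smul, LL_vanish F z k j (Finset.mem_range.mp hj), smul_zero]
    rw [LL_succ, LL_succ, map_sub, map_pow, map_mul, map_pow, ih, hf, smul_pow,
      FiniteField.pow_card_sub_one_eq_one c hc, one_smul]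

lemma ff_tri (z : ℕ → R) (m : ℕ) (τ : R →ₐ[F] R) (h : IsTri F z m τ) (k : ℕ) (hk : k < m) :
    τ (ff F z k ^ (Fintype.card F - 1)) = ff F z k ^ (Fintype.card F - 1) := by
  obtain ⟨c, hc, a, hca⟩ := h k hk
  have hf : τ (ff F z k) = c • ff F z k := by
    unfold ff
    rw [LL_tri F z m τ h k hk.le, hca, map_add, map_smul, map_sum]
    rw [Finset.sum_eq_zero, add_zero]
    intro j hj
    rw [map_smul, LL_vanish F z k j (Finset.mem_range.mp hj), smul_zero]
  rw [map_pow, hf, smul_pow, FiniteField.pow_card_sub_one_eq_one c hc, one_smul]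

lemma prod_add_smul [IsDomain R] (a b : R) :
    ∏ c : F, (a + c • b) = a ^ Fintype.card F - b ^ (Fintype.card F - 1) * a := by
  have hq : Fintype.card F - 1 + 1 = Fintype.card F := Nat.sub_add_cancel Fintype.card_pos
  have hq2 : Fintype.card F - 1 ≠ 0 := by have := Fintype.one_lt_card (α := F); omega
  by_cases hb : b = 0
  · simp [hb, hq2]
  · let K := FractionRing R
    apply IsFractionRing.injective R K
    have hb' : algebraMap R K b ≠ 0 := by simpa using hb
    rw [map_prod, map_sub, map_mul, map_pow, map_pow, ← Equiv.prod_comp (Equiv.neg F)]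
    set A := algebraMap R K a with hA
    set B := algebraMap R K b with hB
    have h1 : ∀ c : F, algebraMap R K (a + (Equiv.neg F c) • b) = B * (A / B - algebraMap F K c) := by
      intro c
      rw [map_add, Equiv.neg_apply, neg_smul, map_neg, Algebra.smul_def, map_mul,
        ← IsScalarTower.algebraMap_apply, ← hA, ← hB]
      rw [mul_sub, mul_div_cancel₀ _ hb']
      ring
    have h3 := Polynomial.prod_multiset_X_sub_C_of_monic_of_roots_card_eq
      (p := (Polynomial.X ^ Fintype.card F - Polynomial.X : Polynomial F))
      (Polynomial.monic_X_pow_sub (by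
        rw [Polynomial.degree_X]; exact_mod_cast Fintype.one_lt_card))
      (by rw [FiniteField.roots_X_pow_card_sub_X,
        FiniteField.X_pow_card_sub_X_natDegree_eq F Fintype.one_lt_card]; rfl)
    rw [FiniteField.roots_X_pow_card_sub_X] at h3
    have h2 := congrArg (Polynomial.aeval (A / B)) h3
    change Polynomial.aeval (A / B) (∏ c : F, (Polynomial.X - Polynomial.C c)) = _ at h2
    simp only [map_prod, map_sub, map_pow, Polynomial.aeval_X, Polynomial.aeval_C] at h2
    rw [Finset.prod_congr rfl fun c _ => h1 c, Finset.prod_mul_distrib, h2, Finset.prod_const,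
      Finset.card_univ, mul_sub, ← mul_pow, mul_div_cancel₀ _ hb']
    congr 1
    nth_rewrite 1 [← hq]
    rw [pow_succ, mul_assoc, mul_div_cancel₀ _ hb']

lemma LL_prod [IsDomain R] (z : ℕ → R) (k : ℕ) : ∀ T, LL F z k T =
    ∏ α : Fin k → F, (T + ∑ j : Fin k, α j • z j.val) := by
  induction k with
  | zero => intro T; simp [LL_zero]
  | succ k ih =>
    intro T
    rw [LL_succ, ← prod_add_smul]
    rw [← (Fin.snocEquiv (fun _ : Fin (k + 1) => F)).prod_comp, Fintype.prod_prod_type]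
    refine Finset.prod_congr rfl fun c _ => ?_
    have : LL F z k T + c • ff F z k = LL F z k (T + c • z k) := by
      rw [map_add, map_smul]; rfl
    rw [this, ih]
    refine Finset.prod_congr rfl fun α _ => ?_
    rw [Fin.sum_univ_castSucc]
    simp [Fin.snocEquiv]
    ring
end core

set_option linter.unusedSectionVars false

section red
variable {F} {R : Type} [CommRing R] [Algebra F R] {ι : Type} [Fintype ι]

def mon (g : ι → R) (e : ι → ℕ) : R := ∏ i, g i ^ e i

def wtt (w : ι → ℕ) (e : ι → ℕ) : ℕ := ∑ i, w i * e i

lemma mon_add (g : ι → R) (e e' : ι → ℕ) : mon g (e + e') = mon g e * mon g e' := by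
  simp [mon, pow_add, Finset.prod_mul_distrib]

lemma wtt_add (w : ι → ℕ) (e e' : ι → ℕ) : wtt w (e + e') = wtt w e + wtt w e' := by
  simp [wtt, mul_add, Finset.sum_add_distrib]

lemma mon_single [DecidableEq ι] (g : ι → R) (i : ι) (k : ℕ) : mon g (Pi.single i k) = g i ^ k := by
  unfold mon
  rw [Finset.prod_eq_single i]
  · simp
  · intro j _ hj; simp [hj]
  · simp

lemma wtt_single [DecidableEq ι] (w : ι → ℕ) (i : ι) (k : ℕ) : wtt w (Pi.single i k) = w i * k := by
  unfold wtt
  rw [Finset.sum_eq_single i]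
  · simp
  · intro j _ hj; simp [hj]
  · simp

/-- span of the monomials of weight `< m` -/
def VV (H : Subalgebra F R) (g : ι → R) (w : ι → ℕ) (m : ℕ) : Submodule H R :=
  Submodule.span H (mon g '' {e | wtt w e < m})

lemma VV_mono (H : Subalgebra F R) (g : ι → R) (w : ι → ℕ) {a b : ℕ} (h : a ≤ b) :
    VV H g w a ≤ VV H g w b :=
  Submodule.span_mono (Set.image_mono fun _ he => lt_of_lt_of_le he h)

lemma mon_mem_VV (H : Subalgebra F R) (g : ι → R) (w : ι → ℕ) (e : ι → ℕ) (m : ℕ)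
    (h : wtt w e < m) : mon g e ∈ VV H g w m :=
  Submodule.subset_span ⟨e, h, rfl⟩

lemma pow_mem_VV (H : Subalgebra F R) (g : ι → R) (w : ι → ℕ) (i : ι) (k : ℕ) (m : ℕ)
    (h : w i * k < m) : g i ^ k ∈ VV H g w m := by
  classical
  rw [← mon_single]
  exact mon_mem_VV H g w _ m (by rwa [wtt_single])

lemma smul_mem_VV (H : Subalgebra F R) (g : ι → R) (w : ι → ℕ) (m : ℕ) {h x : R} (hh : h ∈ H)
    (hx : x ∈ VV H g w m) : h * x ∈ VV H g w m :=
  Submodule.smul_mem _ (⟨h, hh⟩ : H) hx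

lemma mem_VV_of_mem (H : Subalgebra F R) (g : ι → R) (w : ι → ℕ) (m : ℕ) (hm : 0 < m) {h : R}
    (hh : h ∈ H) : h ∈ VV H g w m := by
  have : (1 : R) ∈ VV H g w m := by
    have := mon_mem_VV H g w 0 m (by simpa [wtt] using hm)
    simpa [mon] using this
  simpa using smul_mem_VV H g w m hh this

lemma mul_mem_VV (H : Subalgebra F R) (g : ι → R) (w : ι → ℕ) {a b c : ℕ} (hab : a + b ≤ c + 1)
    {x y : R} (hx : x ∈ VV H g w a) (hy : y ∈ VV H g w b) : x * y ∈ VV H g w c := by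
  have h := Submodule.mul_mem_mul hx hy
  unfold VV at h
  rw [Submodule.span_mul_span] at h
  refine Submodule.span_mono ?_ h
  rintro _ ⟨_, ⟨e, he, rfl⟩, _, ⟨e', he', rfl⟩, rfl⟩
  refine ⟨e + e', ?_, mon_add g e e'⟩
  simp only [Set.mem_ofPred_eq, wtt_add] at *
  omega

lemma pow_sub_mem_VV (H : Subalgebra F R) (g : ι → R) (w : ι → ℕ) {a : ℕ} {x y : R}
    (hy : y ∈ VV H g w (a + 1)) (hxy : x - y ∈ VV H g w a) (k : ℕ) :
    x ^ k - y ^ k ∈ VV H g w (k * a) := by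
  have hx : x ∈ VV H g w (a + 1) := by
    have := add_mem (VV_mono H g w (Nat.le_succ a) hxy) hy
    simpa using this
  have hxk : ∀ k, x ^ k ∈ VV H g w (k * a + 1) := by
    intro k
    induction k with
    | zero => rw [pow_zero]; exact mem_VV_of_mem H g w _ (by omega) (one_mem _)
    | succ k ih => rw [pow_succ]; exact mul_mem_VV H g w (by rw [Nat.succ_mul]; omega) ih hx
  induction k with
  | zero => simp
  | succ k ih =>
    have : x ^ (k + 1) - y ^ (k + 1) = x ^ k * (x - y) + (x ^ k - y ^ k) * y := by ring
    rw [this]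
    exact add_mem (mul_mem_VV H g w (by rw [Nat.succ_mul]; omega) (hxk k) hxy)
      (mul_mem_VV H g w (by rw [Nat.succ_mul]; omega) ih hy)

lemma pow_mem_VV_of (H : Subalgebra F R) (g : ι → R) (w : ι → ℕ) {a : ℕ} {x y : R}
    (hy : y ∈ VV H g w (a + 1)) (hxy : x - y ∈ VV H g w a) (k : ℕ) (hk : x ^ k ∈ H)
    (hka : 0 < k * a) : y ^ k ∈ VV H g w (k * a) := by
  have := sub_mem (mem_VV_of_mem H g w _ hka hk) (pow_sub_mem_VV H g w hy hxy k)
  simpa using this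

lemma mon_reduce (H : Subalgebra F R) (g : ι → R) (w d : ι → ℕ)
    (hd : ∀ i, g i ^ d i ∈ VV H g w (w i * d i)) (m : ℕ) : ∀ e, wtt w e = m →
    mon g e ∈ Submodule.span H (mon g '' {e | ∀ i, e i < d i}) := by
  classical
  induction m using Nat.strong_induction_on with
  | _ m ih =>
    intro e he
    by_cases h : ∀ i, e i < d i
    · exact Submodule.subset_span ⟨e, h, rfl⟩
    · push Not at h
      obtain ⟨i, hi⟩ := h
      have h1 : e = Pi.single i (d i) + (e - Pi.single i (d i)) := by
        funext j
        by_cases hj : j = i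
        · subst hj; simp; omega
        · simp [hj]
      set e' := e - Pi.single i (d i) with he'
      have h2 : wtt w e = w i * d i + wtt w e' := by
        conv_lhs => rw [h1]
        rw [wtt_add, wtt_single]
      have h3 : mon g e ∈ VV H g w m := by
        rw [h1, mon_add, mon_single]
        exact mul_mem_VV H g w (b := wtt w e' + 1) (by omega) (hd i)
          (mon_mem_VV H g w e' _ (by omega))
      refine (Submodule.span_le.mpr ?_) h3
      rintro _ ⟨e'', he'', rfl⟩
      exact (ih _ he'' e'' rfl : _ ∈ _)

/-- the reduced monomials -/
def rmon (g : ι → R) (d : ι → ℕ) (e : (i : ι) → Fin (d i)) : R := mon g fun i => (e i).val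

lemma adjoin_le_rmon (H : Subalgebra F R) (g : ι → R) (w d : ι → ℕ)
    (hd : ∀ i, g i ^ d i ∈ VV H g w (w i * d i)) (r : R) (hr : r ∈ Algebra.adjoin H (Set.range g)) :
    r ∈ Submodule.span H (Set.range (rmon g d)) := by
  have h1 : Submodule.span H (mon g '' {e | ∀ i, e i < d i}) ≤
      Submodule.span H (Set.range (rmon g d)) := by
    apply Submodule.span_mono
    rintro _ ⟨e, he, rfl⟩
    exact ⟨fun i => ⟨e i, he i⟩, rfl⟩
  apply h1
  rw [Algebra.adjoin_range_eq_range_aeval] at hr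
  obtain ⟨p, rfl⟩ := hr
  change aeval g p ∈ _
  rw [MvPolynomial.aeval_def, MvPolynomial.eval₂_eq']
  refine sum_mem fun e _ => ?_
  exact Submodule.smul_mem _ (p.coeff e) (mon_reduce H g w d hd _ (fun i => e i) rfl)

lemma dedekind [IsDomain R] (H : Subalgebra F R) {G I : Type} [Fintype G] [Fintype I]
    (hcard : Fintype.card G = Fintype.card I) (τ : G → (R →ₐ[F] R)) (hτ : Function.Injective τ)
    (hH : ∀ g, ∀ h ∈ H, τ g h = h) (z : I → R)
    (hz : ∀ r, ∃ D ∈ H, D ≠ 0 ∧ D * r ∈ Submodule.span H (Set.range z))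
    (c : I → R) (hc : ∀ g i, τ g (c i) = c i) (hsum : ∑ i, c i * z i = 0) : c = 0 := by
  classical
  by_contra hc0
  let φ := Fintype.equivOfCardEq hcard
  let M : Matrix I I R := Matrix.of fun a i => τ (φ.symm a) (z i)
  have hM : M *ᵥ c = 0 := by
    funext a
    have := congrArg (τ (φ.symm a)) hsum
    rw [map_sum, map_zero] at this
    rw [Pi.zero_apply, ← this]
    simp only [Matrix.mulVec, dotProduct, M, Matrix.of_apply, map_mul, hc]
    exact Finset.sum_congr rfl fun i _ => mul_comm _ _
  have hdet := Matrix.exists_mulVec_eq_zero_iff.mp ⟨c, hc0, hM⟩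
  obtain ⟨v, hv, hvM⟩ := Matrix.exists_vecMul_eq_zero_iff.mpr hdet
  have hspan : ∀ r ∈ Submodule.span H (Set.range z), ∑ a, v a * τ (φ.symm a) r = 0 := by
    intro r hr
    induction hr using Submodule.span_induction with
    | mem x hx =>
      obtain ⟨i, rfl⟩ := hx
      exact congrFun hvM i
    | zero => simp
    | add x y _ _ hx hy => simp [mul_add, Finset.sum_add_distrib, hx, hy]
    | smul h x _ hx =>
      have : ∀ a, v a * τ (φ.symm a) (h • x) = h.val * (v a * τ (φ.symm a) x) := by
        intro a
        rw [Subalgebra.smul_def, smul_eq_mul, map_mul, hH _ _ h.2]; ring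
      rw [Finset.sum_congr rfl fun a _ => this a, ← Finset.mul_sum, hx, mul_zero]
  have hall : ∀ r, ∑ a, v a * τ (φ.symm a) r = 0 := by
    intro r
    obtain ⟨D, hD, hD0, hDr⟩ := hz r
    have := hspan _ hDr
    have h2 : ∀ a, v a * τ (φ.symm a) (D * r) = D * (v a * τ (φ.symm a) r) := by
      intro a
      rw [map_mul, hH _ _ hD]; ring
    rw [Finset.sum_congr rfl fun a _ => h2 a, ← Finset.mul_sum] at this
    exact (mul_eq_zero.mp this).resolve_left hD0
  have hli := linearIndependent_monoidHom R R
  have hinj : Function.Injective fun a : I => ((τ (φ.symm a) : R →ₐ[F] R) : R →* R) := by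
    intro a b hab
    apply φ.symm.injective
    apply hτ
    ext r
    exact DFunLike.congr_fun hab r
  have hli2 := hli.comp _ hinj
  rw [Fintype.linearIndependent_iff] at hli2
  apply hv
  funext a
  refine hli2 v ?_ a
  funext r
  simpa using hall r

/-- an invariant in the span is a coefficient -/
lemma mem_of_invariant [IsDomain R] (H : Subalgebra F R) {G I : Type} [Fintype G] [Fintype I]
    (hcard : Fintype.card G = Fintype.card I) (τ : G → (R →ₐ[F] R)) (hτ : Function.Injective τ)
    (hH : ∀ g, ∀ h ∈ H, τ g h = h) (z : I → R)
    (hz : ∀ r, ∃ D ∈ H, D ≠ 0 ∧ D * r ∈ Submodule.span H (Set.range z))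
    (i₀ : I) (hi₀ : z i₀ = 1) (p : R) (hp : ∀ g, τ g p = p)
    (hps : p ∈ Submodule.span H (Set.range z)) : p ∈ H := by
  classical
  obtain ⟨c, hc⟩ := (Submodule.mem_span_range_iff_exists_fun H).mp hps
  have := dedekind H hcard τ hτ hH z hz (fun i => (c i).val - if i = i₀ then p else 0) ?_ ?_
  · have := congrFun this i₀
    simp only [if_true, Pi.zero_apply, sub_eq_zero] at this
    rw [← this]; exact (c i₀).2
  · intro g i
    rw [map_sub, hH _ _ (c i).2]
    split_ifs
    · rw [hp]
    · rw [map_zero]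
  · simp only [sub_mul, Finset.sum_sub_distrib, ite_mul, zero_mul, Finset.sum_ite_eq',
      Finset.mem_univ, if_true, hi₀, mul_one]
    rw [sub_eq_zero, ← hc]
    rfl
end red

section rel
variable {R : Type} [CommRing R] [Algebra F R]

noncomputable def uu (x y : ℕ → R) (m : ℤ) : R :=
  ∑ k ∈ Finset.range n, x k ^ (Fintype.card F ^ m.toNat) *
    y (n - 1 - k) ^ (Fintype.card F ^ (-m).toNat)

lemma uu_symm (x y : ℕ → R) (m : ℤ) : uu F n x y m = uu F n y x (-m) := by
  unfold uu
  rw [← Finset.sum_range_reflect]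
  refine Finset.sum_congr rfl fun k hk => ?_
  have := Finset.mem_range.mp hk
  rw [show n - 1 - (n - 1 - k) = k by omega, neg_neg, mul_comm]

lemma sum_pow_card {κ : Type} (s : Finset κ) (f : κ → R) (k : ℕ) :
    (∑ i ∈ s, f i) ^ (Fintype.card F ^ k) = ∑ i ∈ s, f i ^ (Fintype.card F ^ k) := by
  induction k with
  | zero => simp
  | succ k ih =>
    have := map_sum (FiniteField.frobeniusAlgHom F R) (fun i => f i ^ (Fintype.card F ^ k)) s
    simp only [FiniteField.coe_frobeniusAlgHom] at this
    rw [pow_succ, pow_mul, ih, this]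
    simp [pow_mul]

lemma uu_pow (x y : ℕ → R) (s t : ℕ) :
    uu F n x y ((s : ℤ) - t) ^ (Fintype.card F ^ min s t) =
    ∑ k ∈ Finset.range n, x k ^ (Fintype.card F ^ s) * y (n - 1 - k) ^ (Fintype.card F ^ t) := by
  unfold uu
  rw [sum_pow_card]
  refine Finset.sum_congr rfl fun k _ => ?_
  rw [mul_pow, ← pow_mul, ← pow_mul, ← pow_add, ← pow_add]
  congr 3
  · omega
  · omega

lemma pairing (x y : ℕ → R) (i j : ℕ) (c c' : ℕ → R)
    (hc : ∀ T, LL F x i T = ∑ s ∈ Finset.range (i + 1), c s * T ^ (Fintype.card F ^ s))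
    (hc' : ∀ T, LL F y j T = ∑ s ∈ Finset.range (j + 1), c' s * T ^ (Fintype.card F ^ s)) :
    ∑ k ∈ Finset.range n, LL F x i (x k) * LL F y j (y (n - 1 - k)) =
    ∑ s ∈ Finset.range (i + 1), ∑ t ∈ Finset.range (j + 1),
      c s * c' t * uu F n x y ((s : ℤ) - t) ^ (Fintype.card F ^ min s t) := by
  simp only [uu_pow, hc, hc', Finset.sum_mul_sum]
  simp only [Finset.mul_sum]
  rw [Finset.sum_comm]
  refine Finset.sum_congr rfl fun s _ => ?_
  rw [Finset.sum_comm]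
  refine Finset.sum_congr rfl fun t _ => ?_
  refine Finset.sum_congr rfl fun k _ => ?_
  ring

lemma pairing_zero (x y : ℕ → R) (i j : ℕ) (hij : i + j = n) :
    ∑ k ∈ Finset.range n, LL F x i (x k) * LL F y j (y (n - 1 - k)) = 0 := by
  refine Finset.sum_eq_zero fun k hk => ?_
  have := Finset.mem_range.mp hk
  by_cases h : k < i
  · rw [LL_vanish F x i k h, zero_mul]
  · rw [LL_vanish F y j (n - 1 - k) (by omega), mul_zero]

lemma pairing_one (x y : ℕ → R) (i j : ℕ) (hij : i + j + 1 = n) :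
    ∑ k ∈ Finset.range n, LL F x i (x k) * LL F y j (y (n - 1 - k)) = ff F x i * ff F y j := by
  rw [Finset.sum_eq_single i]
  · rw [show n - 1 - i = j by omega]; rfl
  · intro k hk hki
    have := Finset.mem_range.mp hk
    by_cases h : k < i
    · rw [LL_vanish F x i k h, zero_mul]
    · rw [LL_vanish F y j (n - 1 - k) (by omega), mul_zero]
  · intro h; simp at h; omega

def pI : Fin n ⊕ Fin (n - 1) → ℕ := Sum.elim (fun k => k.val) (fun k => k.val + 1)
def pJ : Fin n ⊕ Fin (n - 1) → ℕ := Sum.elim (fun k => n - 1 - k.val) (fun k => n - 1 - k.val)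

def wM (m : ℤ) : ℕ := Fintype.card F ^ m.toNat + Fintype.card F ^ (-m).toNat

def dU : Fin n ⊕ Fin (n - 1) → ℕ := Sum.elim
  (fun k => Fintype.card F ^ min k.val (n - 1 - k.val) * (Fintype.card F - 1))
  (fun k => Fintype.card F ^ min (k.val + 1) (n - 1 - k.val))

lemma idx_exists (m : ℤ) (h1 : 1 - (n : ℤ) ≤ m) (h2 : m ≤ (n : ℤ) - 1) :
    ∃ e : Fin n ⊕ Fin (n - 1), ((pI n e : ℤ) - pJ n e) = m := by
  rcases Int.emod_two_eq_zero_or_one (n - 1 + m) with h | h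
  · refine ⟨Sum.inl ⟨((n - 1 + m) / 2).toNat, by omega⟩, ?_⟩
    simp [pI, pJ]; omega
  · refine ⟨Sum.inr ⟨((n + m) / 2).toNat - 1, by omega⟩, ?_⟩
    simp [pI, pJ]; omega

lemma idx_range (e : Fin n ⊕ Fin (n - 1)) :
    1 - (n : ℤ) ≤ ((pI n e : ℤ) - pJ n e) ∧ ((pI n e : ℤ) - pJ n e) ≤ (n : ℤ) - 1 := by
  rcases e with k | k <;> have := k.2 <;> simp [pI, pJ] <;> omega

lemma wM_mul (s t : ℕ) : wM F ((s : ℤ) - t) * Fintype.card F ^ min s t =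
    Fintype.card F ^ s + Fintype.card F ^ t := by
  unfold wM
  rw [add_mul, ← pow_add, ← pow_add]
  congr 2 <;> omega

variable {F n} in
lemma top_diff_mem {κ : Type} [Fintype κ] (x y : ℕ → R) (H : Subalgebra F R)
    (hx : ∀ i < n, ff F x i ^ (Fintype.card F - 1) ∈ H)
    (hy : ∀ i < n, ff F y i ^ (Fintype.card F - 1) ∈ H)
    (g : κ → R) (w : κ → ℕ) (idx : Fin n ⊕ Fin (n - 1) → κ)
    (hg : ∀ e, g (idx e) = uu F n x y ((pI n e : ℤ) - pJ n e))
    (hw : ∀ e, w (idx e) = wM F ((pI n e : ℤ) - pJ n e))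
    (i j : ℕ) (hi : i < n) (hj : j < n) :
    ∑ k ∈ Finset.range n, LL F x i (x k) * LL F y j (y (n - 1 - k)) -
      uu F n x y ((i : ℤ) - j) ^ (Fintype.card F ^ min i j) ∈
      VV H g w (Fintype.card F ^ i + Fintype.card F ^ j) := by
  have hU : ∀ s t a, s < n → t < n → Fintype.card F ^ s + Fintype.card F ^ t < a →
      uu F n x y ((s : ℤ) - t) ^ (Fintype.card F ^ min s t) ∈ VV H g w a := by
    intro s t a hs ht ha
    obtain ⟨e, he⟩ := idx_exists n ((s : ℤ) - t) (by omega) (by omega)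
    rw [← he, ← hg]
    apply pow_mem_VV
    rw [hw, he, wM_mul]
    exact ha
  obtain ⟨c, hc, hc1, -, hcT⟩ := LL_expand F x H i fun k hk => hx k (by omega)
  obtain ⟨c', hc', hc1', -, hcT'⟩ := LL_expand F y H j fun k hk => hy k (by omega)
  have hq := Fintype.one_lt_card (α := F)
  rw [pairing F n x y i j c c' hcT hcT', Finset.sum_range_succ, Finset.sum_range_succ _ j, hc1, hc1']
  rw [one_mul, one_mul, ← add_assoc, add_sub_cancel_right]
  refine add_mem (sum_mem fun s hs => sum_mem fun t ht => ?_) (sum_mem fun t ht => ?_)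
  · have hs := Finset.mem_range.mp hs
    have ht := Finset.mem_range.mp ht
    refine smul_mem_VV H g w _ (mul_mem (hc s) (hc' t)) (hU s t _ (by omega) (by omega) ?_)
    have h1 := Nat.pow_lt_pow_right hq hs
    have h2 := Nat.pow_le_pow_right hq.le (Nat.lt_succ_iff.mp ht)
    omega
  · have ht := Finset.mem_range.mp ht
    refine smul_mem_VV H g w _ (mul_mem (one_mem _) (hc' t)) (hU i t _ (by omega) (by omega) ?_)
    have h1 := Nat.pow_lt_pow_right hq ht
    omega

variable {F n} in
lemma u_rel {κ : Type} [Fintype κ] (x y : ℕ → R) (H : Subalgebra F R)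
    (hx : ∀ i < n, ff F x i ^ (Fintype.card F - 1) ∈ H)
    (hy : ∀ i < n, ff F y i ^ (Fintype.card F - 1) ∈ H)
    (g : κ → R) (w : κ → ℕ) (idx : Fin n ⊕ Fin (n - 1) → κ)
    (hg : ∀ e, g (idx e) = uu F n x y ((pI n e : ℤ) - pJ n e))
    (hw : ∀ e, w (idx e) = wM F ((pI n e : ℤ) - pJ n e))
    (e : Fin n ⊕ Fin (n - 1)) :
    g (idx e) ^ dU F n e ∈ VV H g w (w (idx e) * dU F n e) := by
  have hq := Fintype.one_lt_card (α := F)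
  have hd := top_diff_mem x y H hx hy g w idx hg hw
  have hge := hg e
  have hwe := hw e
  have hy' : g (idx e) ^ (Fintype.card F ^ min (pI n e) (pJ n e)) ∈ VV H g w
      (Fintype.card F ^ (pI n e) + Fintype.card F ^ (pJ n e) + 1) := by
    apply pow_mem_VV
    rw [hwe, wM_mul]; omega
  rcases e with k | k
  · have h1 := pairing_one F n x y k.val (n - 1 - k.val) (by omega)
    have h2 := hd k.val (n - 1 - k.val) (by omega) (by omega)
    rw [h1] at h2
    rw [hge] at hy'
    have h3 := pow_mem_VV_of H g w hy' h2 (Fintype.card F - 1)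
      (by rw [mul_pow]; exact mul_mem (hx _ (by omega)) (hy _ (by omega)))
      (Nat.mul_pos (by omega) (by positivity))
    rw [hge, hwe]
    convert h3 using 1
    · rw [← wM_mul]; simp only [dU, Sum.elim_inl]; rw [← mul_assoc, mul_comm]; rfl
    · rw [← pow_mul]; rfl
  · have h1 := pairing_zero F n x y (k.val + 1) (n - 1 - k.val) (by omega)
    have h2 := hd (k.val + 1) (n - 1 - k.val) (by omega) (by omega)
    rw [h1, zero_sub, neg_mem_iff, ← wM_mul] at h2
    rw [hge, hwe]
    exact h2

variable {F} in
lemma z_rel {κ : Type} [Fintype κ] (z : ℕ → R) (H : Subalgebra F R) (k : ℕ)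
    (hz : ∀ i ≤ k, ff F z i ^ (Fintype.card F - 1) ∈ H)
    (g : κ → R) (w : κ → ℕ) (i₀ : κ) (hg : g i₀ = z k) (hw : w i₀ = 1) :
    g i₀ ^ ((Fintype.card F - 1) * Fintype.card F ^ k) ∈
      VV H g w (w i₀ * ((Fintype.card F - 1) * Fintype.card F ^ k)) := by
  have hq := Fintype.one_lt_card (α := F)
  obtain ⟨c, hc, hc1, -, hcT⟩ := LL_expand F z H k fun i hi => hz i (by omega)
  have h1 : ff F z k - g i₀ ^ (Fintype.card F ^ k) ∈ VV H g w (Fintype.card F ^ k) := by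
    unfold ff
    rw [hcT, Finset.sum_range_succ, hc1, one_mul, hg, add_sub_cancel_right, ← hg]
    refine sum_mem fun s hs => smul_mem_VV H g w _ (hc s) (pow_mem_VV H g w _ _ _ ?_)
    rw [hw, one_mul]
    exact Nat.pow_lt_pow_right hq (Finset.mem_range.mp hs)
  have h2 := pow_mem_VV_of H g w (pow_mem_VV H g w i₀ (Fintype.card F ^ k) _ (by rw [hw]; omega)) h1
    (Fintype.card F - 1) (hz k le_rfl) (Nat.mul_pos (by omega) (by positivity))
  rw [hw, one_mul, mul_comm, pow_mul, mul_comm]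
  exact h2

/-- elements that get into `S` after multiplication by a power of `D` -/
def locAt (S : Subalgebra F R) (D : R) (hD : D ∈ S) : Subalgebra F R where
  carrier := {r | ∃ N : ℕ, D ^ N * r ∈ S}
  mul_mem' := by
    rintro a b ⟨N, hN⟩ ⟨M, hM⟩
    refine ⟨N + M, ?_⟩
    have := mul_mem hN hM
    rwa [show D ^ (N + M) * (a * b) = (D ^ N * a) * (D ^ M * b) by ring]
  add_mem' := by
    rintro a b ⟨N, hN⟩ ⟨M, hM⟩
    refine ⟨N + M, ?_⟩
    have := add_mem (mul_mem (pow_mem hD M) hN) (mul_mem (pow_mem hD N) hM)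
    rwa [show D ^ (N + M) * (a + b) = D ^ M * (D ^ N * a) + D ^ N * (D ^ M * b) by ring]
  algebraMap_mem' := fun r => ⟨0, by simp⟩

lemma mem_locAt (S : Subalgebra F R) (D : R) (hD : D ∈ S) (r : R) :
    r ∈ locAt F S D hD ↔ ∃ N : ℕ, D ^ N * r ∈ S := Iff.rfl

noncomputable def DD (x : ℕ → R) : R := ∏ i ∈ Finset.range n, ff F x i ^ (Fintype.card F - 1)

lemma solve (x y : ℕ → R) (S : Subalgebra F R)
    (hx : ∀ i < n, x i ∈ S)
    (hf : ∀ i < n, ff F x i ^ (Fintype.card F - 1) ∈ S)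
    (hu : ∀ i : ℕ, i < n → uu F n x y i ∈ S)
    (htop : Algebra.adjoin F (x '' Set.Iio n ∪ y '' Set.Iio n) = ⊤) (r : R) :
    ∃ N : ℕ, DD F n x ^ N * r ∈ S := by
  have hq := Fintype.one_lt_card (α := F)
  have hD : DD F n x ∈ S := prod_mem fun i hi => hf i (Finset.mem_range.mp hi)
  have hle : S ≤ locAt F S _ hD := fun s hs => ⟨0, by simpa using hs⟩
  have hL : ∀ i < n, ∀ k < n, LL F x i (x k) ∈ S := by
    intro i hi k hk
    obtain ⟨c, hc, -, -, hcT⟩ := LL_expand F x S i fun k hk => hf k (by omega)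
    rw [hcT]
    exact sum_mem fun s _ => mul_mem (hc s) (pow_mem (hx k hk) _)
  have hy : ∀ j, j < n → y j ∈ locAt F S _ hD := by
    intro j
    induction j using Nat.strong_induction_on with
    | _ j ih =>
      intro hj
      have hi : n - 1 - j < n := by omega
      set i := n - 1 - j with hidef
      obtain ⟨c, hc, -, -, hcT⟩ := LL_expand F x S i fun k hk => hf k (by omega)
      obtain ⟨c', hc', -, -, hcT'⟩ := LL_expand F y S 0 fun k hk => by omega
      have hp := pairing F n x y i 0 c c' hcT hcT'
      have hmem : ∑ k ∈ Finset.range n, LL F x i (x k) * LL F y 0 (y (n - 1 - k)) ∈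
          locAt F S _ hD := by
        rw [hp]
        apply hle
        refine sum_mem fun s hs => sum_mem fun t ht => ?_
        have hs := Finset.mem_range.mp hs
        have ht : t = 0 := by simpa using ht
        subst ht
        refine mul_mem (mul_mem (hc _) (hc' _)) (pow_mem ?_ _)
        simpa using hu s (by omega)
      rw [← Finset.add_sum_erase _ _ (Finset.mem_range.mpr hi)] at hmem
      have hrest : ∑ k ∈ (Finset.range n).erase i, LL F x i (x k) * LL F y 0 (y (n - 1 - k)) ∈
          locAt F S _ hD := by
        refine sum_mem fun k hk => ?_
        have hk1 := Finset.ne_of_mem_erase hk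
        have hk2 := Finset.mem_range.mp (Finset.mem_of_mem_erase hk)
        by_cases h : k < i
        · rw [LL_vanish F x i k h, zero_mul]; exact zero_mem _
        · exact mul_mem (hle (hL i hi k hk2)) (ih _ (by omega) (by omega))
      have h1 := sub_mem hmem hrest
      rw [add_sub_cancel_right, LL_zero, show n - 1 - i = j by omega] at h1
      have h2 : DD F n x * y j ∈ locAt F S _ hD := by
        have h3 : DD F n x = (∏ k ∈ (Finset.range n).erase i, ff F x k ^ (Fintype.card F - 1)) *
            (ff F x i ^ (Fintype.card F - 2) * LL F x i (x i)) := by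
          rw [show LL F x i (x i) = ff F x i from rfl, ← pow_succ,
            show Fintype.card F - 2 + 1 = Fintype.card F - 1 by omega]
          unfold DD
          rw [Finset.prod_erase_mul _ _ (Finset.mem_range.mpr hi)]
        have h4 : DD F n x * y j = (∏ k ∈ (Finset.range n).erase i, ff F x k ^ (Fintype.card F - 1)) *
            (ff F x i ^ (Fintype.card F - 2) * (LL F x i (x i) * y j)) := by rw [h3]; ring
        rw [h4]
        refine mul_mem (hle (prod_mem fun k hk => hf k ?_)) (mul_mem (hle (pow_mem (hL i hi i hi) _)) h1)
        exact Finset.mem_range.mp (Finset.mem_of_mem_erase hk)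
      obtain ⟨N, hN⟩ := h2
      exact ⟨N + 1, by rwa [pow_succ, mul_assoc]⟩
  have : (⊤ : Subalgebra F R) ≤ locAt F S _ hD := by
    rw [← htop]
    apply Algebra.adjoin_le
    rintro _ (⟨i, hi, rfl⟩ | ⟨i, hi, rfl⟩)
    · exact hle (hx i hi)
    · exact hy i hi
  exact this (Algebra.mem_top (x := r))
end rel

section count
lemma count_aux (m : ℕ) : ∑ k ∈ Finset.range (m + 1), min k (m - k) +
    ∑ k ∈ Finset.range m, min (k + 1) (m - k) = ∑ k ∈ Finset.range (m + 1), k := by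
  induction m with
  | zero => simp
  | succ m ih =>
    have h1 : ∑ k ∈ Finset.range (m + 1 + 1), min k (m + 1 - k) =
        ∑ k ∈ Finset.range m, min (k + 1) (m - k) := by
      rw [Finset.sum_range_succ', Finset.sum_range_succ]
      simp
    have h2 : ∑ k ∈ Finset.range (m + 1), min (k + 1) (m + 1 - k) =
        ∑ k ∈ Finset.range (m + 1), min k (m - k) + (m + 1) := by
      have : ∀ k ∈ Finset.range (m + 1), min (k + 1) (m + 1 - k) = min k (m - k) + 1 := by
        intro k hk
        have := Finset.mem_range.mp hk
        omega
      rw [Finset.sum_congr rfl this, Finset.sum_add_distrib]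
      simp
    rw [h1, h2, Finset.sum_range_succ _ (m + 1), ← ih]
    omega

/-- the degrees -/
def dX (i : Fin n) : ℕ := (Fintype.card F - 1) * Fintype.card F ^ i.val

lemma dX_pos (i : Fin n) : 0 < dX F n i := by
  have hq := Fintype.one_lt_card (α := F)
  exact Nat.mul_pos (by omega) (by positivity)

lemma prod_dU (hn : 1 ≤ n) : ∏ e, dU F n e = ∏ i, dX F n i := by
  obtain ⟨m, rfl⟩ : ∃ m, n = m + 1 := ⟨n - 1, by omega⟩
  rw [Fintype.prod_sum_type]
  simp only [dU, dX, Sum.elim_inl, Sum.elim_inr, Finset.prod_mul_distrib, Nat.add_sub_cancel]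
  rw [Finset.prod_pow_eq_pow_sum, Finset.prod_pow_eq_pow_sum, Finset.prod_pow_eq_pow_sum,
    Fin.sum_univ_eq_sum_range (fun k => k) (m + 1), ← count_aux, pow_add,
    Fin.sum_univ_eq_sum_range (fun k => min k (m - k)) (m + 1),
    ]
  have := Fin.sum_univ_eq_sum_range (fun k => min (k + 1) (m - k)) m
  rw [show ∑ i : Fin (m + 1 - 1), min (i.val + 1) (m - i.val) =
    ∑ i ∈ Finset.range m, min (i + 1) (m - i) from this]
  ring
end count

section main
variable {F n} {R : Type} [CommRing R] [Algebra F R] [IsDomain R]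

/-- the subalgebra `H[g]`, over the base field -/
def adjF {ι : Type} (H : Subalgebra F R) (g : ι → R) : Subalgebra F R :=
  (Algebra.adjoin H (Set.range g)).restrictScalars F

lemma le_adjF {ι : Type} (H : Subalgebra F R) (g : ι → R) : H ≤ adjF H g := by
  intro a ha
  unfold adjF
  rw [Subalgebra.mem_restrictScalars]
  exact (Algebra.adjoin H (Set.range g)).algebraMap_mem ⟨a, ha⟩

lemma mem_adjF {ι : Type} (H : Subalgebra F R) (g : ι → R) (i : ι) : g i ∈ adjF H g := by
  unfold adjF
  rw [Subalgebra.mem_restrictScalars]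
  exact Algebra.subset_adjoin ⟨i, rfl⟩

lemma adjF_le_rmon {ι : Type} [Fintype ι] (H : Subalgebra F R) (g : ι → R) (w d : ι → ℕ)
    (hd : ∀ i, g i ^ d i ∈ VV H g w (w i * d i)) (r : R) (hr : r ∈ adjF H g) :
    r ∈ Submodule.span H (Set.range (rmon g d)) := by
  unfold adjF at hr
  rw [Subalgebra.mem_restrictScalars] at hr
  exact adjoin_le_rmon H g w d hd r hr

lemma rmon_one {ι : Type} [Fintype ι] (g : ι → R) (d : ι → ℕ) (hd : ∀ i, 0 < d i) :
    rmon g d (fun i => ⟨0, hd i⟩) = 1 := by simp [rmon, mon]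

lemma half (x y : ℕ → R) (A : Subalgebra F R)
    (htop : Algebra.adjoin F (x '' Set.Iio n ∪ y '' Set.Iio n) = ⊤)
    (hf : ∀ i < n, ff F x i ^ (Fintype.card F - 1) ∈ A)
    (hu : ∀ i : ℕ, i < n → uu F n x y i ∈ A) (hD : DD F n x ≠ 0)
    {G : Type} [Fintype G] (τ : G → (R →ₐ[F] R)) (hτ : Function.Injective τ)
    (hcard : Fintype.card G = ∏ i, dX F n i)
    (hA : ∀ g, ∀ a ∈ A, τ g a = a) (p : R) (hp : ∀ g, τ g p = p) :
    ∃ N : ℕ, DD F n x ^ N * p ∈ A := by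
  let g : Fin n → R := fun i => x i
  let w : Fin n → ℕ := fun _ => 1
  have hred : ∀ i, g i ^ dX F n i ∈ VV A g w (w i * dX F n i) := fun i =>
    z_rel x A i.val (fun j hj => hf j (by omega)) g w i rfl rfl
  have hDA : DD F n x ∈ A := prod_mem fun i hi => hf i (Finset.mem_range.mp hi)
  have hAS := le_adjF A g
  have hsp : ∀ r, ∃ N : ℕ, DD F n x ^ N * r ∈ Submodule.span A (Set.range (rmon g (dX F n))) := by
    intro r
    obtain ⟨N, hN⟩ := solve F n x y (adjF A g)
      (fun i hi => mem_adjF A g ⟨i, hi⟩) (fun i hi => hAS (hf i hi))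
      (fun i hi => hAS (hu i hi)) htop r
    exact ⟨N, adjF_le_rmon A g w _ hred _ hN⟩
  obtain ⟨N, hN⟩ := hsp p
  refine ⟨N, mem_of_invariant A (by simp [hcard]) τ hτ hA (rmon g (dX F n)) ?_ _
    (rmon_one g _ (dX_pos F n)) _ ?_ hN⟩
  · intro r
    obtain ⟨M, hM⟩ := hsp r
    exact ⟨_, pow_mem hDA M, pow_ne_zero _ hD, hM⟩
  · intro γ
    rw [map_mul, hp, hA _ _ (pow_mem hDA N)]

lemma H_eq (x y : ℕ → R) (H : Subalgebra F R)
    (htop : Algebra.adjoin F (x '' Set.Iio n ∪ y '' Set.Iio n) = ⊤)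
    (hf : ∀ i < n, ff F x i ^ (Fintype.card F - 1) ∈ H)
    (hf' : ∀ i < n, ff F y i ^ (Fintype.card F - 1) ∈ H)
    {G : Type} [Fintype G] (τ : G → (R →ₐ[F] R)) (hτ : Function.Injective τ)
    (hcard : Fintype.card G = (∏ i, dX F n i) * ∏ i, dX F n i)
    (hH : ∀ g, ∀ a ∈ H, τ g a = a) (p : R) (hp : ∀ g, τ g p = p) : p ∈ H := by
  let g : Fin n ⊕ Fin n → R := Sum.elim (fun i => x i) (fun i => y i)
  let w : Fin n ⊕ Fin n → ℕ := fun _ => 1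
  let d : Fin n ⊕ Fin n → ℕ := Sum.elim (dX F n) (dX F n)
  have hred : ∀ i, g i ^ d i ∈ VV H g w (w i * d i) := by
    rintro (i | i)
    · exact z_rel x H i.val (fun j hj => hf j (by omega)) g w (Sum.inl i) rfl rfl
    · exact z_rel y H i.val (fun j hj => hf' j (by omega)) g w (Sum.inr i) rfl rfl
  have hd : ∀ i, 0 < d i := by
    rintro (i | i) <;> exact dX_pos F n i
  have hsp : ∀ r, r ∈ Submodule.span H (Set.range (rmon g d)) := by
    intro r
    apply adjF_le_rmon H g w _ hred
    have : (⊤ : Subalgebra F R) ≤ adjF H g := by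
      rw [← htop]
      apply Algebra.adjoin_le
      rintro _ (⟨i, hi, rfl⟩ | ⟨i, hi, rfl⟩)
      · exact mem_adjF H g (Sum.inl ⟨i, hi⟩)
      · exact mem_adjF H g (Sum.inr ⟨i, hi⟩)
    exact this (Algebra.mem_top (x := r))
  refine mem_of_invariant H (by simp [hcard, d]) τ hτ hH (rmon g d) ?_ _
    (rmon_one g _ hd) _ hp (hsp p)
  intro r
  exact ⟨1, one_mem _, one_ne_zero, by simpa using hsp r⟩

noncomputable def ug (F : Type) [Field F] [Fintype F] (n : ℕ) [Algebra F R] (x y : ℕ → R)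
    (e : Fin n ⊕ Fin (n - 1)) : R :=
  uu F n x y ((pI n e : ℤ) - pJ n e)

lemma u_indep (hn : 1 ≤ n) (x y : ℕ → R) (H : Subalgebra F R)
    (htop : Algebra.adjoin F (x '' Set.Iio n ∪ y '' Set.Iio n) = ⊤)
    (hf : ∀ i < n, ff F x i ^ (Fintype.card F - 1) ∈ H)
    (hf' : ∀ i < n, ff F y i ^ (Fintype.card F - 1) ∈ H) (hD : DD F n x ≠ 0)
    {G : Type} [Fintype G] (τ : G → (R →ₐ[F] R)) (hτ : Function.Injective τ)
    (hcard : Fintype.card G = (∏ i, dX F n i) * ∏ i, dX F n i)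
    (hH : ∀ g, ∀ a ∈ H, τ g a = a)
    (h : ((e : Fin n ⊕ Fin (n - 1)) → Fin (dU F n e)) → R) (hh : ∀ e, h e ∈ H)
    (hsum : ∑ e, h e * rmon (ug F n x y) (dU F n) e = 0) (e) : h e = 0 := by
  let g : Fin n ⊕ (Fin n ⊕ Fin (n - 1)) → R := Sum.elim (fun i => x i) (ug F n x y)
  let w : Fin n ⊕ (Fin n ⊕ Fin (n - 1)) → ℕ :=
    Sum.elim (fun _ => 1) (fun e => wM F ((pI n e : ℤ) - pJ n e))
  let d : Fin n ⊕ (Fin n ⊕ Fin (n - 1)) → ℕ := Sum.elim (dX F n) (dU F n)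
  have hred : ∀ i, g i ^ d i ∈ VV H g w (w i * d i) := by
    rintro (i | i)
    · exact z_rel x H i.val (fun j hj => hf j (by omega)) g w (Sum.inl i) rfl rfl
    · exact u_rel x y H hf hf' g w Sum.inr (fun _ => rfl) (fun _ => rfl) i
  have hDH : DD F n x ∈ H := prod_mem fun i hi => hf i (Finset.mem_range.mp hi)
  have hAS := le_adjF H g
  have hsp : ∀ r, ∃ N : ℕ, DD F n x ^ N * r ∈ Submodule.span H (Set.range (rmon g d)) := by
    intro r
    obtain ⟨N, hN⟩ := solve F n x y (adjF H g)
      (fun i hi => mem_adjF H g (Sum.inl ⟨i, hi⟩)) (fun i hi => hAS (hf i hi))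
      (fun i hi => by
        obtain ⟨e, he⟩ := idx_exists n i (by omega) (by omega)
        have := mem_adjF H g (Sum.inr e)
        simp only [g, ug, Sum.elim_inr] at this
        rwa [he] at this) htop r
    exact ⟨N, adjF_le_rmon H g w _ hred _ hN⟩
  let emb : ((e : Fin n ⊕ Fin (n - 1)) → Fin (dU F n e)) → ((i : _) → Fin (d i)) := fun e i =>
    match i with
    | Sum.inl i => ⟨0, dX_pos F n i⟩
    | Sum.inr i => e i
  have hemb : Function.Injective emb := by
    intro a b hab
    funext i
    exact congrFun hab (Sum.inr i)
  have hmon : ∀ e, rmon g d (emb e) = rmon (ug F n x y) (dU F n) e := by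
    intro e
    simp only [rmon, mon, Fintype.prod_sum_type]
    rw [Finset.prod_eq_one, one_mul]
    · rfl
    · intro i _
      exact pow_zero _
  have key := dedekind H (by simp [hcard, d, Fintype.prod_sum_type, prod_dU F n hn]) τ hτ hH (rmon g d)
    (fun r => by
      obtain ⟨M, hM⟩ := hsp r
      exact ⟨_, pow_mem hDH M, pow_ne_zero _ hD, hM⟩) (Function.extend emb h 0) ?_ ?_
  · have := congrFun key (emb e)
    rwa [hemb.extend_apply] at this
  · intro γ i
    by_cases hi : ∃ e, emb e = i
    · obtain ⟨e, rfl⟩ := hi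
      rw [hemb.extend_apply, hH _ _ (hh e)]
    · rw [Function.extend_apply' _ _ _ hi]; simp
  · rw [← hsum]
    symm
    apply Fintype.sum_of_injective emb hemb
    · intro i hi
      rw [Function.extend_apply' _ _ _ (by simpa using hi)]; simp
    · intro e
      rw [hemb.extend_apply, hmon]

lemma core_thm (hn : 1 ≤ n) (x y : ℕ → R)
    (htop : Algebra.adjoin F (x '' Set.Iio n ∪ y '' Set.Iio n) = ⊤)
    (hDx : DD F n x ≠ 0) (hDy : DD F n y ≠ 0)
    (hrel : ∀ N M h, DD F n x ^ N ∣ DD F n y ^ M * h → DD F n x ^ N ∣ h)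
    {G : Type} [Fintype G] (τ : G → (R →ₐ[F] R)) (hτ : Function.Injective τ)
    (hcard : Fintype.card G = ∏ i, dX F n i)
    (hτx : ∀ g, IsTri F x n (τ g)) (hτy : ∀ g, IsTri F y n (τ g))
    (hτu : ∀ g m, τ g (uu F n x y m) = uu F n x y m)
    {G' : Type} [Fintype G'] (τ' : G' → (R →ₐ[F] R)) (hτ' : Function.Injective τ')
    (hcard' : Fintype.card G' = (∏ i, dX F n i) * ∏ i, dX F n i)
    (hτx' : ∀ g, IsTri F x n (τ' g)) (hτy' : ∀ g, IsTri F y n (τ' g))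
    (A : Subalgebra F R) (hA : A = Algebra.adjoin F
      (((fun i => ff F x i ^ (Fintype.card F - 1)) '' Set.Iio n ∪
        (fun i => ff F y i ^ (Fintype.card F - 1)) '' Set.Iio n) ∪
        uu F n x y '' Set.Icc (1 - (n : ℤ)) ((n : ℤ) - 1)))
    (p : R) (hp : ∀ g, τ g p = p) : p ∈ A := by
  have hq := Fintype.one_lt_card (α := F)
  set H : Subalgebra F R := Algebra.adjoin F
      ((fun i => ff F x i ^ (Fintype.card F - 1)) '' Set.Iio n ∪
        (fun i => ff F y i ^ (Fintype.card F - 1)) '' Set.Iio n) with hHdef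
  have hHA : H ≤ A := by rw [hA]; exact Algebra.adjoin_mono Set.subset_union_left
  have hf : ∀ i < n, ff F x i ^ (Fintype.card F - 1) ∈ H := fun i hi =>
    Algebra.subset_adjoin (Or.inl ⟨i, hi, rfl⟩)
  have hf' : ∀ i < n, ff F y i ^ (Fintype.card F - 1) ∈ H := fun i hi =>
    Algebra.subset_adjoin (Or.inr ⟨i, hi, rfl⟩)
  have huA : ∀ m ∈ Set.Icc (1 - (n : ℤ)) ((n : ℤ) - 1), uu F n x y m ∈ A := fun m hm => by
    rw [hA]; exact Algebra.subset_adjoin (Or.inr ⟨m, hm, rfl⟩)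
  have hfix : ∀ g, ∀ a ∈ A, τ g a = a := by
    intro g a ha
    have : A ≤ AlgHom.equalizer (τ g) (AlgHom.id F R) := by
      rw [hA]
      apply Algebra.adjoin_le
      rintro _ ((⟨i, hi, rfl⟩ | ⟨i, hi, rfl⟩) | ⟨m, hm, rfl⟩)
      · exact ff_tri F x n _ (hτx g) i hi
      · exact ff_tri F y n _ (hτy g) i hi
      · exact hτu g m
    exact this ha
  have hfix' : ∀ g, ∀ a ∈ H, τ' g a = a := by
    intro g a ha
    have : H ≤ AlgHom.equalizer (τ' g) (AlgHom.id F R) := by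
      apply Algebra.adjoin_le
      rintro _ (⟨i, hi, rfl⟩ | ⟨i, hi, rfl⟩)
      · exact ff_tri F x n _ (hτx' g) i hi
      · exact ff_tri F y n _ (hτy' g) i hi
    exact this ha
  obtain ⟨N, hN⟩ := half x y A htop (fun i hi => hHA (hf i hi))
    (fun i hi => huA _ ⟨by omega, by omega⟩) hDx τ hτ hcard hfix p hp
  obtain ⟨M, hM⟩ := half y x A (by rw [Set.union_comm]; exact htop) (fun i hi => hHA (hf' i hi))
    (fun i hi => by rw [uu_symm]; exact huA _ ⟨by omega, by omega⟩) hDy τ hτ hcard hfix p hp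
  have hspan : ∀ a ∈ A, a ∈ Submodule.span H (Set.range (rmon (ug F n x y) (dU F n))) := by
    intro a ha
    apply adjF_le_rmon H _ (fun e => wM F ((pI n e : ℤ) - pJ n e)) _
      (u_rel x y H hf hf' _ _ id (fun _ => rfl) (fun _ => rfl))
    have : A ≤ adjF H (ug F n x y) := by
      rw [hA]
      apply Algebra.adjoin_le
      rintro _ (h | ⟨m, hm, rfl⟩)
      · exact le_adjF H _ (Algebra.subset_adjoin h)
      · obtain ⟨e, he⟩ := idx_exists n m hm.1 hm.2
        have := mem_adjF H (ug F n x y) e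
        simp only [ug] at this
        rwa [he] at this
    exact this ha
  obtain ⟨h, hh⟩ := (Submodule.mem_span_range_iff_exists_fun H).mp (hspan _ hN)
  obtain ⟨k, hk⟩ := (Submodule.mem_span_range_iff_exists_fun H).mp (hspan _ hM)
  simp only [Subalgebra.smul_def, smul_eq_mul] at hh hk
  have hDxH : DD F n x ∈ H := prod_mem fun i hi => hf i (Finset.mem_range.mp hi)
  have hDyH : DD F n y ∈ H := prod_mem fun i hi => hf' i (Finset.mem_range.mp hi)
  have hz := u_indep hn x y H htop hf hf' hDx τ' hτ' hcard' hfix'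
    (fun e => DD F n y ^ M * (h e).val - DD F n x ^ N * (k e).val)
    (fun e => sub_mem (mul_mem (pow_mem hDyH _) (h e).2) (mul_mem (pow_mem hDxH _) (k e).2))
    (by
      simp only [sub_mul, Finset.sum_sub_distrib, mul_assoc]
      rw [← Finset.mul_sum, ← Finset.mul_sum, hh, hk]; ring)
  have hdvd : ∀ e, DD F n x ^ N ∣ (h e).val := fun e =>
    hrel N M _ ⟨_, sub_eq_zero.mp (hz e)⟩
  choose r hr using hdvd
  have hrH : ∀ e, r e ∈ H := by
    intro e
    refine H_eq x y H htop hf hf' τ' hτ' hcard' hfix' _ fun g => ?_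
    have h1 := hfix' g _ (h e).2
    rw [hr, map_mul, hfix' g _ (pow_mem hDxH N)] at h1
    exact mul_left_cancel₀ (pow_ne_zero _ hDx) h1
  have hpe : p = ∑ e, r e * rmon (ug F n x y) (dU F n) e := by
    apply mul_left_cancel₀ (pow_ne_zero N hDx)
    rw [← hh, Finset.mul_sum]
    refine Finset.sum_congr rfl fun e _ => ?_
    rw [hr]; ring
  rw [hpe]
  refine sum_mem fun e _ => mul_mem (hHA (hrH e)) ?_
  unfold rmon mon
  exact prod_mem fun i _ => pow_mem (huA _ (idx_range n i)) _
end main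

section concrete
open Finset

noncomputable def xx (k : ℕ) : MvPolynomial (Fin n ⊕ Fin n) F :=
  if h : k < n then X (Sum.inl ⟨k, h⟩) else 0

noncomputable def yy (k : ℕ) : MvPolynomial (Fin n ⊕ Fin n) F :=
  if h : k < n then X (Sum.inr ⟨n - 1 - k, by omega⟩) else 0

lemma xx_val (k : Fin n) : xx F n k.val = X (Sum.inl k) := by simp [xx]

lemma yy_val (k : Fin n) : yy F n (n - 1 - k.val) = X (Sum.inr k) := by
  have := k.2
  rw [yy, dif_pos (by omega)]
  congr 2
  ext
  simp only
  omega

lemma yy_lt (k : ℕ) (h : k < n) : yy F n k = X (Sum.inr ⟨n - 1 - k, by omega⟩) := by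
  rw [yy, dif_pos h]

lemma xx_lt (k : ℕ) (h : k < n) : xx F n k = X (Sum.inl ⟨k, h⟩) := by
  rw [xx, dif_pos h]

lemma fX_eq (i : ℕ) (hi : i < n) : fX F n (i + 1) = ff F (xx F n) i := by
  rw [fX, dif_pos (by omega), ff, LL_prod]
  refine Finset.prod_congr rfl fun α _ => ?_
  rw [xx_lt F n i hi]
  congr 1
  refine Finset.sum_congr rfl fun j _ => ?_
  have hj : j.val < n := by have := j.2; omega
  rw [MvPolynomial.smul_eq_C_mul, xx_lt F n j.val hj]

lemma fY_eq (i : ℕ) (hi : i < n) : fY F n (i + 1) = ff F (yy F n) i := by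
  rw [fY, dif_pos (by omega), ff, LL_prod]
  refine Finset.prod_congr rfl fun α _ => ?_
  rw [yy_lt F n i hi]
  congr 1
  · congr 3
    omega
  refine Finset.sum_congr rfl fun j _ => ?_
  have hj : j.val < n := by have := j.2; omega
  rw [MvPolynomial.smul_eq_C_mul, yy_lt F n j.val hj]

lemma uInv_eq (m : ℤ) : uInv F n m = uu F n (xx F n) (yy F n) m := by
  rw [uu, Finset.sum_range, uInv]
  simp only [xx_val, yy_val]
  split_ifs with h
  · have : (-m).toNat = 0 := by omega
    simp [this]
  · have : m.toNat = 0 := by omega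
    simp [this]

lemma htop_c : Algebra.adjoin F (xx F n '' Set.Iio n ∪ yy F n '' Set.Iio n) = ⊤ := by
  rw [eq_top_iff, ← MvPolynomial.adjoin_range_X]
  apply Algebra.adjoin_mono
  rintro _ ⟨k | k, rfl⟩
  · exact Or.inl ⟨k.val, k.2, xx_val F n k⟩
  · exact Or.inr ⟨n - 1 - k.val, by have := k.2; simp; omega, yy_val F n k⟩

lemma ffx_ne (i : ℕ) (hi : i < n) : ff F (xx F n) i ≠ 0 := by
  rw [ff, LL_prod]
  refine Finset.prod_ne_zero_iff.mpr fun α _ h => ?_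
  have h2 := congrArg (MvPolynomial.eval (Sum.elim (fun k : Fin n => if k.val = i then (1:F) else 0) 0)) h
  rw [map_add, map_sum, xx_lt F n i hi, Finset.sum_eq_zero] at h2
  · simp at h2
  · intro j _
    have hj : j.val < n := by have := j.2; omega
    have hj2 := j.2.ne
    rw [xx_lt F n j.val hj, MvPolynomial.smul_eq_C_mul]
    simp [hj2]

lemma ffy_ne (i : ℕ) (hi : i < n) : ff F (yy F n) i ≠ 0 := by
  rw [ff, LL_prod]
  refine Finset.prod_ne_zero_iff.mpr fun α _ h => ?_
  have h2 := congrArg (MvPolynomial.eval (Sum.elim 0 (fun k : Fin n => if k.val = n - 1 - i then (1:F) else 0))) h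
  rw [map_add, map_sum, yy_lt F n i hi, Finset.sum_eq_zero] at h2
  · simp at h2
  · intro j _
    have hj : j.val < n := by have := j.2; omega
    have hj2 : n - 1 - j.val ≠ n - 1 - i := by have := j.2; omega
    rw [yy_lt F n j.val hj, MvPolynomial.smul_eq_C_mul]
    simp [hj2]

lemma DDx_ne : DD F n (xx F n) ≠ 0 :=
  Finset.prod_ne_zero_iff.mpr fun i hi => pow_ne_zero _ (ffx_ne F n i (Finset.mem_range.mp hi))

lemma DDy_ne : DD F n (yy F n) ≠ 0 :=
  Finset.prod_ne_zero_iff.mpr fun i hi => pow_ne_zero _ (ffy_ne F n i (Finset.mem_range.mp hi))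

lemma DD_supp (z : ℕ → MvPolynomial (Fin n ⊕ Fin n) F) (s : Set (Fin n ⊕ Fin n))
    (hz : ∀ i < n, z i ∈ MvPolynomial.supported F s) : DD F n z ∈ MvPolynomial.supported F s := by
  refine prod_mem fun i hi => pow_mem ?_ _
  have hi := Finset.mem_range.mp hi
  rw [ff, LL_prod]
  refine prod_mem fun α _ => add_mem (hz i hi) (sum_mem fun j _ => Subalgebra.smul_mem _ (hz _ ?_) _)
  have := j.2; omega

lemma relprime_supp (a b : MvPolynomial (Fin n ⊕ Fin n) F) (ha : a ≠ 0) (hb : b ≠ 0)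
    (ha' : a ∈ MvPolynomial.supported F (Set.range (Sum.inl : Fin n → Fin n ⊕ Fin n)))
    (hb' : b ∈ MvPolynomial.supported F (Set.range (Sum.inr : Fin n → Fin n ⊕ Fin n))) :
    IsRelPrime a b := by
  have key : ∀ (c d : MvPolynomial (Fin n ⊕ Fin n) F) (s : Set (Fin n ⊕ Fin n)), d ≠ 0 →
      d ∈ MvPolynomial.supported F s → c ∣ d → ∀ i, i ∉ s → MvPolynomial.degreeOf i c = 0 := by
    rintro c d s hd hds ⟨e, rfl⟩ i hi
    have h0 : MvPolynomial.degreeOf i (c * e) = 0 := by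
      by_contra hv
      replace hv := MvPolynomial.mem_vars_iff_degreeOf_ne_zero.mpr hv
      exact hi (MvPolynomial.mem_supported.mp hds hv)
    rw [MvPolynomial.degreeOf_mul_eq (left_ne_zero_of_mul hd) (right_ne_zero_of_mul hd)] at h0
    omega
  intro c hca hcb
  have hc0 : c ≠ 0 := ne_zero_of_dvd_ne_zero ha hca
  have hdeg : ∀ i, MvPolynomial.degreeOf i c = 0 := by
    rintro (i | i)
    · exact key c b _ hb hb' hcb _ (by simp)
    · exact key c a _ ha ha' hca _ (by simp)
  have hv : c.vars = ∅ := by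
    ext i
    simp [MvPolynomial.mem_vars_iff_degreeOf_ne_zero, hdeg i]
  rw [MvPolynomial.vars_eq_empty_iff_eq_C] at hv
  rw [hv]
  refine IsUnit.map _ (isUnit_iff_ne_zero.mpr ?_)
  intro h
  rw [h] at hv
  exact hc0 (by simpa using hv)

lemma hrel_c (N M : ℕ) (h : MvPolynomial (Fin n ⊕ Fin n) F)
    (hd : DD F n (xx F n) ^ N ∣ DD F n (yy F n) ^ M * h) : DD F n (xx F n) ^ N ∣ h := by
  have := relprime_supp F n (DD F n (xx F n) ^ N) (DD F n (yy F n) ^ M)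
    (pow_ne_zero _ (DDx_ne F n)) (pow_ne_zero _ (DDy_ne F n))
    (pow_mem (DD_supp F n _ _ fun i hi => by
      rw [xx_lt F n i hi]; exact MvPolynomial.X_mem_supported.mpr ⟨_, rfl⟩) _)
    (pow_mem (DD_supp F n _ _ fun i hi => by
      rw [yy_lt F n i hi]; exact MvPolynomial.X_mem_supported.mpr ⟨_, rfl⟩) _)
  exact this.dvd_of_dvd_mul_left hd

/-- the substitution attached to a pair of matrices -/
noncomputable def act (M N : Matrix (Fin n) (Fin n) F) :
    MvPolynomial (Fin n ⊕ Fin n) F →ₐ[F] MvPolynomial (Fin n ⊕ Fin n) F :=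
  aeval (Sum.elim
    (fun j => ∑ i : Fin n, C (M i j) * X (Sum.inl i))
    (fun j => ∑ i : Fin n, C (N j i) * X (Sum.inr i)))

lemma act_inl (M N : Matrix (Fin n) (Fin n) F) (j : Fin n) :
    act F n M N (X (Sum.inl j)) = ∑ i : Fin n, C (M i j) * X (Sum.inl i) := by simp [act]

lemma act_inr (M N : Matrix (Fin n) (Fin n) F) (j : Fin n) :
    act F n M N (X (Sum.inr j)) = ∑ i : Fin n, C (N j i) * X (Sum.inr i) := by simp [act]

lemma act_inj (M N M' N' : Matrix (Fin n) (Fin n) F) (h : act F n M N = act F n M' N') :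
    M = M' ∧ N = N' := by
  constructor
  · ext i j
    have h1 := congrArg (MvPolynomial.eval (Sum.elim (Pi.single i 1) 0))
      (congrFun (congrArg DFunLike.coe h) (X (Sum.inl j)))
    rw [act_inl, act_inl] at h1
    simpa [Pi.single_apply] using h1
  · ext i j
    have h1 := congrArg (MvPolynomial.eval (Sum.elim 0 (Pi.single j 1)))
      (congrFun (congrArg DFunLike.coe h) (X (Sum.inr i)))
    rw [act_inr, act_inr] at h1
    simpa [Pi.single_apply] using h1

def UT (M : Matrix (Fin n) (Fin n) F) : Prop :=
  (∀ i j, j < i → M i j = 0) ∧ ∀ i, M i i ≠ 0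

lemma act_tri_x (M N : Matrix (Fin n) (Fin n) F) (hM : UT F n M) :
    IsTri F (xx F n) n (act F n M N) := by
  intro i hi
  refine ⟨M ⟨i, hi⟩ ⟨i, hi⟩, hM.2 _, fun j => if h : j < n then M ⟨j, h⟩ ⟨i, hi⟩ else 0, ?_⟩
  rw [xx_lt F n i hi, act_inl, ← xx_lt F n i hi]
  have : ∀ k : Fin n, C (M k ⟨i, hi⟩) * X (Sum.inl k) =
      (fun k : ℕ => (if h : k < n then M ⟨k, h⟩ ⟨i, hi⟩ else 0) • xx F n k) k.val := by
    intro k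
    simp [xx_val, MvPolynomial.smul_eq_C_mul]
  rw [Finset.sum_congr rfl fun k _ => this k,
    ← Finset.sum_range (fun k : ℕ => (if h : k < n then M ⟨k, h⟩ ⟨i, hi⟩ else 0) • xx F n k)]
  rw [add_comm, ← Finset.sum_subset (Finset.range_subset_range.mpr (show i + 1 ≤ n from hi)),
    Finset.sum_range_succ, dif_pos hi]
  intro k hk hk'
  simp only [Finset.mem_range] at hk hk'
  rw [dif_pos hk, hM.1 _ _ (by simp [Fin.lt_def]; omega), zero_smul]

lemma act_tri_y (M N : Matrix (Fin n) (Fin n) F) (hN : UT F n N) :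
    IsTri F (yy F n) n (act F n M N) := by
  intro i hi
  have hi' : n - 1 - i < n := by omega
  refine ⟨N ⟨n - 1 - i, hi'⟩ ⟨n - 1 - i, hi'⟩, hN.2 _,
    fun j => if h : j < n then N ⟨n - 1 - i, hi'⟩ ⟨n - 1 - j, by omega⟩ else 0, ?_⟩
  rw [yy_lt F n i hi, act_inr, ← yy_lt F n i hi]
  have : ∀ k : Fin n, C (N ⟨n - 1 - i, hi'⟩ k) * X (Sum.inr k) =
      (fun k : ℕ => (if h : k < n then N ⟨n - 1 - i, hi'⟩ ⟨k, h⟩ else 0) • yy F n (n - 1 - k))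
        k.val := by
    intro k
    simp [yy_val, MvPolynomial.smul_eq_C_mul]
  rw [Finset.sum_congr rfl fun k _ => this k,
    ← Finset.sum_range (fun k : ℕ =>
      (if h : k < n then N ⟨n - 1 - i, hi'⟩ ⟨k, h⟩ else 0) • yy F n (n - 1 - k)),
    ← Finset.sum_range_reflect]
  have h2 : ∀ k ∈ Finset.range n,
      (if h : n - 1 - k < n then N ⟨n - 1 - i, hi'⟩ ⟨n - 1 - k, h⟩ else 0) •
        yy F n (n - 1 - (n - 1 - k)) =
      (if h : k < n then N ⟨n - 1 - i, hi'⟩ ⟨n - 1 - k, by omega⟩ else 0) • yy F n k := by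
    intro k hk
    have hk := Finset.mem_range.mp hk
    rw [dif_pos hk, dif_pos (by omega), show n - 1 - (n - 1 - k) = k by omega]
  rw [Finset.sum_congr rfl h2]
  rw [add_comm, ← Finset.sum_subset (Finset.range_subset_range.mpr (show i + 1 ≤ n from hi)),
    Finset.sum_range_succ, dif_pos hi]
  intro k hk hk'
  simp only [Finset.mem_range] at hk hk'
  rw [dif_pos hk, hN.1 _ _ (by simp [Fin.lt_def]; omega), zero_smul]

lemma act_u (M N : Matrix (Fin n) (Fin n) F) (h : M * N = 1) (m : ℤ) :
    act F n M N (uu F n (xx F n) (yy F n) m) = uu F n (xx F n) (yy F n) m := by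
  rw [uu, Finset.sum_range]
  simp only [xx_val, yy_val, map_sum, map_mul, map_pow, act_inl, act_inr]
  have hC : ∀ (c : F) (k : ℕ), (C c : MvPolynomial (Fin n ⊕ Fin n) F) ^ (Fintype.card F ^ k) = C c := by
    intro c k
    rw [← map_pow, FiniteField.pow_card_pow]
  simp only [sum_pow_card F, mul_pow, hC]
  simp only [Finset.sum_mul_sum]
  rw [Finset.sum_comm]
  refine Finset.sum_congr rfl fun i _ => ?_
  rw [Finset.sum_comm]
  have : ∀ l : Fin n, ∑ k : Fin n, C (M i k) * (X (Sum.inl i) : MvPolynomial (Fin n ⊕ Fin n) F) ^ Fintype.card F ^ m.toNat *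
      (C (N k l) * X (Sum.inr l) ^ Fintype.card F ^ (-m).toNat) =
      C ((M * N) i l) * (X (Sum.inl i) ^ Fintype.card F ^ m.toNat *
        X (Sum.inr l) ^ Fintype.card F ^ (-m).toNat) := by
    intro l
    rw [Matrix.mul_apply, map_sum, Finset.sum_mul]
    refine Finset.sum_congr rfl fun k _ => ?_
    rw [map_mul]; ring
  rw [Finset.sum_congr rfl fun l _ => this l, h]
  simp [Matrix.one_apply]

abbrev PP : Type := (i : Fin n) → Fˣ × (Fin i.val → F)

open Classical in
noncomputable instance : Fintype (PP F n) := inferInstance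

lemma card_PP : Fintype.card (PP F n) = ∏ i, dX F n i := by
  classical
  rw [← Nat.card_eq_fintype_card, Nat.card_pi]
  refine Finset.prod_congr rfl fun i _ => ?_
  rw [Nat.card_prod, Nat.card_fun, Nat.card_units]
  simp [dX]

def mat (β : PP F n) : Matrix (Fin n) (Fin n) F := fun j i =>
  if h : j.val < i.val then (β i).2 ⟨j.val, h⟩ else if j = i then ((β i).1 : F) else 0

lemma mat_UT (β : PP F n) : UT F n (mat F n β) := by
  constructor
  · intro i j h
    have h1 : ¬ i.val < j.val := by simpa using h.le
    simp [mat, h1, h.ne']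
  · intro i
    simp [mat]

lemma mat_inj : Function.Injective (mat F n) := by
  intro β γ h
  funext i
  refine Prod.ext (Units.ext ?_) (funext fun j => ?_)
  · have := congrFun (congrFun h i) i
    simpa [mat] using this
  · have := congrFun (congrFun h ⟨j.val, by omega⟩) i
    simpa [mat] using this

lemma UT_det (M : Matrix (Fin n) (Fin n) F) (h : ∀ i j, j < i → M i j = 0) :
    M.det = ∏ i, M i i := Matrix.det_of_upperTriangular fun i j hij => h i j hij

lemma UT_of (σ : GL (Fin n) F) (h : isUpperTriangular F n σ) :
    UT F n (σ : Matrix (Fin n) (Fin n) F) := by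
  refine ⟨h, fun i hi => ?_⟩
  have h1 := UT_det F n _ h
  have h2 : ∏ i, (σ : Matrix (Fin n) (Fin n) F) i i = 0 :=
    Finset.prod_eq_zero (Finset.mem_univ i) hi
  rw [h2] at h1
  exact ((Matrix.isUnit_iff_isUnit_det _).mp σ.isUnit).ne_zero h1

lemma UT_inv (σ : GL (Fin n) F) (h : isUpperTriangular F n σ) :
    isUpperTriangular F n σ⁻¹ := by
  have h1 : Matrix.BlockTriangular (σ : Matrix (Fin n) (Fin n) F) id := fun i j hij => h i j hij
  have _ : Invertible (σ : Matrix (Fin n) (Fin n) F) := σ.invertible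
  have h2 := Matrix.blockTriangular_inv_of_blockTriangular h1
  intro i j hij
  rw [Matrix.coe_units_inv]
  exact h2 hij

lemma gact_eq (σ : GL (Fin n) F) : gact F n σ =
  act F n (σ : Matrix (Fin n) (Fin n) F) ((σ⁻¹ : GL (Fin n) F) : Matrix (Fin n) (Fin n) F) := rfl

noncomputable def gl (β : PP F n) : GL (Fin n) F :=
  Matrix.GeneralLinearGroup.mkOfDetNeZero (mat F n β) (by
    rw [UT_det F n _ (mat_UT F n β).1]
    exact Finset.prod_ne_zero_iff.mpr fun i _ => (mat_UT F n β).2 i)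

lemma gl_val (β : PP F n) : (gl F n β : Matrix (Fin n) (Fin n) F) = mat F n β := rfl

lemma gens_eq : ((Set.range fun i : Fin n => fX F n (i.val + 1) ^ (Fintype.card F - 1)) ∪
          (Set.range fun i : Fin n => fY F n (i.val + 1) ^ (Fintype.card F - 1)) ∪
          (uInv F n '' Set.Icc (1 - (n : ℤ)) ((n : ℤ) - 1))) =
    (((fun i => ff F (xx F n) i ^ (Fintype.card F - 1)) '' Set.Iio n ∪
      (fun i => ff F (yy F n) i ^ (Fintype.card F - 1)) '' Set.Iio n) ∪
      uu F n (xx F n) (yy F n) '' Set.Icc (1 - (n : ℤ)) ((n : ℤ) - 1)) := by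
  congr 1
  · congr 1
    · ext t; constructor
      · rintro ⟨i, rfl⟩
        exact ⟨i.val, i.2, by simp only [fX_eq F n i.val i.2]⟩
      · rintro ⟨i, hi, rfl⟩
        exact ⟨⟨i, hi⟩, by simp only [fX_eq F n i hi]⟩
    · ext t; constructor
      · rintro ⟨i, rfl⟩
        exact ⟨i.val, i.2, by simp only [fY_eq F n i.val i.2]⟩
      · rintro ⟨i, hi, rfl⟩
        exact ⟨⟨i, hi⟩, by simp only [fY_eq F n i hi]⟩
  · exact Set.image_congr fun m _ => uInv_eq F n m

lemma final (hn : 1 ≤ n) (p : MvPolynomial (Fin n ⊕ Fin n) F) :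
    (∀ σ : GL (Fin n) F, isUpperTriangular F n σ → gact F n σ p = p) ↔
      p ∈ Algebra.adjoin F
        ((Set.range fun i : Fin n => fX F n (i.val + 1) ^ (Fintype.card F - 1)) ∪
          (Set.range fun i : Fin n => fY F n (i.val + 1) ^ (Fintype.card F - 1)) ∪
          (uInv F n '' Set.Icc (1 - (n : ℤ)) ((n : ℤ) - 1))) := by
  rw [gens_eq]
  have hmul : ∀ σ : GL (Fin n) F, (σ : Matrix (Fin n) (Fin n) F) *
      ((σ⁻¹ : GL (Fin n) F) : Matrix (Fin n) (Fin n) F) = 1 := fun σ => Units.mul_inv σ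
  have hglT : ∀ β, isUpperTriangular F n (gl F n β) := fun β => (mat_UT F n β).1
  constructor
  · intro hp
    refine core_thm (F := F) (n := n) hn (xx F n) (yy F n) (htop_c F n) (DDx_ne F n) (DDy_ne F n)
      (hrel_c F n) (G := PP F n) (fun β => gact F n (gl F n β)) ?_ (card_PP F n) ?_ ?_ ?_
      (G' := PP F n × PP F n) (fun β => act F n (mat F n β.1) (mat F n β.2)) ?_ ?_ ?_ ?_ _ rfl p ?_
    · intro β γ h
      exact mat_inj F n (act_inj F n _ _ _ _ h).1
    · intro β
      exact act_tri_x F n _ _ (mat_UT F n β)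
    · intro β
      exact act_tri_y F n _ _ (UT_of F n _ (UT_inv F n _ (hglT β)))
    · intro β m
      exact act_u F n _ _ (hmul _) m
    · intro β γ h
      have h1 := act_inj F n _ _ _ _ h
      exact Prod.ext (mat_inj F n h1.1) (mat_inj F n h1.2)
    · rw [Fintype.card_prod, card_PP]
    · intro β
      exact act_tri_x F n _ _ (mat_UT F n _)
    · intro β
      exact act_tri_y F n _ _ (mat_UT F n _)
    · intro β
      exact hp _ (hglT β)
  · intro hp σ hσ
    have hle : Algebra.adjoin F (((fun i => ff F (xx F n) i ^ (Fintype.card F - 1)) '' Set.Iio n ∪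
      (fun i => ff F (yy F n) i ^ (Fintype.card F - 1)) '' Set.Iio n) ∪
      uu F n (xx F n) (yy F n) '' Set.Icc (1 - (n : ℤ)) ((n : ℤ) - 1)) ≤
        AlgHom.equalizer (gact F n σ) (AlgHom.id F _) := by
      apply Algebra.adjoin_le
      rintro _ ((⟨i, hi, rfl⟩ | ⟨i, hi, rfl⟩) | ⟨m, _, rfl⟩)
      · exact ff_tri F _ n _ (act_tri_x F n _ _ (UT_of F n _ hσ)) i hi
      · exact ff_tri F _ n _ (act_tri_y F n _ _ (UT_of F n _ (UT_inv F n _ hσ))) i hi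
      · exact act_u F n _ _ (hmul _) m
    exact hle hp
end concrete
/-- Theorem (main, part (b), generation): for `n ≥ 1` the invariant ring
`F_q[V ⊕ V*]^{B_n}` is the `F_q`-subalgebra generated by
`f̃_1,…,f̃_n, f̃_1^*,…,f̃_n^*, u_{1-n},…,u_{n-1}`. -/
theorem invariantRing_Bn_eq_adjoin (hn : 1 ≤ n) (p : MvPolynomial (Fin n ⊕ Fin n) F) :
    (∀ σ : GL (Fin n) F, isUpperTriangular F n σ → gact F n σ p = p) ↔
      p ∈ Algebra.adjoin F
        ((Set.range fun i : Fin n => fX F n (i.val + 1) ^ (Fintype.card F - 1)) ∪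
          (Set.range fun i : Fin n => fY F n (i.val + 1) ^ (Fintype.card F - 1)) ∪
          (uInv F n '' Set.Icc (1 - (n : ℤ)) ((n : ℤ) - 1))) := by
  exact final F n hn p
end

section
/- Let n ≥ 1 and let P := F_q[X_1,…,X_n,Y_1,…,Y_n,Z_{1−n},…,Z_{n−1}] be a polynomial ring in 4n−1 variables, with φ: P → F_q[x_1,…,x_n,y_1,…,y_n] the F_q-algebra homomorphism X_i ↦ f̃_i, Y_i ↦ f̃_i*, Z_j ↦ u_j (1−n ≤ j ≤ n−1). For 0 ≤ t < s ≤ n define C_{s,t} := Σ_{1 ≤ j_1 < ⋯ < j_{s−t} ≤ s} ∏_{l=1}^{s−t} X_{j_l}^{q^{t+l−j_l}} ∈ P and C*_{s,t} the same expression with X replaced by Y, with C_{s,s} = C*_{s,s} := 1. For 1 ≤ k ≤ n define R̃_k := ( Σ_{i=0}^{k−1} Σ_{j=0}^{n−k} (−1)^{i+j} C_{k−1,i} C*_{n−k,j} Z_{i−j}^{q^{min(i,j)}} )^{q−1} − X_k Y_{n+1−k}, and for 1 ≤ k ≤ n−1 define R̃_k^+ := Σ_{i=0}^{k−1} Σ_{j=0}^{n−k}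 (−1)^{i+j} ( C_{k−1,i}^q C*_{n−k,j} Z_{i−j+1}^{q^{min(i+1,j)}} − X_k C_{k−1,i} C*_{n−k,j} Z_{i−j}^{q^{min(i,j)}} ). Then the kernel of φ is the ideal of P generated by the 2n−1 polynomials R̃_1, R̃_1^+, R̃_2, R̃_2^+, …, R̃_{n−1}, R̃_{n−1}^+, R̃_n. -/
open MvPolynomial

variable (F : Type) [Field F] [Fintype F] (n : ℕ)

/-- The variable `X_k` (1-indexed) of the presentation ring `P` for `B_n`. -/
noncomputable def Xv (k : ℕ) : MvPolynomial (Fin n ⊕ Fin n ⊕ Fin (2 * n - 1)) F :=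
  if h : 1 ≤ k ∧ k ≤ n then X (Sum.inl ⟨k - 1, by omega⟩) else 0

/-- The variable `Y_k` (1-indexed). -/
noncomputable def Yv (k : ℕ) : MvPolynomial (Fin n ⊕ Fin n ⊕ Fin (2 * n - 1)) F :=
  if h : 1 ≤ k ∧ k ≤ n then X (Sum.inr (Sum.inl ⟨k - 1, by omega⟩)) else 0

/-- The variable `Z_j` for `j ∈ {1-n,…,n-1}`. -/
noncomputable def Zv (j : ℤ) : MvPolynomial (Fin n ⊕ Fin n ⊕ Fin (2 * n - 1)) F :=
  if h : 1 - (n : ℤ) ≤ j ∧ j ≤ (n : ℤ) - 1 then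
    X (Sum.inr (Sum.inr ⟨(j + n - 1).toNat, by omega⟩))
  else 0

/-- `C_{s,t}` in the presentation ring (in terms of the variables `X_i`, which map to `f̃_i`). -/
noncomputable def CXv (s t : ℕ) : MvPolynomial (Fin n ⊕ Fin n ⊕ Fin (2 * n - 1)) F :=
  ∑ g ∈ Finset.univ.filter (fun g : Fin (s - t) → Fin s => ∀ a b : Fin (s - t), a < b → g a < g b),
    ∏ l : Fin (s - t),
      Xv F n ((g l).val + 1) ^ ((Fintype.card F) ^ (t + l.val - (g l).val))

/-- `C_{s,t}^*` in the presentation ring. -/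
noncomputable def CYv (s t : ℕ) : MvPolynomial (Fin n ⊕ Fin n ⊕ Fin (2 * n - 1)) F :=
  ∑ g ∈ Finset.univ.filter (fun g : Fin (s - t) → Fin s => ∀ a b : Fin (s - t), a < b → g a < g b),
    ∏ l : Fin (s - t),
      Yv F n ((g l).val + 1) ^ ((Fintype.card F) ^ (t + l.val - (g l).val))

/-- The relation polynomial `R̃_k`. -/
noncomputable def RvTilde (k : ℕ) : MvPolynomial (Fin n ⊕ Fin n ⊕ Fin (2 * n - 1)) F :=
  (∑ i ∈ Finset.range k, ∑ j ∈ Finset.range (n - k + 1),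
    (-1 : MvPolynomial (Fin n ⊕ Fin n ⊕ Fin (2 * n - 1)) F) ^ (i + j) *
      CXv F n (k - 1) i * CYv F n (n - k) j *
      Zv F n ((i : ℤ) - (j : ℤ)) ^ (Fintype.card F ^ min i j)) ^ (Fintype.card F - 1)
  - Xv F n k * Yv F n (n + 1 - k)

/-- The relation polynomial `R̃_k^+`. -/
noncomputable def RvTildePlus (k : ℕ) : MvPolynomial (Fin n ⊕ Fin n ⊕ Fin (2 * n - 1)) F :=
  ∑ i ∈ Finset.range k, ∑ j ∈ Finset.range (n - k + 1),
    (-1 : MvPolynomial (Fin n ⊕ Fin n ⊕ Fin (2 * n - 1)) F) ^ (i + j) *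
      (CXv F n (k - 1) i ^ (Fintype.card F) * CYv F n (n - k) j *
          Zv F n ((i : ℤ) - (j : ℤ) + 1) ^ (Fintype.card F ^ min (i + 1) j)
        - Xv F n k * CXv F n (k - 1) i * CYv F n (n - k) j *
          Zv F n ((i : ℤ) - (j : ℤ)) ^ (Fintype.card F ^ min i j))


namespace KerBn

/-! ### Sums over strictly increasing sequences -/

/-- Sum over strictly increasing `g : Fin r → Fin s` of `∏ l, w l (g l)`. -/
noncomputable def Tsum {R : Type*} [CommRing R] (w : ℕ → ℕ → R) (r s : ℕ) : R :=
  ∑ g ∈ Finset.univ.filter (fun g : Fin r → Fin s => ∀ a b : Fin r, a < b → g a < g b),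
    ∏ l : Fin r, w l.val (g l).val

theorem Tsum_zero {R : Type*} [CommRing R] (w : ℕ → ℕ → R) (s : ℕ) : Tsum w 0 s = 1 := by
  unfold Tsum
  rw [Finset.filter_true_of_mem]
  · simp
  · intro g _ a
    exact a.elim0

theorem Tsum_succ_zero {R : Type*} [CommRing R] (w : ℕ → ℕ → R) (r : ℕ) : Tsum w (r + 1) 0 = 0 := by
  unfold Tsum
  apply Finset.sum_eq_zero
  intro g _
  exact (g 0).elim0

theorem Tsum_succ_succ {R : Type*} [CommRing R] (w : ℕ → ℕ → R) (r s : ℕ) :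
    Tsum w (r + 1) (s + 1) = Tsum w (r + 1) s + Tsum w r s * w r s := by
  classical
  unfold Tsum
  rw [← Finset.sum_filter_add_sum_filter_not _ (fun g : Fin (r + 1) → Fin (s + 1) =>
    g (Fin.last r) ≠ Fin.last s)]
  congr 1
  · symm
    refine Finset.sum_bij (fun g _ => fun l => (g l).castSucc) ?_ ?_ ?_ ?_
    · intro g hg
      simp only [Finset.mem_filter, Finset.mem_univ, true_and] at hg ⊢
      exact ⟨fun a b hab => hg a b hab, fun h => (Fin.castSucc_lt_last _).ne h⟩
    · intro g _ g' _ h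
      funext l
      exact Fin.castSucc_injective _ (congrFun h l)
    · intro g hg
      simp only [Finset.mem_filter, Finset.mem_univ, true_and] at hg
      have hlt : ∀ l, (g l).val < s := by
        intro l
        have h1 : (g (Fin.last r)).val < s := by
          have := (g (Fin.last r)).isLt
          have h2 : (g (Fin.last r)).val ≠ s := fun h => hg.2 (Fin.ext h)
          omega
        rcases eq_or_ne l (Fin.last r) with h | h
        · rw [h]; exact h1
        · have := hg.1 l (Fin.last r) (Fin.lt_last_iff_ne_last.mpr h)
          have : (g l).val < (g (Fin.last r)).val := this
          omega
      refine ⟨fun l => ⟨(g l).val, hlt l⟩, ?_, ?_⟩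
      · simp only [Finset.mem_filter, Finset.mem_univ, true_and]
        intro a b hab
        exact hg.1 a b hab
      · funext l
        rfl
    · intro g _
      rfl
  · rw [Finset.sum_mul]
    symm
    refine Finset.sum_bij (fun g _ => Fin.snoc (α := fun _ => Fin (s + 1))
      (fun l => (g l).castSucc) (Fin.last s)) ?_ ?_ ?_ ?_
    · intro g hg
      simp only [Finset.mem_filter, Finset.mem_univ, true_and] at hg ⊢
      refine ⟨?_, by simp⟩
      intro a b hab
      induction b using Fin.lastCases with
      | last =>
        induction a using Fin.lastCases with
        | last => exact absurd hab (lt_irrefl _)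
        | cast a => simp
      | cast b =>
        induction a using Fin.lastCases with
        | last => exact absurd hab (not_lt.mpr (Fin.le_last _))
        | cast a => simpa using hg a b (by simpa using hab)
    · intro g _ g' _ h
      funext l
      have := congrFun h l.castSucc
      simpa using this
    · intro g hg
      simp only [Finset.mem_filter, Finset.mem_univ, true_and, not_not] at hg
      have hlt : ∀ l : Fin r, (g l.castSucc).val < s := by
        intro l
        have h0 := hg.1 l.castSucc (Fin.last r) (Fin.castSucc_lt_last l)
        rw [hg.2] at h0
        exact h0
      refine ⟨fun l => ⟨(g l.castSucc).val, hlt l⟩, ?_, ?_⟩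
      · simp only [Finset.mem_filter, Finset.mem_univ, true_and]
        intro a b hab
        exact hg.1 a.castSucc b.castSucc (by simpa using hab)
      · funext l
        induction l using Fin.lastCases with
        | last => simp [hg.2]
        | cast l => simp
    · intro g _
      rw [Fin.prod_univ_castSucc]
      simp

theorem Tsum_eq_zero {R : Type*} [CommRing R] (w : ℕ → ℕ → R) (r s : ℕ) (h : s < r) :
    Tsum w r s = 0 := by
  induction s generalizing r with
  | zero =>
    obtain ⟨r, rfl⟩ : ∃ r', r = r' + 1 := ⟨r - 1, by omega⟩
    exact Tsum_succ_zero w r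
  | succ s ih =>
    obtain ⟨r, rfl⟩ : ∃ r', r = r' + 1 := ⟨r - 1, by omega⟩
    rw [Tsum_succ_succ, ih _ (by omega), ih _ (by omega)]
    ring

theorem Tsum_congr {R : Type*} [CommRing R] (w w' : ℕ → ℕ → R) (r s : ℕ)
    (h : ∀ l g, l < r → g + r ≤ s + l → w l g = w' l g) : Tsum w r s = Tsum w' r s := by
  induction s generalizing r with
  | zero =>
    cases r with
    | zero => rw [Tsum_zero, Tsum_zero]
    | succ r => rw [Tsum_succ_zero, Tsum_succ_zero]
  | succ s ih =>
    cases r with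
    | zero => rw [Tsum_zero, Tsum_zero]
    | succ r =>
      rw [Tsum_succ_succ, Tsum_succ_succ, ih (r + 1), ih r, h r s (by omega) (by omega)]
      · intro l g h1 h2
        exact h l g (by omega) (by omega)
      · intro l g h1 h2
        exact h l g (by omega) (by omega)

theorem map_Tsum {R S : Type*} [CommRing R] [CommRing S] (f : R →+* S) (w : ℕ → ℕ → R) (r s : ℕ) :
    f (Tsum w r s) = Tsum (fun l g => f (w l g)) r s := by
  unfold Tsum
  simp only [map_sum, map_prod]

/-- The abstract `C_{s,t}`. -/
noncomputable def cc {R : Type*} [CommRing R] (q : ℕ) (x : ℕ → R) (s t : ℕ) : R :=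
  Tsum (fun l g => x g ^ (q ^ (t + l - g))) (s - t) s

theorem map_cc {R S : Type*} [CommRing R] [CommRing S] (f : R →+* S) (q : ℕ) (x : ℕ → R) (s t : ℕ) :
    f (cc q x s t) = cc q (fun g => f (x g)) s t := by
  unfold cc
  rw [map_Tsum]
  simp only [map_pow]

theorem cc_self {R : Type*} [CommRing R] (q : ℕ) (x : ℕ → R) (s : ℕ) : cc q x s s = 1 := by
  unfold cc
  rw [Nat.sub_self, Tsum_zero]

theorem cc_succ_zero {R : Type*} [CommRing R] (q : ℕ) (x : ℕ → R) (s : ℕ) :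
    cc q x (s + 1) 0 = x s * cc q x s 0 := by
  unfold cc
  simp only [Nat.sub_zero]
  rw [Tsum_succ_succ, Tsum_eq_zero _ (s + 1) s (by omega)]
  simp [mul_comm]

theorem cc_succ_succ {R : Type*} [CommRing R] (q : ℕ) (fr : R →+* R) (hfr : ∀ z, fr z = z ^ q)
    (x : ℕ → R) (s t : ℕ) (h : t < s) :
    cc q x (s + 1) (t + 1) = cc q x s t ^ q + x s * cc q x s (t + 1) := by
  unfold cc
  rw [← hfr, map_Tsum]
  obtain ⟨r, rfl⟩ : ∃ r, s = t + 1 + r := ⟨s - (t + 1), by omega⟩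
  have e1 : t + 1 + r + 1 - (t + 1) = r + 1 := by omega
  have e2 : t + 1 + r - t = r + 1 := by omega
  have e3 : t + 1 + r - (t + 1) = r := by omega
  rw [e1, e2, e3, Tsum_succ_succ]
  congr 1
  · apply Tsum_congr
    intro l g h1 h2
    rw [hfr, ← pow_mul, ← pow_succ]
    congr 2
    omega
  · rw [Nat.sub_self]
    simp [mul_comm]

/-! ### Orbit polynomials -/

/-- The additive polynomial vanishing on the span of `x 0, …, x (k-1)`. -/
def L {R : Type*} [CommRing R] (q : ℕ) (x : ℕ → R) : ℕ → R → R
  | 0, z => z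
  | k + 1, z => (L q x k z) ^ q - (L q x k (x k)) ^ (q - 1) * L q x k z

section Lsec

variable (F : Type*) [Field F] [Fintype F] {R : Type*} [CommRing R] [Algebra F R]

theorem frob_add (a b : R) : (a + b) ^ Fintype.card F = a ^ Fintype.card F + b ^ Fintype.card F :=
  map_add (FiniteField.frobeniusAlgHom F R) a b

theorem L_add (x : ℕ → R) (k : ℕ) (a b : R) :
    L (Fintype.card F) x k (a + b) = L (Fintype.card F) x k a + L (Fintype.card F) x k b := by
  induction k with
  | zero => rfl
  | succ k ih =>
    simp only [L]
    rw [ih, frob_add F]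
    ring

theorem L_smul (x : ℕ → R) (k : ℕ) (c : F) (a : R) :
    L (Fintype.card F) x k (algebraMap F R c * a) =
      algebraMap F R c * L (Fintype.card F) x k a := by
  induction k with
  | zero => rfl
  | succ k ih =>
    simp only [L]
    rw [ih, mul_pow, ← map_pow, FiniteField.pow_card]
    ring

theorem L_zero (x : ℕ → R) (k : ℕ) : L (Fintype.card F) x k 0 = 0 := by
  simpa using L_smul F x k 0 0

theorem card_pos' : 0 < Fintype.card F := Fintype.card_pos

theorem L_eq_zero (F : Type*) [Field F] [Fintype F] {R : Type*} [CommRing R] (x : ℕ → R) (k m : ℕ) (h : m < k) : L (Fintype.card F) x k (x m) = 0 := by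
  induction k with
  | zero => omega
  | succ k ih =>
    simp only [L]
    rcases Nat.lt_succ_iff_lt_or_eq.mp h with h | rfl
    · rw [ih h, zero_pow (Fintype.card_pos).ne']
      ring
    · rw [← pow_succ, Nat.sub_add_cancel (card_pos' F)]
      ring

theorem L_sum (x : ℕ → R) (k : ℕ) (z : R) :
    L (Fintype.card F) x k z = ∑ i ∈ Finset.range (k + 1), (-1) ^ (k + i) *
      cc (Fintype.card F) (fun g => L (Fintype.card F) x g (x g) ^ (Fintype.card F - 1)) k i *
      z ^ (Fintype.card F ^ i) := by
  set q := Fintype.card F with hq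
  set y : ℕ → R := fun g => L q x g (x g) ^ (q - 1) with hy
  set fr : R →+* R := (FiniteField.frobeniusAlgHom F R : R →+* R) with hfr
  have hfr' : ∀ z, fr z = z ^ q := fun z => rfl
  induction k with
  | zero => simp [L, cc_self]
  | succ k ih =>
    have hL : L q x (k + 1) z = fr (L q x k z) - y k * L q x k z := rfl
    rw [hL, ih, map_sum, Finset.sum_range_succ' _ (k + 1)]
    have h1 : ∑ i ∈ Finset.range (k + 1), (-1) ^ (k + 1 + (i + 1)) * cc q y (k + 1) (i + 1) *
        z ^ q ^ (i + 1) = ∑ i ∈ Finset.range (k + 1), fr ((-1) ^ (k + i) * cc q y k i * z ^ q ^ i)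
        + ∑ i ∈ Finset.range k, (-1) ^ (k + i) * (y k * cc q y k (i + 1)) * z ^ q ^ (i + 1) := by
      rw [Finset.sum_range_succ, Finset.sum_range_succ _ k]
      have h2 : ∀ i, fr ((-1) ^ (k + i) * cc q y k i * z ^ q ^ i) =
          (-1) ^ (k + i) * cc q y k i ^ q * z ^ q ^ (i + 1) := by
        intro i
        rw [map_mul, map_mul, map_pow, map_neg, map_one, hfr', hfr', ← pow_mul, ← pow_succ]
      simp only [h2]
      rw [cc_self, cc_self]
      conv_rhs => rw [add_right_comm, ← Finset.sum_add_distrib]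
      congr 1
      · apply Finset.sum_congr rfl
        intro i hi
        rw [cc_succ_succ q fr hfr' y k i (Finset.mem_range.mp hi)]
        ring
      · rw [one_pow]
        ring
    have h3 : y k * ∑ i ∈ Finset.range (k + 1), (-1) ^ (k + i) * cc q y k i * z ^ q ^ i =
        -∑ i ∈ Finset.range k, (-1) ^ (k + i) * (y k * cc q y k (i + 1)) * z ^ q ^ (i + 1) +
        (-1) ^ k * (y k * cc q y k 0) * z ^ q ^ 0 := by
      rw [Finset.sum_range_succ' _ k, mul_add, Finset.mul_sum, ← Finset.sum_neg_distrib]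
      congr 1
      · apply Finset.sum_congr rfl
        intro i _
        ring
      · ring
    rw [h1, cc_succ_zero, h3]
    ring

theorem prod_add_smul_aux (K : Type*) [Field K] [Algebra R K] [IsFractionRing R K] (T s : R) :
    ∏ a : F, (T + algebraMap F R a * s) =
      T ^ Fintype.card F - s ^ (Fintype.card F - 1) * T := by
  classical
  have hq : 1 < Fintype.card F := Fintype.one_lt_card
  by_cases hs : s = 0
  · subst hs
    rw [zero_pow (by omega)]
    simp
  · have hinj : Function.Injective (algebraMap R K) := IsFractionRing.injective R K
    apply hinj
    have hs' : algebraMap R K s ≠ 0 := by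
      rwa [Ne, map_eq_zero_iff _ hinj]
    set t := algebraMap R K T
    set u := algebraMap R K s
    have key : ∀ z : K, ∏ a : F, (z - algebraMap R K (algebraMap F R a)) =
        z ^ Fintype.card F - z := by
      intro z
      have h1 : ∏ a : F, (Polynomial.X - Polynomial.C a) =
          (Polynomial.X ^ Fintype.card F - Polynomial.X : Polynomial F) := by
        have hm : (Polynomial.X ^ Fintype.card F - Polynomial.X : Polynomial F).Monic :=
          Polynomial.monic_X_pow_sub (by simpa using hq)
        have hr := FiniteField.roots_X_pow_card_sub_X F
        have := Polynomial.prod_multiset_X_sub_C_of_monic_of_roots_card_eq hm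
          (by rw [hr, FiniteField.X_pow_card_sub_X_natDegree_eq F hq]; rfl)
        rw [hr] at this
        rw [← this]
        rfl
      have h2 := congrArg (Polynomial.eval₂ ((algebraMap R K).comp (algebraMap F R)) z) h1
      simpa [Polynomial.eval₂_finsetProd] using h2
    have h3 := key (-(t / u))
    rw [map_prod]
    have h4 : ∀ a : F, algebraMap R K (T + algebraMap F R a * s) =
        (-u) * (-(t / u) - algebraMap R K (algebraMap F R a)) := by
      intro a
      rw [map_add, map_mul]
      change t + _ * u = _
      field_simp
      ring
    rw [Finset.prod_congr rfl (fun a _ => h4 a), Finset.prod_mul_distrib, h3, Finset.prod_const,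
      Finset.card_univ, mul_sub, ← mul_pow, map_sub, map_mul, map_pow, map_pow]
    change _ = t ^ _ - u ^ _ * t
    have h5 : -u * -(t / u) = t := by field_simp
    rw [h5]
    congr 1
    have h6 : (-u) ^ Fintype.card F = - u ^ Fintype.card F := by
      let _ : Algebra F K := ((algebraMap R K).comp (algebraMap F R)).toAlgebra
      have := map_neg (FiniteField.frobeniusAlgHom F K) u
      simpa using this
    rw [h6]
    obtain ⟨q, hq'⟩ : ∃ q, Fintype.card F = q + 1 := ⟨Fintype.card F - 1, by omega⟩
    rw [hq']
    simp only [Nat.add_sub_cancel]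
    field_simp
    ring

theorem prod_add_smul [IsDomain R] (T s : R) :
    ∏ a : F, (T + algebraMap F R a * s) =
      T ^ Fintype.card F - s ^ (Fintype.card F - 1) * T :=
  prod_add_smul_aux F (FractionRing R) T s

theorem L_prod [IsDomain R] (x : ℕ → R) (k : ℕ) (z : R) :
    L (Fintype.card F) x k z =
      ∏ α : Fin k → F, (z + ∑ j : Fin k, algebraMap F R (α j) * x j.val) := by
  classical
  induction k generalizing z with
  | zero => simp [L]
  | succ k ih =>
    rw [← (Fin.snocEquiv (fun _ : Fin (k + 1) => F)).prod_comp, Fintype.prod_prod_type]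
    simp only [L]
    rw [← prod_add_smul F]
    apply Finset.prod_congr rfl
    intro a _
    rw [← L_smul F, ← L_add F, ih]
    apply Finset.prod_congr rfl
    intro α _
    rw [Fin.sum_univ_castSucc]
    simp [Fin.snocEquiv]
    ring

end Lsec

end KerBn

namespace KerBn

/-! ### Leading monomials -/

theorem exists_monomialOrder {σ : Type} [Finite σ] (r : σ → ℕ) (hr : Function.Injective r) :
    ∃ m : MonomialOrder.{0, 0} σ, ∀ i j, r i < r j →
      m.toSyn (Finsupp.single j 1) < m.toSyn (Finsupp.single i 1) := by
  let _ : LinearOrder σ := LinearOrder.lift' r hr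
  refine ⟨MonomialOrder.lex, ?_⟩
  intro i j hij
  have hij' : i < j := hij
  rw [MonomialOrder.lex_lt_iff, Finsupp.Lex.single_lt_iff]
  exact hij'

theorem linearIndep_of_degree {σ ι K : Type*} [Field K] (m : MonomialOrder σ)
    (v : ι → MvPolynomial σ K) (hv : ∀ i, v i ≠ 0)
    (hinj : Function.Injective (fun i => m.degree (v i)))
    (t : Finset ι) (g : ι → K) (h : ∑ i ∈ t, g i • v i = 0) : ∀ i ∈ t, g i = 0 := by
  classical
  by_contra hcon
  push Not at hcon
  obtain ⟨i1, hi1, hgi1⟩ := hcon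
  obtain ⟨i0, hi0, hmax⟩ := Finset.exists_max_image (t.filter (fun i => g i ≠ 0))
    (fun i => m.toSyn (m.degree (v i))) ⟨i1, by simp [hi1, hgi1]⟩
  simp only [Finset.mem_filter] at hi0 hmax
  have h1 := congrArg (coeff (m.degree (v i0))) h
  rw [coeff_sum, Finset.sum_eq_single i0] at h1
  · rw [coeff_smul, coeff_zero, smul_eq_mul, mul_eq_zero] at h1
    rcases h1 with h1 | h1
    · exact hi0.2 h1
    · exact (m.coeff_degree_ne_zero_iff.mpr (hv i0)) h1
  · intro i hi hne
    rw [coeff_smul]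
    by_cases hg : g i = 0
    · rw [hg, zero_smul]
    · rw [m.coeff_eq_zero_of_lt, smul_zero]
      refine lt_of_le_of_ne (hmax i ⟨hi, hg⟩) ?_
      intro he
      exact hne (hinj (m.toSyn.injective he))
  · intro hn
    exact absurd hi0.1 hn

theorem indep_of_leading {σ K : Type*} [Fintype σ] [DecidableEq σ] [Field K] (m : MonomialOrder σ)
    (d : σ → ℕ) (g : σ → MvPolynomial σ K)
    (hmon : ∀ s, m.Monic (g s)) (hdeg : ∀ s, m.degree (g s) = Finsupp.single s (d s))
    (c : (∀ s, Fin (d s)) → MvPolynomial σ K)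
    (h : ∑ a, aeval g (c a) * ∏ s, X s ^ (a s).val = 0) : ∀ a, c a = 0 := by
  classical
  let v : (∀ s, Fin (d s)) × (σ →₀ ℕ) → MvPolynomial σ K :=
    fun p => (∏ s, g s ^ p.2 s) * ∏ s, X s ^ (p.1 s).val
  have hne1 : ∀ α : σ →₀ ℕ, (∏ s, g s ^ α s) ≠ 0 := fun α =>
    Finset.prod_ne_zero_iff.mpr fun s _ => pow_ne_zero _ (hmon s).ne_zero
  have hne2 : ∀ a : ∀ s, Fin (d s), (∏ s, (X s : MvPolynomial σ K) ^ (a s).val) ≠ 0 := fun a =>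
    Finset.prod_ne_zero_iff.mpr fun s _ => pow_ne_zero _ (X_ne_zero s)
  have hv : ∀ p, v p ≠ 0 := fun p => mul_ne_zero (hne1 _) (hne2 _)
  have hd : ∀ p s, m.degree (v p) s = p.2 s * d s + (p.1 s).val := by
    intro p s
    change m.degree ((∏ s, g s ^ p.2 s) * ∏ s, X s ^ (p.1 s).val) s = _
    rw [m.degree_mul (hne1 _) (hne2 _), m.degree_prod (fun s _ => pow_ne_zero _ (hmon s).ne_zero),
      m.degree_prod (fun s _ => pow_ne_zero _ (X_ne_zero s))]
    simp only [m.degree_pow, hdeg, m.degree_X, Finsupp.add_apply, Finsupp.finsetSum_apply,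
      Finsupp.smul_apply, Finsupp.single_apply]
    simp
  have hinj : Function.Injective (fun p => m.degree (v p)) := by
    intro p p' hpp
    have h1 : ∀ s, p.2 s * d s + (p.1 s).val = p'.2 s * d s + (p'.1 s).val := by
      intro s
      rw [← hd, ← hd]
      exact DFunLike.congr_fun hpp s
    have h2 : ∀ s, p.2 s = p'.2 s ∧ (p.1 s).val = (p'.1 s).val := by
      intro s
      have hpos : 0 < d s := lt_of_le_of_lt (Nat.zero_le _) (p.1 s).isLt
      have e1 := congrArg (· / d s) (h1 s)
      have e2 := congrArg (· % d s) (h1 s)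
      simp only [mul_comm _ (d s), Nat.mul_add_mod, Nat.mod_eq_of_lt (p.1 s).isLt,
        Nat.mod_eq_of_lt (p'.1 s).isLt, Nat.mul_add_div hpos, Nat.div_eq_of_lt (p.1 s).isLt,
        Nat.div_eq_of_lt (p'.1 s).isLt, add_zero] at e1 e2
      exact ⟨e1, e2⟩
    refine Prod.ext ?_ ?_
    · funext s
      exact Fin.ext (h2 s).2
    · ext s
      exact (h2 s).1
  let T : Finset (σ →₀ ℕ) := Finset.univ.biUnion (fun a => (c a).support)
  have hsum : ∑ p ∈ (Finset.univ : Finset (∀ s, Fin (d s))) ×ˢ T,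
      (coeff p.2 (c p.1)) • v p = 0 := by
    rw [← h, Finset.sum_product]
    apply Finset.sum_congr rfl
    intro a _
    rw [aeval_def, eval₂_eq', Finset.sum_mul]
    symm
    apply Finset.sum_subset_zero_on_sdiff
    · exact Finset.subset_biUnion_of_mem (fun a => (c a).support) (Finset.mem_univ a)
    · intro α hα
      simp only [Finset.mem_sdiff, mem_support_iff, not_not] at hα
      rw [hα.2, zero_smul]
    · intro α _
      simp only [v, Algebra.smul_def, mul_assoc]
  have hz := linearIndep_of_degree m v hv hinj _ (fun p => coeff p.2 (c p.1)) hsum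
  intro a
  ext α
  rw [coeff_zero]
  by_contra hc
  exact hc (hz (a, α) (Finset.mem_product.mpr ⟨Finset.mem_univ _,
    Finset.mem_biUnion.mpr ⟨a, Finset.mem_univ _, mem_support_iff.mpr hc⟩⟩))

/-- A sum of a variable and smaller variables is monic with the expected degree. -/
theorem monic_linear {σ K : Type*} [Field K] (m : MonomialOrder σ) {ι : Type*} (t : Finset ι)
    (i : σ) (f : ι → σ) (a : ι → K)
    (hlt : ∀ j ∈ t, m.toSyn (Finsupp.single (f j) 1) < m.toSyn (Finsupp.single i 1)) :
    m.Monic (X i + ∑ j ∈ t, C (a j) * X (f j) : MvPolynomial σ K) ∧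
    m.degree (X i + ∑ j ∈ t, C (a j) * X (f j) : MvPolynomial σ K) = Finsupp.single i 1 := by
  have hpos : m.toSyn 0 < m.toSyn (Finsupp.single i 1) := by
    rw [map_zero, m.toSyn_lt_iff_ne_zero, Ne, m.toSyn_eq_zero_iff]
    simp
  have h1 : m.toSyn (m.degree (∑ j ∈ t, C (a j) * X (f j) : MvPolynomial σ K)) <
      m.toSyn (m.degree (X i : MvPolynomial σ K)) := by
    rw [m.degree_X]
    refine lt_of_le_of_lt m.degree_sum_le ?_
    rw [Finset.sup_lt_iff (by rw [m.bot_eq_zero, ← map_zero m.toSyn]; exact hpos)]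
    intro j hj
    refine lt_of_le_of_lt ?_ (hlt j hj)
    rw [C_mul_X_eq_monomial]
    exact m.degree_monomial_le _
  exact ⟨m.monic_X.add_of_lt h1, by rw [m.degree_add_of_lt h1, m.degree_X]⟩

/-! ### The rank argument -/

theorem indep_of_rank {A R ι κ : Type*} [CommRing A] [IsDomain A] [CommRing R] [Fintype ι]
    [Fintype κ] (ψ : A →+* R) (hcard : Fintype.card ι = Fintype.card κ) (w : ι → R) (v : κ → R)
    (hw : ∀ c : ι → A, ∑ i, ψ (c i) * w i = 0 → c = 0)
    (hspan : ∀ i, ∃ c : κ → A, w i = ∑ j, ψ (c j) * v j) :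
    ∀ c : κ → A, ∑ j, ψ (c j) * v j = 0 → c = 0 := by
  classical
  let e : ι ≃ κ := Fintype.equivOfCardEq hcard
  choose M hM using hspan
  let N : Matrix κ κ A := fun i j => M (e.symm i) j
  have hw' : ∀ c : κ → A, ∑ i, ψ (c i) * w (e.symm i) = 0 → c = 0 := by
    intro c hc
    have := hw (fun i => c (e i)) (by rw [← hc, ← e.sum_comp]; simp)
    funext j
    simpa using congrFun this (e.symm j)
  have hmul : ∀ c : κ → A, ∑ i, ψ (c i) * w (e.symm i) = ∑ j, ψ ((Matrix.vecMul c N) j) * v j := by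
    intro c
    have h1 : ∀ i, ψ (c i) * w (e.symm i) = ∑ j, ψ (c i) * (ψ (N i j) * v j) := by
      intro i
      rw [hM (e.symm i), Finset.mul_sum]
    rw [Finset.sum_congr rfl (fun i _ => h1 i), Finset.sum_comm]
    apply Finset.sum_congr rfl
    intro j _
    simp only [Matrix.vecMul, dotProduct, map_sum, map_mul, Finset.sum_mul, mul_assoc]
  have hdet : N.det ≠ 0 := by
    intro h0
    obtain ⟨c, hc, hc0⟩ := Matrix.exists_vecMul_eq_zero_iff.mpr h0
    apply hc
    apply hw'
    rw [hmul, hc0]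
    simp
  intro c hc
  have h1 : Matrix.vecMul c N.adjugate = 0 := by
    apply hw'
    rw [hmul, Matrix.vecMul_vecMul, Matrix.adjugate_mul]
    have : ∀ j, ψ (Matrix.vecMul c (N.det • (1 : Matrix κ κ A)) j) * v j =
        ψ N.det * (ψ (c j) * v j) := by
      intro j
      rw [Matrix.vecMul_smul, Matrix.vecMul_one, Pi.smul_apply, smul_eq_mul, map_mul, mul_assoc]
    rw [Finset.sum_congr rfl (fun j _ => this j), ← Finset.mul_sum, hc, mul_zero]
  have h2 : N.det • c = 0 := by
    have := congrArg (fun z => Matrix.vecMul z N) h1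
    simpa [Matrix.vecMul_vecMul, Matrix.adjugate_mul, Matrix.vecMul_smul] using this
  exact (smul_eq_zero.mp h2).resolve_left hdet

theorem pow_mem_span {A R : Type*} [CommRing A] [Nontrivial A] [CommRing R] (ψ : A →+* R) (x : R)
    (d : ℕ) (hroot : ∃ p : Polynomial A, p.Monic ∧ p.natDegree = d ∧ p.eval₂ ψ x = 0)
    (k : ℕ) : ∃ c : Fin d → A, x ^ k = ∑ j, ψ (c j) * x ^ j.val := by
  obtain ⟨p, hp, hd, hx⟩ := hroot
  by_cases h1 : p = 1
  · subst h1
    rw [Polynomial.eval₂_one] at hx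
    have : Subsingleton R := subsingleton_of_zero_eq_one hx.symm
    exact ⟨fun _ => 0, Subsingleton.elim _ _⟩
  refine ⟨fun j => (Polynomial.X ^ k %ₘ p).coeff j, ?_⟩
  have h2 : (Polynomial.X ^ k %ₘ p).eval₂ ψ x = x ^ k := by
    have := congrArg (Polynomial.eval₂ ψ x) (Polynomial.modByMonic_add_div (Polynomial.X ^ k) p)
    simpa [Polynomial.eval₂_add, Polynomial.eval₂_mul, hx] using this
  rw [← h2, Polynomial.eval₂_eq_sum_range' ψ (n := d), Finset.sum_range]
  rw [← hd]
  exact Polynomial.natDegree_modByMonic_lt _ hp h1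

open Pointwise in
/-- The main independence statement. -/
theorem indep_u {A R I J T : Type*} [CommRing A] [IsDomain A] [CommRing R] [IsDomain R]
    [Fintype I] [Fintype J] [Fintype T] [DecidableEq I] [DecidableEq J] [DecidableEq T]
    (ψ : A →+* R)
    (x : I → R) (y : J → R) (u : T → R) (d : I → ℕ) (d' : J → ℕ) (D : T → ℕ)
    (hD : ∏ j, d' j = ∏ t, D t)
    (hroot : ∀ i, ∃ p : Polynomial A, p.Monic ∧ p.natDegree = d i ∧ p.eval₂ ψ (x i) = 0)
    (B : Subring R)
    (hB : ∀ b ∈ B, ∃ c : (∀ t, Fin (D t)) → A, b = ∑ e, ψ (c e) * ∏ t, u t ^ (e t).val)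
    (hpos : ∀ i, 0 < d i)
    (δ : R) (hδ : δ ≠ 0)
    (G : Subring R) (hG : G = Subring.closure ((B : Set R) ∪ Set.range x))
    (hδG : δ ∈ G) (hδy : ∀ j, δ * y j ∈ G)
    (hBA : ∀ a, ψ a ∈ B)
    (hxy : ∀ c : (∀ i, Fin (d i)) × (∀ j, Fin (d' j)) → A,
      ∑ p, ψ (c p) * ((∏ i, x i ^ (p.1 i).val) * ∏ j, y j ^ (p.2 j).val) = 0 → c = 0) :
    ∀ c : (∀ t, Fin (D t)) → A, ∑ e, ψ (c e) * ∏ t, u t ^ (e t).val = 0 → c = 0 := by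
  let _ : Algebra A R := ψ.toAlgebra
  have hsm : ∀ a (r : R), a • r = ψ a * r := fun a r => rfl
  let vx : (∀ i, Fin (d i)) → R := fun a => ∏ i, x i ^ (a i).val
  let vu : (∀ t, Fin (D t)) → R := fun e => ∏ t, u t ^ (e t).val
  -- span of the x-monomials
  have hX : ∀ g ∈ Algebra.adjoin A (Set.range x), g ∈ Submodule.span A (Set.range vx) := by
    intro g hg
    rw [Algebra.adjoin_range_eq_range_aeval] at hg
    obtain ⟨p, rfl⟩ := hg
    change aeval x p ∈ _
    rw [aeval_def, eval₂_eq']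
    refine Submodule.sum_mem _ fun α _ => ?_
    change (coeff α p) • (∏ i, x i ^ α i : R) ∈ _
    apply Submodule.smul_mem
    choose cf hcf using fun i => pow_mem_span ψ (x i) (d i) (hroot i) (α i)
    rw [Finset.prod_congr rfl (fun i _ => hcf i), Finset.prod_univ_sum]
    refine Submodule.sum_mem _ fun a _ => ?_
    rw [Finset.prod_mul_distrib, ← map_prod, ← hsm]
    exact Submodule.smul_mem _ _ (Submodule.subset_span ⟨a, rfl⟩)
  have hBs : ∀ g ∈ Algebra.adjoin A (B : Set R), g ∈ Submodule.span A (Set.range vu) := by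
    intro g hg
    have hgB : g ∈ B := by
      refine Algebra.adjoin_induction (fun z hz => hz) (fun a => hBA a)
        (fun _ _ _ _ h1 h2 => B.add_mem h1 h2) (fun _ _ _ _ h1 h2 => B.mul_mem h1 h2) hg
    obtain ⟨c, rfl⟩ := hB g hgB
    refine Submodule.sum_mem _ fun e _ => ?_
    rw [← hsm]
    exact Submodule.smul_mem _ _ (Submodule.subset_span ⟨e, rfl⟩)
  let v : (∀ i, Fin (d i)) × (∀ t, Fin (D t)) → R := fun p => vx p.1 * vu p.2
  have hGs : ∀ g ∈ G, ∃ c : (∀ i, Fin (d i)) × (∀ t, Fin (D t)) → A, g = ∑ p, ψ (c p) * v p := by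
    intro g hg
    have h1 : g ∈ Algebra.adjoin A (Set.range x ∪ (B : Set R)) := by
      rw [hG] at hg
      have hle : Subring.closure ((B : Set R) ∪ Set.range x) ≤
          (Algebra.adjoin A (Set.range x ∪ (B : Set R))).toSubring := by
        rw [Subring.closure_le, Set.union_comm]
        exact Algebra.subset_adjoin
      exact hle hg
    have h2 : g ∈ (Algebra.adjoin A (Set.range x ∪ (B : Set R))).toSubmodule := h1
    rw [Algebra.adjoin_union_coe_submodule] at h2
    have h3 : g ∈ Submodule.span A (Set.range vx) * Submodule.span A (Set.range vu) :=
      mul_le_mul' (show Subalgebra.toSubmodule _ ≤ _ from hX) (show Subalgebra.toSubmodule _ ≤ _ from hBs) h2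
    rw [Submodule.span_mul_span] at h3
    have h4 : Set.range vx * Set.range vu = Set.range v := by
      ext z
      simp [Set.mem_mul, v]
    rw [h4, Submodule.mem_span_range_iff_exists_fun] at h3
    obtain ⟨c, hc⟩ := h3
    exact ⟨c, hc.symm⟩
  let K := ∑ j, d' j
  let w : (∀ i, Fin (d i)) × (∀ j, Fin (d' j)) → R :=
    fun p => δ ^ K * ((∏ i, x i ^ (p.1 i).val) * ∏ j, y j ^ (p.2 j).val)
  have hvind := indep_of_rank ψ (by simp [hD]) w v ?_ ?_
  · intro c hc
    let c' : (∀ i, Fin (d i)) × (∀ t, Fin (D t)) → A :=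
      fun p => if p.1 = (fun i => ⟨0, hpos i⟩) then c p.2 else 0
    have h0 : c' = 0 := by
      apply hvind
      rw [Fintype.sum_prod_type, Finset.sum_eq_single (fun i => ⟨0, hpos i⟩)]
      · rw [← hc]
        apply Finset.sum_congr rfl
        intro e _
        simp [c', v, vx, vu]
      · intro a _ ha
        apply Finset.sum_eq_zero
        intro e _
        simp [c', ha]
      · simp
    funext e
    simpa [c'] using congrFun h0 (fun i => ⟨0, hpos i⟩, e)
  · intro c hc
    apply hxy
    have h1 : δ ^ K * ∑ p, ψ (c p) * ((∏ i, x i ^ (p.1 i).val) * ∏ j, y j ^ (p.2 j).val) = 0 := by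
      rw [← hc, Finset.mul_sum]
      apply Finset.sum_congr rfl
      intro p _
      simp only [w]
      ring
    exact (mul_eq_zero.mp h1).resolve_left (pow_ne_zero _ hδ)
  · intro p
    apply hGs
    have h1 : w p = (∏ i, x i ^ (p.1 i).val) *
        ∏ j, ((δ * y j) ^ (p.2 j).val * δ ^ (d' j - (p.2 j).val)) := by
      simp only [w, K]
      rw [← Finset.prod_pow_eq_pow_sum]
      have : ∀ j, (δ * y j) ^ (p.2 j).val * δ ^ (d' j - (p.2 j).val) =
          δ ^ d' j * y j ^ (p.2 j).val := by
        intro j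
        have hlt := (p.2 j).isLt
        have h2 : δ ^ d' j = δ ^ (p.2 j).val * δ ^ (d' j - (p.2 j).val) := by
          rw [← pow_add]
          congr 1
          omega
        rw [h2]
        ring
      rw [Finset.prod_congr rfl (fun j _ => this j), Finset.prod_mul_distrib]
      ring
    rw [h1]
    have hxG : ∀ i, x i ∈ G := by
      intro i
      rw [hG]
      exact Subring.subset_closure (Or.inr ⟨i, rfl⟩)
    exact G.mul_mem (G.prod_mem fun i _ => G.pow_mem (hxG i) _)
      (G.prod_mem fun j _ => G.mul_mem (G.pow_mem (hδy j) _) (G.pow_mem hδG _))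

end KerBn

namespace KerBn

/-! ### Spanning modulo the relations -/

/-- The embedding of the `X, Y` variables. -/
def emb {A B T : Type*} : A ⊕ B → A ⊕ B ⊕ T := Sum.map id Sum.inl

theorem spanning {K A B T : Type*} [Field K] [Fintype T] [DecidableEq T] [Fintype A] [Fintype B]
    (w : A ⊕ B ⊕ T → ℕ) (hw : ∀ a : A ⊕ B, 0 < w (emb a)) (D : T → ℕ)
    (I : Ideal (MvPolynomial (A ⊕ B ⊕ T) K))
    (hrel : ∀ t, ∃ r : MvPolynomial (A ⊕ B ⊕ T) K,
      r ∈ Ideal.span (X '' Set.range (emb : A ⊕ B → A ⊕ B ⊕ T)) ∧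
      IsWeightedHomogeneous w r (D t * w (Sum.inr (Sum.inr t))) ∧
      X (Sum.inr (Sum.inr t)) ^ D t - r ∈ I) (p : MvPolynomial (A ⊕ B ⊕ T) K) :
    ∃ c : (∀ t, Fin (D t)) → MvPolynomial (A ⊕ B) K,
      p - ∑ e, rename emb (c e) * ∏ t, X (Sum.inr (Sum.inr t)) ^ (e t).val ∈ I := by
  classical
  let N : MvPolynomial (A ⊕ B ⊕ T) K → Prop := fun p =>
    ∃ c : (∀ t, Fin (D t)) → MvPolynomial (A ⊕ B) K,
      p - ∑ e, rename emb (c e) * ∏ t, X (Sum.inr (Sum.inr t)) ^ (e t).val ∈ I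
  have hNI : ∀ p ∈ I, N p := by
    intro p hp
    exact ⟨fun _ => 0, by simpa using hp⟩
  have hNadd : ∀ p p', N p → N p' → N (p + p') := by
    rintro p p' ⟨c, hc⟩ ⟨c', hc'⟩
    refine ⟨fun e => c e + c' e, ?_⟩
    have := I.add_mem hc hc'
    convert this using 1
    simp only [map_add, add_mul, Finset.sum_add_distrib]
    ring
  have hNmul : ∀ a p, N p → N (rename emb a * p) := by
    rintro a p ⟨c, hc⟩
    refine ⟨fun e => a * c e, ?_⟩
    have := I.mul_mem_left (rename emb a) hc
    convert this using 1
    simp only [map_mul, mul_assoc, mul_sub, Finset.mul_sum]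
  have hNC : ∀ a p, N p → N (C a * p) := by
    intro a p hp
    have := hNmul (C a) p hp
    rwa [rename_C] at this
  have hNsum : ∀ (p : MvPolynomial (A ⊕ B ⊕ T) K),
      (∀ s ∈ p.support, N (monomial s 1)) → N p := by
    intro p hp
    rw [p.as_sum]
    refine Finset.sum_induction _ N hNadd (hNI _ I.zero_mem) ?_
    intro s hs
    have := hNC (coeff s p) _ (hp s hs)
    rwa [C_mul_monomial, mul_one] at this
  have hmain : ∀ (d : ℕ) (s : (A ⊕ B ⊕ T) →₀ ℕ), Finsupp.weight w s = d →
      N (monomial s 1) := by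
    intro d
    induction d using Nat.strong_induction_on with
    | _ d ih =>
      have hcase : ∀ s : (A ⊕ B ⊕ T) →₀ ℕ, Finsupp.weight w s = d →
          (∃ a : A ⊕ B, s (emb a) ≠ 0) → N (monomial s 1) := by
        rintro s hs ⟨a, ha⟩
        have hle : Finsupp.single (emb a) 1 ≤ s := by
          rw [Finsupp.single_le_iff]
          omega
        have hs' : s = Finsupp.single (emb a) 1 + (s - Finsupp.single (emb a) 1) :=
          (add_tsub_cancel_of_le hle).symm
        have h1 : Finsupp.weight w s = w (emb a) +
            Finsupp.weight w (s - Finsupp.single (emb a) 1) := by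
          conv_lhs => rw [hs']
          rw [map_add, Finsupp.weight_single, one_smul]
        have h2 := hNmul (X a) _ (ih _ (by have := hw a; omega)
          (s - Finsupp.single (emb a) 1) rfl)
        rw [rename_X, X, monomial_mul, mul_one, ← hs'] at h2
        exact h2
      intro s hs
      by_cases h1 : ∃ a : A ⊕ B, s (emb a) ≠ 0
      · exact hcase s hs h1
      push Not at h1
      by_cases h2 : ∃ t, D t ≤ s (Sum.inr (Sum.inr t))
      · obtain ⟨t, ht⟩ := h2
        obtain ⟨r, hrJ, hrw, hrI⟩ := hrel t
        have hle : Finsupp.single (Sum.inr (Sum.inr t)) (D t) ≤ s := by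
          rw [Finsupp.single_le_iff]
          exact ht
        set s' := s - Finsupp.single (Sum.inr (Sum.inr t)) (D t) with hs'def
        have hs' : s = Finsupp.single (Sum.inr (Sum.inr t)) (D t) + s' :=
          (add_tsub_cancel_of_le hle).symm
        have hm : monomial s (1 : K) = X (Sum.inr (Sum.inr t)) ^ D t * monomial s' 1 := by
          conv_lhs => rw [hs']
          rw [X_pow_eq_monomial, monomial_mul, mul_one]
        have hm2 : monomial s (1 : K) =
            (X (Sum.inr (Sum.inr t)) ^ D t - r) * monomial s' 1 + r * monomial s' 1 := by
          rw [hm]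
          ring
        rw [hm2]
        refine hNadd _ _ (hNI _ (I.mul_mem_right _ hrI)) (hNsum _ ?_)
        intro σ hσ
        have hJ : r * monomial s' 1 ∈
            Ideal.span (X '' Set.range (emb : A ⊕ B → A ⊕ B ⊕ T)) :=
          Ideal.mul_mem_right _ _ hrJ
        rw [mem_ideal_span_X_image] at hJ
        have hW : IsWeightedHomogeneous w (r * monomial s' 1) d := by
          have := hrw.mul (isWeightedHomogeneous_monomial w s' (1 : K) rfl)
          convert this using 1
          rw [← hs]
          conv_lhs => rw [hs']
          rw [map_add, Finsupp.weight_single, smul_eq_mul]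
        obtain ⟨i, ⟨a, rfl⟩, hi⟩ := hJ σ hσ
        exact hcase σ (hW (mem_support_iff.mp hσ)) ⟨a, hi⟩
      · push Not at h2
        refine ⟨fun e => if e = (fun t => ⟨_, h2 t⟩) then 1 else 0, ?_⟩
        rw [Finset.sum_eq_single (fun t => ⟨_, h2 t⟩)]
        · beta_reduce
          rw [if_pos rfl, map_one (rename emb), one_mul]
          have : monomial s (1 : K) = ∏ t : T, X (Sum.inr (Sum.inr t)) ^
              s (Sum.inr (Sum.inr t)) := by
            rw [monomial_eq, map_one, one_mul, Finsupp.prod_fintype _ _ (fun _ => pow_zero _)]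
            rw [Fintype.prod_sum_type, Fintype.prod_sum_type]
            have e1 : ∀ a : A, s (Sum.inl a) = 0 := fun a => h1 (Sum.inl a)
            have e2 : ∀ b : B, s (Sum.inr (Sum.inl b)) = 0 := fun b => h1 (Sum.inr b)
            simp [e1, e2]
          rw [this, sub_self]
          exact I.zero_mem
        · intro e _ he
          beta_reduce
          rw [if_neg he, map_zero, zero_mul]
        · simp
  exact hNsum p (fun s _ => hmain _ s rfl)

theorem emin_sum (n : ℕ) : ∑ m ∈ Finset.range (2 * n + 1), min ((m + 1) / 2) (n - m / 2) =
    ∑ k ∈ Finset.range (n + 1), k := by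
  induction n using Nat.strong_induction_on with
  | _ n ih =>
    match n with
    | 0 => rfl
    | 1 => rfl
    | n + 2 =>
      have h := ih n (by omega)
      rw [show 2 * (n + 2) + 1 = (2 * n + 1 + 1 + 1) + 1 + 1 by ring, Finset.sum_range_succ,
        Finset.sum_range_succ, Finset.sum_range_succ', Finset.sum_range_succ',
        Finset.sum_range_succ (fun k => k) (n + 2), Finset.sum_range_succ (fun k => k) (n + 1)]
      have e : ∑ k ∈ Finset.range (2 * n + 1), min ((k + 1 + 1 + 1) / 2) (n + 2 - (k + 1 + 1) / 2)
          = ∑ k ∈ Finset.range (2 * n + 1), (min ((k + 1) / 2) (n - k / 2) + 1) := by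
        apply Finset.sum_congr rfl
        intro k hk
        rw [Finset.mem_range] at hk
        omega
      rw [e, Finset.sum_add_distrib, h]
      simp only [Finset.sum_const, Finset.card_range, smul_eq_mul, mul_one]
      omega

/-- The exponents `D m`. -/
def Dex (q n m : ℕ) : ℕ :=
  (if m % 2 = 0 then q - 1 else 1) * q ^ min ((m + 1) / 2) (n - 1 - m / 2)

theorem prod_parity (q n : ℕ) :
    ∏ m ∈ Finset.range (2 * n + 1), (if m % 2 = 0 then q - 1 else 1) = (q - 1) ^ (n + 1) := by
  induction n with
  | zero => simp
  | succ n ih =>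
    rw [show 2 * (n + 1) + 1 = (2 * n + 1) + 1 + 1 by ring, Finset.prod_range_succ,
      Finset.prod_range_succ, ih, if_neg (by omega), if_pos (by omega)]
    ring

theorem prod_Dex (q n : ℕ) (hn : 1 ≤ n) :
    ∏ i : Fin n, (q - 1) * q ^ i.val = ∏ m : Fin (2 * n - 1), Dex q n m.val := by
  obtain ⟨n, rfl⟩ : ∃ k, n = k + 1 := ⟨n - 1, by omega⟩
  have e : 2 * (n + 1) - 1 = 2 * n + 1 := by omega
  rw [Fin.prod_univ_eq_prod_range (fun m => Dex q (n + 1) m), e,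
    Fin.prod_univ_eq_prod_range (fun i => (q - 1) * q ^ i)]
  unfold Dex
  rw [Finset.prod_mul_distrib, Finset.prod_mul_distrib, prod_parity, Finset.prod_const,
    Finset.card_range, Finset.prod_pow_eq_pow_sum, Finset.prod_pow_eq_pow_sum]
  simp only [Nat.add_sub_cancel]
  rw [emin_sum]

end KerBn

namespace KerBn

section Concrete

variable (F : Type) [Field F] [Fintype F] (n : ℕ)

/-- The sequence of `x`-variables. -/
noncomputable def xx (g : ℕ) : MvPolynomial (Fin n ⊕ Fin n) F :=
  if h : g < n then X (Sum.inl ⟨g, h⟩) else 0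

/-- The reversed sequence of `y`-variables. -/
noncomputable def yy (g : ℕ) : MvPolynomial (Fin n ⊕ Fin n) F :=
  if h : g < n then X (Sum.inr ⟨n - 1 - g, by omega⟩) else 0

theorem fX_eq (g : ℕ) : fX F n (g + 1) = L (Fintype.card F) (xx F n) g (xx F n g) := by
  by_cases h : g < n
  · unfold fX
    rw [dif_pos ⟨by omega, by omega⟩, L_prod F]
    refine Finset.prod_congr rfl fun α _ => ?_
    congr 1
    · simp [xx, h]
    · refine Finset.sum_congr rfl fun j _ => ?_
      have hj : j.val < n := by have := j.isLt; omega
      simp [xx, hj, algebraMap_eq]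
  · unfold fX xx
    rw [dif_neg (by omega), dif_neg h, L_zero F]

theorem fY_eq (g : ℕ) : fY F n (g + 1) = L (Fintype.card F) (yy F n) g (yy F n g) := by
  by_cases h : g < n
  · unfold fY
    rw [dif_pos ⟨by omega, by omega⟩, L_prod F]
    refine Finset.prod_congr rfl fun α _ => ?_
    congr 1
    · simp only [yy, h, dif_pos]
      congr 3
      omega
    · refine Finset.sum_congr rfl fun j _ => ?_
      have hj : j.val < n := by have := j.isLt; omega
      simp [yy, hj, algebraMap_eq]
  · unfold fY yy
    rw [dif_neg (by omega), dif_neg h, L_zero F]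

/-- The presentation map. -/
noncomputable def phi :
    MvPolynomial (Fin n ⊕ Fin n ⊕ Fin (2 * n - 1)) F →ₐ[F] MvPolynomial (Fin n ⊕ Fin n) F :=
  aeval (R := F)
        (Sum.elim (fun i : Fin n => fX F n (i.val + 1) ^ (Fintype.card F - 1))
          (Sum.elim (fun i : Fin n => fY F n (i.val + 1) ^ (Fintype.card F - 1))
            (fun m : Fin (2 * n - 1) => uInv F n ((m : ℤ) + 1 - n))))

theorem card_sub_one_ne : Fintype.card F - 1 ≠ 0 := by
  have := Fintype.one_lt_card (α := F)
  omega

theorem phi_Xv (g : ℕ) : phi F n (Xv F n (g + 1)) =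
    L (Fintype.card F) (xx F n) g (xx F n g) ^ (Fintype.card F - 1) := by
  rw [← fX_eq]
  by_cases h : g < n
  · unfold Xv
    rw [dif_pos ⟨by omega, by omega⟩]
    simp [phi]
  · unfold Xv fX
    rw [dif_neg (by omega), dif_neg (by omega), map_zero, zero_pow (card_sub_one_ne F)]

theorem phi_Yv (g : ℕ) : phi F n (Yv F n (g + 1)) =
    L (Fintype.card F) (yy F n) g (yy F n g) ^ (Fintype.card F - 1) := by
  rw [← fY_eq]
  by_cases h : g < n
  · unfold Yv
    rw [dif_pos ⟨by omega, by omega⟩]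
    simp [phi]
  · unfold Yv fY
    rw [dif_neg (by omega), dif_neg (by omega), map_zero, zero_pow (card_sub_one_ne F)]

theorem CXv_eq (s t : ℕ) : CXv F n s t = cc (Fintype.card F) (fun g => Xv F n (g + 1)) s t := rfl

theorem CYv_eq (s t : ℕ) : CYv F n s t = cc (Fintype.card F) (fun g => Yv F n (g + 1)) s t := rfl

theorem phi_CXv (s t : ℕ) : phi F n (CXv F n s t) = cc (Fintype.card F)
    (fun g => L (Fintype.card F) (xx F n) g (xx F n g) ^ (Fintype.card F - 1)) s t := by
  rw [CXv_eq]
  have := map_cc (phi F n).toRingHom (Fintype.card F) (fun g => Xv F n (g + 1)) s t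
  simp only [AlgHom.toRingHom_eq_coe, RingHom.coe_coe, phi_Xv] at this
  exact this

theorem phi_CYv (s t : ℕ) : phi F n (CYv F n s t) = cc (Fintype.card F)
    (fun g => L (Fintype.card F) (yy F n) g (yy F n g) ^ (Fintype.card F - 1)) s t := by
  rw [CYv_eq]
  have := map_cc (phi F n).toRingHom (Fintype.card F) (fun g => Yv F n (g + 1)) s t
  simp only [AlgHom.toRingHom_eq_coe, RingHom.coe_coe, phi_Yv] at this
  exact this

theorem sum_pow_card {R : Type*} [CommRing R] [Algebra F R] {ι : Type*} (s : Finset ι) (f : ι → R)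
    (a : ℕ) : (∑ i ∈ s, f i) ^ (Fintype.card F ^ a) = ∑ i ∈ s, f i ^ (Fintype.card F ^ a) := by
  induction a with
  | zero => simp
  | succ a ih =>
    simp only [pow_succ, pow_mul]
    rw [ih]
    have := map_sum (FiniteField.frobeniusAlgHom F R) (fun i => f i ^ (Fintype.card F ^ a)) s
    exact this

theorem phi_Zv (i j : ℕ) (h1 : i < n + j) (h2 : j < n + i) :
    phi F n (Zv F n ((i : ℤ) - (j : ℤ))) ^ (Fintype.card F ^ min i j) =
      ∑ m : Fin n, X (Sum.inl m) ^ (Fintype.card F ^ i) * X (Sum.inr m) ^ (Fintype.card F ^ j) := by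
  have e : phi F n (Zv F n ((i : ℤ) - (j : ℤ))) = uInv F n ((i : ℤ) - (j : ℤ)) := by
    unfold Zv
    rw [dif_pos ⟨by omega, by omega⟩]
    simp only [phi, aeval_X, Sum.elim_inr]
    congr 1
    omega
  rw [e]
  unfold uInv
  split_ifs with h
  · rw [sum_pow_card F]
    refine Finset.sum_congr rfl fun m _ => ?_
    rw [mul_pow, ← pow_mul, ← pow_add]
    congr 3 <;> omega
  · rw [sum_pow_card F]
    refine Finset.sum_congr rfl fun m _ => ?_
    rw [mul_pow, ← pow_mul, ← pow_add]
    congr 3 <;> omega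

theorem dbl {R ι : Type*} [CommRing R] [Fintype ι] (a b : ℕ) (A B : ℕ → R) (p r : ℕ → ι → R) :
    ∑ i ∈ Finset.range (a + 1), ∑ j ∈ Finset.range (b + 1), (-1) ^ (i + j) * (A i) * B j *
      ∑ m, p i m * r j m = (-1) ^ (a + b) *
      ∑ m, (∑ i ∈ Finset.range (a + 1), (-1) ^ (a + i) * A i * p i m) *
        (∑ j ∈ Finset.range (b + 1), (-1) ^ (b + j) * B j * r j m) := by
  simp_rw [Finset.sum_mul_sum]
  simp_rw [Finset.mul_sum]
  conv_rhs => rw [Finset.sum_comm]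
  refine Finset.sum_congr rfl fun i _ => ?_
  rw [Finset.sum_comm]
  refine Finset.sum_congr rfl fun m _ => ?_
  refine Finset.sum_congr rfl fun j _ => ?_
  have e : ((-1 : R) ^ (a + b)) * ((-1) ^ (a + i) * (-1) ^ (b + j)) = (-1) ^ (i + j) := by
    rw [← pow_add, ← pow_add, show a + b + (a + i + (b + j)) = 2 * (a + b) + (i + j) by ring,
      pow_add, pow_mul]
    simp
  rw [← e]
  ring

/-- The inner sum of `R̃_{k+1}`. -/
noncomputable def Ev (k : ℕ) : MvPolynomial (Fin n ⊕ Fin n ⊕ Fin (2 * n - 1)) F :=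
  ∑ i ∈ Finset.range (k + 1), ∑ j ∈ Finset.range (n - (k + 1) + 1),
    (-1 : MvPolynomial (Fin n ⊕ Fin n ⊕ Fin (2 * n - 1)) F) ^ (i + j) *
      CXv F n k i * CYv F n (n - (k + 1)) j *
      Zv F n ((i : ℤ) - (j : ℤ)) ^ (Fintype.card F ^ min i j)

/-- The first part of `R̃⁺_{k+1}`. -/
noncomputable def Evp (k : ℕ) : MvPolynomial (Fin n ⊕ Fin n ⊕ Fin (2 * n - 1)) F :=
  ∑ i ∈ Finset.range (k + 1), ∑ j ∈ Finset.range (n - (k + 1) + 1),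
    (-1 : MvPolynomial (Fin n ⊕ Fin n ⊕ Fin (2 * n - 1)) F) ^ (i + j) *
      CXv F n k i ^ Fintype.card F * CYv F n (n - (k + 1)) j *
      Zv F n ((i : ℤ) - (j : ℤ) + 1) ^ (Fintype.card F ^ min (i + 1) j)

theorem RvTilde_eq (k : ℕ) (h : k < n) : RvTilde F n (k + 1) = Ev F n k ^ (Fintype.card F - 1) -
    Xv F n (k + 1) * Yv F n (n - (k + 1) + 1) := by
  unfold RvTilde Ev
  rw [show n + 1 - (k + 1) = n - (k + 1) + 1 by omega]
  simp only [Nat.add_sub_cancel]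

theorem RvTildePlus_eq (k : ℕ) : RvTildePlus F n (k + 1) = Evp F n k -
    Xv F n (k + 1) * Ev F n k := by
  unfold RvTildePlus Ev Evp
  simp only [Nat.add_sub_cancel, Finset.mul_sum, ← Finset.sum_sub_distrib]
  refine Finset.sum_congr rfl fun i _ => Finset.sum_congr rfl fun j _ => ?_
  ring

theorem only_one (k : ℕ) (hk : k < n) (f : MvPolynomial (Fin n ⊕ Fin n) F → MvPolynomial (Fin n ⊕ Fin n) F)
    (hf : f 0 = 0) :
    ∑ m : Fin n, f (L (Fintype.card F) (xx F n) k (X (Sum.inl m))) *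
      L (Fintype.card F) (yy F n) (n - (k + 1)) (X (Sum.inr m)) =
    f (L (Fintype.card F) (xx F n) k (xx F n k)) *
      L (Fintype.card F) (yy F n) (n - (k + 1)) (yy F n (n - (k + 1))) := by
  rw [Finset.sum_eq_single ⟨k, hk⟩]
  · congr 2
    · simp [xx, hk]
    · unfold yy
      rw [dif_pos (by omega)]
      congr 3
      omega
  · intro m _ hm
    have hm' : m.val ≠ k := fun h => hm (Fin.ext h)
    rcases lt_or_gt_of_ne hm' with h | h
    · have e : (X (Sum.inl m) : MvPolynomial (Fin n ⊕ Fin n) F) = xx F n m.val := by simp [xx]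
      rw [e, L_eq_zero F _ _ _ h, hf, zero_mul]
    · have e : (X (Sum.inr m) : MvPolynomial (Fin n ⊕ Fin n) F) = yy F n (n - 1 - m.val) := by
        have := m.isLt
        unfold yy
        rw [dif_pos (by omega)]
        congr 2
        apply Fin.ext
        simp only
        omega
      rw [e, L_eq_zero F _ _ _ (by have := m.isLt; omega), mul_zero]
  · simp

theorem phi_Ev (k : ℕ) (hk : k < n) : phi F n (Ev F n k) = (-1) ^ (n - 1) *
    (L (Fintype.card F) (xx F n) k (xx F n k) *
      L (Fintype.card F) (yy F n) (n - (k + 1)) (yy F n (n - (k + 1)))) := by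
  have h := only_one F n k hk id rfl
  simp only [id] at h
  rw [← h]
  have e : ∀ z, _ := fun z => L_sum F (xx F n) k z
  have e' : ∀ z, _ := fun z => L_sum F (yy F n) (n - (k + 1)) z
  simp only [e, e']
  rw [show n - 1 = k + (n - (k + 1)) by omega]
  have e2 := dbl k (n - (k + 1)) (fun i => phi F n (CXv F n k i))
    (fun i => phi F n (CYv F n (n - (k + 1)) i))
    (fun i (m : Fin n) => X (Sum.inl m) ^ (Fintype.card F ^ i))
    (fun i (m : Fin n) => X (Sum.inr m) ^ (Fintype.card F ^ i))
  simp only [phi_CXv, phi_CYv] at e2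
  rw [← e2]
  unfold Ev
  simp only [map_sum, map_mul, map_pow, map_neg, map_one, phi_CXv, phi_CYv]
  refine Finset.sum_congr rfl fun i hi => Finset.sum_congr rfl fun j hj => ?_
  rw [Finset.mem_range] at hi hj
  rw [phi_Zv F n i j (by omega) (by omega)]

theorem phi_Evp (k : ℕ) (hk : k + 1 < n) : phi F n (Evp F n k) = (-1) ^ (n - 1) *
    (L (Fintype.card F) (xx F n) k (xx F n k) ^ Fintype.card F *
      L (Fintype.card F) (yy F n) (n - (k + 1)) (yy F n (n - (k + 1)))) := by
  have h := only_one F n k (by omega) (fun z => z ^ Fintype.card F) (zero_pow Fintype.card_ne_zero)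
  rw [← h]
  have hneg : ∀ a, (((-1 : MvPolynomial (Fin n ⊕ Fin n) F) ^ a) ^ Fintype.card F) = (-1) ^ a := by
    intro a
    have := map_pow (FiniteField.frobeniusAlgHom F (MvPolynomial (Fin n ⊕ Fin n) F)) (-1) a
    rw [map_neg, map_one] at this
    exact this
  have e : ∀ z, L (Fintype.card F) (xx F n) k z ^ Fintype.card F =
      ∑ i ∈ Finset.range (k + 1), (-1) ^ (k + i) *
      cc (Fintype.card F) (fun g => L (Fintype.card F) (xx F n) g (xx F n g) ^ (Fintype.card F - 1))
        k i ^ Fintype.card F * z ^ (Fintype.card F ^ (i + 1)) := by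
    intro z
    conv_lhs => rw [L_sum F (xx F n) k z]
    have := sum_pow_card F (Finset.range (k + 1)) (fun i => (-1) ^ (k + i) *
      cc (Fintype.card F) (fun g => L (Fintype.card F) (xx F n) g (xx F n g) ^ (Fintype.card F - 1))
        k i * z ^ (Fintype.card F ^ i)) 1
    rw [pow_one] at this
    rw [this]
    refine Finset.sum_congr rfl fun i _ => ?_
    rw [mul_pow, mul_pow, hneg, ← pow_mul z, ← pow_succ]
  have e' : ∀ z, _ := fun z => L_sum F (yy F n) (n - (k + 1)) z
  simp only [e, e']
  have e2 := dbl k (n - (k + 1)) (fun i => phi F n (CXv F n k i) ^ Fintype.card F)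
    (fun i => phi F n (CYv F n (n - (k + 1)) i))
    (fun i (m : Fin n) => X (Sum.inl m) ^ (Fintype.card F ^ (i + 1)))
    (fun i (m : Fin n) => X (Sum.inr m) ^ (Fintype.card F ^ i))
  simp only [phi_CXv, phi_CYv] at e2
  rw [show n - 1 = k + (n - (k + 1)) by omega]
  rw [← e2]
  unfold Evp
  simp only [map_sum, map_mul, map_pow, map_neg, map_one, phi_CXv, phi_CYv]
  refine Finset.sum_congr rfl fun i hi => Finset.sum_congr rfl fun j hj => ?_
  rw [Finset.mem_range] at hi hj
  have := phi_Zv F n (i + 1) j (by omega) (by omega)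
  push_cast at this
  rw [show (i : ℤ) - j + 1 = i + 1 - j by ring, this]

theorem phi_RvTilde (k : ℕ) (hk : k < n) : phi F n (RvTilde F n (k + 1)) = 0 := by
  rw [RvTilde_eq F n k hk, map_sub, map_mul, map_pow, phi_Ev F n k hk, phi_Xv, phi_Yv, mul_pow,
    mul_pow]
  have : (((-1 : MvPolynomial (Fin n ⊕ Fin n) F) ^ (n - 1)) ^ (Fintype.card F - 1)) = 1 := by
    have h := FiniteField.pow_card_sub_one_eq_one ((-1 : F) ^ (n - 1)) (by simp)
    have h2 := congrArg (C (σ := Fin n ⊕ Fin n)) h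
    simpa using h2
  rw [this]
  ring

theorem phi_RvTildePlus (k : ℕ) (hk : k + 1 < n) : phi F n (RvTildePlus F n (k + 1)) = 0 := by
  rw [RvTildePlus_eq, map_sub, map_mul, phi_Ev F n k (by omega), phi_Evp F n k hk, phi_Xv]
  have : L (Fintype.card F) (xx F n) k (xx F n k) ^ Fintype.card F =
      L (Fintype.card F) (xx F n) k (xx F n k) ^ (Fintype.card F - 1) *
      L (Fintype.card F) (xx F n) k (xx F n k) := by
    rw [← pow_succ, Nat.sub_add_cancel Fintype.card_pos]
  rw [this]
  ring

end Concrete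

end KerBn

namespace KerBn

section Relations

set_option linter.unusedSectionVars false

variable (F : Type) [Field F] [Fintype F] (n : ℕ)

/-- The weights. -/
def wt : Fin n ⊕ Fin n ⊕ Fin (2 * n - 1) → ℕ :=
  Sum.elim (fun i => (Fintype.card F - 1) * Fintype.card F ^ i.val)
    (Sum.elim (fun i => (Fintype.card F - 1) * Fintype.card F ^ i.val)
      (fun m => Fintype.card F ^ ((m : ℤ) + 1 - n).natAbs + 1))

theorem cc_hom {σ : Type*} (w : σ → ℕ) (x : ℕ → MvPolynomial σ F)
    (hx : ∀ g, IsWeightedHomogeneous w (x g) ((Fintype.card F - 1) * Fintype.card F ^ g))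
    (s t d : ℕ) (hts : t ≤ s) (hd : d + Fintype.card F ^ t = Fintype.card F ^ s) :
    IsWeightedHomogeneous w (cc (Fintype.card F) x s t) d := by
  have hq : 1 ≤ Fintype.card F := Fintype.card_pos
  set q := Fintype.card F with hqdef
  have hmul : ∀ s, (q - 1) * q ^ s + q ^ s = q ^ (s + 1) := by
    intro s
    rw [pow_succ, mul_comm _ q, ← Nat.succ_mul, Nat.succ_eq_add_one, Nat.sub_add_cancel hq]
  induction s generalizing t d with
  | zero =>
    obtain rfl : t = 0 := by omega
    obtain rfl : d = 0 := by omega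
    rw [cc_self]
    exact isWeightedHomogeneous_one _ _
  | succ s ih =>
    cases t with
    | zero =>
      rw [cc_succ_zero]
      have h1 : 1 ≤ q ^ s := Nat.one_le_pow _ _ hq
      have h2 := hmul s
      have := (hx s).mul (ih 0 (q ^ s - 1) (by omega) (by rw [pow_zero]; omega))
      convert this using 1
      rw [pow_zero] at hd
      omega
    | succ t =>
      rcases eq_or_lt_of_le (Nat.le_of_succ_le_succ hts) with rfl | h
      · obtain rfl : d = 0 := by omega
        rw [cc_self]
        exact isWeightedHomogeneous_one _ _
      · rw [cc_succ_succ q (FiniteField.frobeniusAlgHom F (MvPolynomial σ F)).toRingHom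
          (fun z => rfl) x s t h]
        have h1 : q ^ t ≤ q ^ s := Nat.pow_le_pow_right hq h.le
        have h2 : q ^ (t + 1) ≤ q ^ s := Nat.pow_le_pow_right hq h
        have h3 := hmul s
        have a1 := (ih t (q ^ s - q ^ t) h.le (by omega)).pow q
        have a2 := (hx s).mul (ih (t + 1) (q ^ s - q ^ (t + 1)) h (by omega))
        have e1 : q • (q ^ s - q ^ t) = d := by
          rw [smul_eq_mul, Nat.mul_sub, ← pow_succ', ← pow_succ']
          omega
        have e2 : (q - 1) * q ^ s + (q ^ s - q ^ (t + 1)) = d := by omega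
        rw [e1] at a1
        rw [e2] at a2
        exact a1.add a2

theorem Xv_hom (g : ℕ) : IsWeightedHomogeneous (wt F n) (Xv F n (g + 1))
    ((Fintype.card F - 1) * Fintype.card F ^ g) := by
  unfold Xv
  split_ifs with h
  · exact isWeightedHomogeneous_X F (wt F n) _
  · exact isWeightedHomogeneous_zero _ _ _

theorem Yv_hom (g : ℕ) : IsWeightedHomogeneous (wt F n) (Yv F n (g + 1))
    ((Fintype.card F - 1) * Fintype.card F ^ g) := by
  unfold Yv
  split_ifs with h
  · exact isWeightedHomogeneous_X F (wt F n) _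
  · exact isWeightedHomogeneous_zero _ _ _

theorem min_pow (q i j : ℕ) : q ^ min i j * (q ^ ((i : ℤ) - j).natAbs + 1) = q ^ i + q ^ j := by
  rcases le_total i j with h | h
  · rw [min_eq_left h, mul_add, ← pow_add, mul_one, add_comm]
    congr 2
    omega
  · rw [min_eq_right h, mul_add, ← pow_add, mul_one]
    congr 2
    omega

theorem Zv_hom (i j : ℕ) : IsWeightedHomogeneous (wt F n)
    (Zv F n ((i : ℤ) - j) ^ (Fintype.card F ^ min i j))
    (Fintype.card F ^ i + Fintype.card F ^ j) := by
  unfold Zv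
  split_ifs with h
  · have := (isWeightedHomogeneous_X F (wt F n)
      (Sum.inr (Sum.inr ⟨((i : ℤ) - j + n - 1).toNat, by omega⟩))).pow (Fintype.card F ^ min i j)
    convert this using 1
    rw [← min_pow, smul_eq_mul]
    simp only [wt, Sum.elim_inr]
    congr 3
    omega
  · rw [zero_pow (pow_ne_zero _ Fintype.card_ne_zero)]
    exact isWeightedHomogeneous_zero _ _ _

theorem sum_hom {σ ι : Type*} (w : σ → ℕ) (s : Finset ι) (f : ι → MvPolynomial σ F) (d : ℕ)
    (h : ∀ i ∈ s, IsWeightedHomogeneous w (f i) d) : IsWeightedHomogeneous w (∑ i ∈ s, f i) d :=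
  (weightedHomogeneousSubmodule F w d).sum_mem h

theorem neg_one_hom {σ : Type*} (w : σ → ℕ) (a : ℕ) :
    IsWeightedHomogeneous w ((-1 : MvPolynomial σ F) ^ a) 0 := by
  have := isWeightedHomogeneous_C w ((-1 : F) ^ a)
  simpa using this

theorem sub_hom {σ : Type*} (w : σ → ℕ) (a b : MvPolynomial σ F) (d : ℕ)
    (ha : IsWeightedHomogeneous w a d) (hb : IsWeightedHomogeneous w b d) :
    IsWeightedHomogeneous w (a - b) d :=
  (weightedHomogeneousSubmodule F w d).sub_mem ha hb

theorem Ev_hom (k : ℕ) : IsWeightedHomogeneous (wt F n) (Ev F n k)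
    (Fintype.card F ^ k + Fintype.card F ^ (n - (k + 1))) := by
  have hq : 1 ≤ Fintype.card F := Fintype.card_pos
  unfold Ev
  refine sum_hom F _ _ _ _ fun i hi => sum_hom F _ _ _ _ fun j hj => ?_
  rw [Finset.mem_range] at hi hj
  have h1 : Fintype.card F ^ i ≤ Fintype.card F ^ k := Nat.pow_le_pow_right hq (by omega)
  have h2 : Fintype.card F ^ j ≤ Fintype.card F ^ (n - (k + 1)) :=
    Nat.pow_le_pow_right hq (by omega)
  have := (((neg_one_hom F (wt F n) (i + j)).mul (cc_hom F (wt F n) _ (Xv_hom F n) k i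
    (Fintype.card F ^ k - Fintype.card F ^ i) (by omega) (by omega))).mul
    (cc_hom F (wt F n) _ (Yv_hom F n) (n - (k + 1)) j
    (Fintype.card F ^ (n - (k + 1)) - Fintype.card F ^ j) (by omega) (by omega))).mul
    (Zv_hom F n i j)
  rw [CXv_eq, CYv_eq]
  convert this using 1
  omega

theorem Evp_hom (k : ℕ) : IsWeightedHomogeneous (wt F n) (Evp F n k)
    (Fintype.card F ^ (k + 1) + Fintype.card F ^ (n - (k + 1))) := by
  have hq : 1 ≤ Fintype.card F := Fintype.card_pos
  unfold Evp
  refine sum_hom F _ _ _ _ fun i hi => sum_hom F _ _ _ _ fun j hj => ?_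
  rw [Finset.mem_range] at hi hj
  have h1 : Fintype.card F ^ i ≤ Fintype.card F ^ k := Nat.pow_le_pow_right hq (by omega)
  have h1' : Fintype.card F ^ (i + 1) ≤ Fintype.card F ^ (k + 1) :=
    Nat.pow_le_pow_right hq (by omega)
  have h2 : Fintype.card F ^ j ≤ Fintype.card F ^ (n - (k + 1)) :=
    Nat.pow_le_pow_right hq (by omega)
  have hz := Zv_hom F n (i + 1) j
  rw [show (((i + 1 : ℕ) : ℤ) - j) = (i : ℤ) - j + 1 by push_cast; ring] at hz
  have := (((neg_one_hom F (wt F n) (i + j)).mul ((cc_hom F (wt F n) _ (Xv_hom F n) k i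
    (Fintype.card F ^ k - Fintype.card F ^ i) (by omega) (by omega)).pow (Fintype.card F))).mul
    (cc_hom F (wt F n) _ (Yv_hom F n) (n - (k + 1)) j
    (Fintype.card F ^ (n - (k + 1)) - Fintype.card F ^ j) (by omega) (by omega))).mul hz
  rw [CXv_eq, CYv_eq]
  convert this using 1
  have e : Fintype.card F • (Fintype.card F ^ k - Fintype.card F ^ i) =
      Fintype.card F ^ (k + 1) - Fintype.card F ^ (i + 1) := by
    rw [smul_eq_mul, Nat.mul_sub, ← pow_succ', ← pow_succ']
  rw [e]
  omega

theorem card_pow_succ (k : ℕ) : (Fintype.card F - 1) * Fintype.card F ^ k + Fintype.card F ^ k =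
    Fintype.card F ^ (k + 1) := by
  have hq : 1 ≤ Fintype.card F := Fintype.card_pos
  rw [pow_succ, mul_comm _ (Fintype.card F), ← Nat.succ_mul, Nat.succ_eq_add_one,
    Nat.sub_add_cancel hq]

theorem RvTilde_hom (k : ℕ) (hk : k < n) : IsWeightedHomogeneous (wt F n) (RvTilde F n (k + 1))
    ((Fintype.card F - 1) * (Fintype.card F ^ k + Fintype.card F ^ (n - (k + 1)))) := by
  rw [RvTilde_eq F n k hk]
  apply sub_hom
  · exact (Ev_hom F n k).pow _
  · rw [mul_add]
    exact (Xv_hom F n k).mul (Yv_hom F n _)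

theorem RvTildePlus_hom (k : ℕ) : IsWeightedHomogeneous (wt F n)
    (RvTildePlus F n (k + 1))
    (Fintype.card F ^ (k + 1) + Fintype.card F ^ (n - (k + 1))) := by
  rw [RvTildePlus_eq F n k]
  apply sub_hom
  · exact Evp_hom F n k
  · have := (Xv_hom F n k).mul (Ev_hom F n k)
    rwa [← add_assoc, card_pow_succ] at this

/-- The ideal of the `X`, `Y` variables. -/
noncomputable def JJ : Ideal (MvPolynomial (Fin n ⊕ Fin n ⊕ Fin (2 * n - 1)) F) :=
  Ideal.span (X '' Set.range (emb : Fin n ⊕ Fin n → Fin n ⊕ Fin n ⊕ Fin (2 * n - 1)))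

theorem Xv_mem (g : ℕ) : Xv F n g ∈ JJ F n := by
  unfold Xv
  split_ifs with h
  · exact Ideal.subset_span ⟨_, ⟨Sum.inl _, rfl⟩, rfl⟩
  · exact Ideal.zero_mem _

theorem Yv_mem (g : ℕ) : Yv F n g ∈ JJ F n := by
  unfold Yv
  split_ifs with h
  · exact Ideal.subset_span ⟨_, ⟨Sum.inr _, rfl⟩, rfl⟩
  · exact Ideal.zero_mem _

theorem cc_mem {R : Type*} [CommRing R] (J : Ideal R) (q : ℕ) (hq : 0 < q) (x : ℕ → R)
    (hx : ∀ g, x g ∈ J) (s t : ℕ) (h : t < s) : cc q x s t ∈ J := by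
  unfold cc Tsum
  refine J.sum_mem fun g _ => ?_
  refine J.mem_of_dvd (Finset.dvd_prod_of_mem _ (Finset.mem_univ ⟨0, by omega⟩)) ?_
  exact J.pow_mem_of_mem (hx _) _ (pow_pos hq _)

theorem mk_CXv (s t : ℕ) (h : t < s) : Ideal.Quotient.mk (JJ F n) (CXv F n s t) = 0 :=
  Ideal.Quotient.eq_zero_iff_mem.mpr
    (cc_mem _ _ Fintype.card_pos _ (fun _ => Xv_mem F n _) s t h)

theorem mk_CYv (s t : ℕ) (h : t < s) : Ideal.Quotient.mk (JJ F n) (CYv F n s t) = 0 :=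
  Ideal.Quotient.eq_zero_iff_mem.mpr
    (cc_mem _ _ Fintype.card_pos _ (fun _ => Yv_mem F n _) s t h)

theorem mk_Ev (k : ℕ) : Ideal.Quotient.mk (JJ F n) (Ev F n k) = (-1) ^ (k + (n - (k + 1))) *
    Ideal.Quotient.mk (JJ F n) (Zv F n ((k : ℤ) - ((n - (k + 1) : ℕ) : ℤ))) ^
      (Fintype.card F ^ min k (n - (k + 1))) := by
  unfold Ev
  simp only [map_sum, map_mul, map_pow, map_neg, map_one]
  rw [Finset.sum_eq_single k, Finset.sum_eq_single (n - (k + 1))]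
  · rw [CXv_eq, CYv_eq, cc_self, cc_self, map_one]
    ring
  · intro j hj hne
    rw [Finset.mem_range] at hj
    rw [mk_CYv F n _ _ (by omega)]
    ring
  · simp
  · intro i hi hne
    rw [Finset.mem_range] at hi
    rw [mk_CXv F n _ _ (by omega)]
    simp
  · simp

theorem mk_Evp (k : ℕ) : Ideal.Quotient.mk (JJ F n) (Evp F n k) = (-1) ^ (k + (n - (k + 1))) *
    Ideal.Quotient.mk (JJ F n) (Zv F n ((k : ℤ) - ((n - (k + 1) : ℕ) : ℤ) + 1)) ^
      (Fintype.card F ^ min (k + 1) (n - (k + 1))) := by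
  unfold Evp
  simp only [map_sum, map_mul, map_pow, map_neg, map_one]
  rw [Finset.sum_eq_single k, Finset.sum_eq_single (n - (k + 1))]
  · rw [CXv_eq, CYv_eq, cc_self, cc_self, map_one, one_pow]
    ring
  · intro j hj hne
    rw [Finset.mem_range] at hj
    rw [mk_CYv F n _ _ (by omega)]
    ring
  · simp
  · intro i hi hne
    rw [Finset.mem_range] at hi
    rw [mk_CXv F n _ _ (by omega), zero_pow Fintype.card_ne_zero]
    simp
  · simp

theorem neg_one_pow_card {R : Type*} [CommRing R] [Algebra F R] (a : ℕ) :
    (((-1 : R) ^ a) ^ (Fintype.card F - 1)) = 1 := by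
  have h := FiniteField.pow_card_sub_one_eq_one ((-1 : F) ^ a) (by simp)
  have h2 := congrArg (algebraMap F R) h
  simpa using h2

theorem neg_one_sq_pow {R : Type*} [CommRing R] (a : ℕ) : (-1 : R) ^ a * (-1) ^ a = 1 := by
  rw [← mul_pow, neg_one_mul, neg_neg, one_pow]

/-- The ideal of relations. -/
noncomputable def II : Ideal (MvPolynomial (Fin n ⊕ Fin n ⊕ Fin (2 * n - 1)) F) :=
  Ideal.span ({p | ∃ k, (1 ≤ k ∧ k ≤ n) ∧ p = RvTilde F n k} ∪
          {p | ∃ k, (1 ≤ k ∧ k ≤ n - 1) ∧ p = RvTildePlus F n k})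

theorem Zv_index (m : Fin (2 * n - 1)) (j : ℤ) (hj : j + n - 1 = m.val) :
    (X (Sum.inr (Sum.inr m)) : MvPolynomial (Fin n ⊕ Fin n ⊕ Fin (2 * n - 1)) F) = Zv F n j := by
  unfold Zv
  have := m.isLt
  rw [dif_pos ⟨by omega, by omega⟩]
  congr 3
  apply Fin.ext
  simp only
  omega

theorem hrel (t : Fin (2 * n - 1)) : ∃ r : MvPolynomial (Fin n ⊕ Fin n ⊕ Fin (2 * n - 1)) F,
      r ∈ Ideal.span
        (X '' Set.range (emb : Fin n ⊕ Fin n → Fin n ⊕ Fin n ⊕ Fin (2 * n - 1))) ∧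
      IsWeightedHomogeneous (wt F n) r
        (Dex (Fintype.card F) n t.val * wt F n (Sum.inr (Sum.inr t))) ∧
      X (Sum.inr (Sum.inr t)) ^ Dex (Fintype.card F) n t.val - r ∈ II F n := by
  have ht := t.isLt
  rcases Nat.even_or_odd' t.val with ⟨k, hk | hk⟩
  · have hD : Dex (Fintype.card F) n t.val =
        (Fintype.card F - 1) * Fintype.card F ^ min k (n - (k + 1)) := by
      unfold Dex
      rw [if_pos (by omega), show (t.val + 1) / 2 = k by omega,
        show n - 1 - t.val / 2 = n - (k + 1) by omega]
    have hZ : (X (Sum.inr (Sum.inr t)) : MvPolynomial (Fin n ⊕ Fin n ⊕ Fin (2 * n - 1)) F) =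
        Zv F n ((k : ℤ) - ((n - (k + 1) : ℕ) : ℤ)) := Zv_index F n t _ (by omega)
    have hw : Dex (Fintype.card F) n t.val * wt F n (Sum.inr (Sum.inr t)) =
        (Fintype.card F - 1) * (Fintype.card F ^ k + Fintype.card F ^ (n - (k + 1))) := by
      rw [hD, ← min_pow, mul_assoc]
      simp only [wt, Sum.elim_inr]
      congr 4
      omega
    refine ⟨X (Sum.inr (Sum.inr t)) ^ Dex (Fintype.card F) n t.val - RvTilde F n (k + 1),
      ?_, ?_, ?_⟩
    · change _ ∈ JJ F n
      rw [← Ideal.Quotient.eq_zero_iff_mem, hZ, hD, RvTilde_eq F n k (by omega)]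
      simp only [map_sub, map_pow, map_mul]
      rw [mk_Ev, Ideal.Quotient.eq_zero_iff_mem.mpr (Xv_mem F n (k + 1)), mul_pow,
        neg_one_pow_card F, mul_comm (Fintype.card F - 1), pow_mul]
      ring
    · apply sub_hom
      · exact (isWeightedHomogeneous_X F (wt F n) _).pow _
      · rw [hw]
        exact RvTilde_hom F n k (by omega)
    · rw [sub_sub_cancel]
      exact Ideal.subset_span (Or.inl ⟨k + 1, ⟨by omega, by omega⟩, rfl⟩)
  · have hD : Dex (Fintype.card F) n t.val =
        Fintype.card F ^ min (k + 1) (n - (k + 1)) := by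
      unfold Dex
      rw [if_neg (by omega), show (t.val + 1) / 2 = k + 1 by omega,
        show n - 1 - t.val / 2 = n - (k + 1) by omega, one_mul]
    have hZ : (X (Sum.inr (Sum.inr t)) : MvPolynomial (Fin n ⊕ Fin n ⊕ Fin (2 * n - 1)) F) =
        Zv F n ((k : ℤ) - ((n - (k + 1) : ℕ) : ℤ) + 1) := Zv_index F n t _ (by omega)
    have hw : Dex (Fintype.card F) n t.val * wt F n (Sum.inr (Sum.inr t)) =
        (Fintype.card F ^ (k + 1) + Fintype.card F ^ (n - (k + 1))) := by
      rw [hD, ← min_pow]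
      simp only [wt, Sum.elim_inr]
      congr 3
      omega
    refine ⟨X (Sum.inr (Sum.inr t)) ^ Dex (Fintype.card F) n t.val -
      (-1) ^ (k + (n - (k + 1))) * RvTildePlus F n (k + 1), ?_, ?_, ?_⟩
    · change _ ∈ JJ F n
      rw [← Ideal.Quotient.eq_zero_iff_mem, hZ, hD, RvTildePlus_eq F n k]
      simp only [map_sub, map_pow, map_mul, map_neg, map_one]
      rw [mk_Evp, Ideal.Quotient.eq_zero_iff_mem.mpr (Xv_mem F n (k + 1)), zero_mul, sub_zero]
      rw [← mul_assoc, neg_one_sq_pow, one_mul, sub_self]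
    · apply sub_hom
      · exact (isWeightedHomogeneous_X F (wt F n) _).pow _
      · rw [hw]
        have := (neg_one_hom F (wt F n) (k + (n - (k + 1)))).mul (RvTildePlus_hom F n k)
        rwa [zero_add] at this
    · rw [sub_sub_cancel]
      exact Ideal.mul_mem_left _ _
        (Ideal.subset_span (Or.inr ⟨k + 1, ⟨by omega, by omega⟩, rfl⟩))

theorem II_le_ker (p) (hp : p ∈ II F n) : phi F n p = 0 := by
  have : II F n ≤ RingHom.ker (phi F n) := by
    unfold II
    rw [Ideal.span_le]
    rintro p (⟨k, ⟨h1, h2⟩, rfl⟩ | ⟨k, ⟨h1, h2⟩, rfl⟩)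
    · obtain ⟨k, rfl⟩ : ∃ k', k = k' + 1 := ⟨k - 1, by omega⟩
      exact phi_RvTilde F n k (by omega)
    · obtain ⟨k, rfl⟩ : ∃ k', k = k' + 1 := ⟨k - 1, by omega⟩
      exact phi_RvTildePlus F n k (by omega)
  exact this hp

end Relations

end KerBn

namespace KerBn

section Final

set_option linter.unusedSectionVars false

variable (F : Type) [Field F] [Fintype F] (n : ℕ)

/-- The generators `f̃`, `f̃*`. -/
noncomputable def gen : Fin n ⊕ Fin n → MvPolynomial (Fin n ⊕ Fin n) F :=
  Sum.elim (fun i : Fin n => fX F n (i.val + 1) ^ (Fintype.card F - 1))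
    (fun i : Fin n => fY F n (i.val + 1) ^ (Fintype.card F - 1))

/-- The inclusion of the ring generated by `f̃`, `f̃*`. -/
noncomputable def psi : MvPolynomial (Fin n ⊕ Fin n) F →ₐ[F] MvPolynomial (Fin n ⊕ Fin n) F :=
  aeval (gen F n)

theorem phi_rename (a : MvPolynomial (Fin n ⊕ Fin n) F) :
    phi F n (rename emb a) = psi F n a := by
  unfold phi psi
  rw [aeval_rename]
  congr 2
  funext s
  rcases s with s | s <;> rfl

/-- The degrees of the generators. -/
def dg (i : Fin n) : ℕ := (Fintype.card F - 1) * Fintype.card F ^ i.val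

theorem dg_pos (i : Fin n) : 0 < dg F n i := by
  have := Fintype.one_lt_card (α := F)
  exact Nat.mul_pos (by omega) (pow_pos (by omega) _)

/-- Reversal of the `y`-variables. -/
def rv : Fin n ⊕ Fin n → Fin n ⊕ Fin n := Sum.map id Fin.rev

theorem rv_inj : Function.Injective (rv n) :=
  Sum.map_injective.mpr ⟨Function.injective_id, Fin.rev_injective⟩

theorem rename_fX (i : Fin n) : rename (rv n) (fX F n (i.val + 1)) =
    ∏ α : Fin i.val → F, (X (Sum.inl i) + ∑ j : Fin i.val, C (α j) *
      X (Sum.inl ⟨j.val, by omega⟩)) := by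
  have := i.isLt
  unfold fX
  rw [dif_pos ⟨by omega, by omega⟩]
  simp only [map_prod, map_add, map_sum, map_mul, rename_X, rename_C]
  rfl

theorem rename_fY (i : Fin n) : rename (rv n) (fY F n (i.val + 1)) =
    ∏ α : Fin i.val → F, (X (Sum.inr i) + ∑ j : Fin i.val, C (α j) *
      X (Sum.inr ⟨j.val, by omega⟩)) := by
  have := i.isLt
  unfold fY
  rw [dif_pos ⟨by omega, by omega⟩]
  simp only [map_prod, map_add, map_sum, map_mul, rename_X, rename_C, rv, Sum.map_inr]
  refine Finset.prod_congr rfl fun α _ => ?_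
  congr 1
  · congr 2
    apply Fin.ext
    simp only [Fin.val_rev]
    omega
  · refine Finset.sum_congr rfl fun j _ => ?_
    congr 3
    apply Fin.ext
    have := j.isLt
    simp only [Fin.val_rev]
    omega

theorem monic_orbit {σ : Type} (m : MonomialOrder.{0, 0} σ) (s : σ) (k : ℕ) (f : Fin k → σ)
    (hlt : ∀ j, m.toSyn (Finsupp.single (f j) 1) < m.toSyn (Finsupp.single s 1)) :
    m.Monic ((∏ α : Fin k → F, (X s + ∑ j : Fin k, C (α j) * X (f j))) ^ (Fintype.card F - 1)) ∧
    m.degree ((∏ α : Fin k → F, (X s + ∑ j : Fin k, C (α j) * X (f j))) ^ (Fintype.card F - 1)) =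
      Finsupp.single s ((Fintype.card F - 1) * Fintype.card F ^ k) := by
  classical
  have h1 := fun α : Fin k → F => monic_linear m Finset.univ s f α (fun j _ => hlt j)
  have h2 : m.Monic (∏ α : Fin k → F, (X s + ∑ j : Fin k, C (α j) * X (f j))) :=
    MonomialOrder.Monic.prod (fun α _ => (h1 α).1)
  refine ⟨h2.pow, ?_⟩
  rw [m.degree_pow, m.degree_prod (fun α _ => (h1 α).1.ne_zero)]
  simp only [(h1 _).2, Finset.sum_const, Finset.card_univ, Fintype.card_fun, Fintype.card_fin]
  simp

theorem exists_order : ∃ m : MonomialOrder.{0, 0} (Fin n ⊕ Fin n),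
    (∀ s, m.Monic (rename (rv n) (gen F n s))) ∧
    ∀ s, m.degree (rename (rv n) (gen F n s)) = Finsupp.single s (Sum.elim (dg F n) (dg F n) s) := by
  obtain ⟨m, hm⟩ := exists_monomialOrder (σ := Fin n ⊕ Fin n)
    (Sum.elim (fun i => n - 1 - i.val) (fun i => n + (n - 1 - i.val))) (by
      rintro (a | a) (b | b) h
      · simp only [Sum.elim_inl] at h
        congr 1
        apply Fin.ext
        omega
      · simp only [Sum.elim_inl, Sum.elim_inr] at h
        omega
      · simp only [Sum.elim_inl, Sum.elim_inr] at h
        omega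
      · simp only [Sum.elim_inr] at h
        congr 1
        apply Fin.ext
        omega)
  have key : ∀ s, m.Monic (rename (rv n) (gen F n s)) ∧
      m.degree (rename (rv n) (gen F n s)) =
        Finsupp.single s (Sum.elim (dg F n) (dg F n) s) := by
    rintro (i | i)
    · simp only [gen, Sum.elim_inl, map_pow, rename_fX]
      refine monic_orbit F m _ _ _ fun j => hm _ _ ?_
      have := j.isLt
      simp only [Sum.elim_inl]
      omega
    · simp only [gen, Sum.elim_inr, map_pow, rename_fY]
      refine monic_orbit F m _ _ _ fun j => hm _ _ ?_
      have := j.isLt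
      simp only [Sum.elim_inr]
      omega
  exact ⟨m, fun s => (key s).1, fun s => (key s).2⟩

theorem fX_ne (i : Fin n) : fX F n (i.val + 1) ≠ 0 := by
  obtain ⟨m, hm, _⟩ := exists_order F n
  intro h
  have := (hm (Sum.inl i)).ne_zero
  apply this
  simp only [gen, Sum.elim_inl, h, zero_pow (card_sub_one_ne F), map_zero]

theorem hxy (c : (∀ i, Fin (dg F n i)) × (∀ j, Fin (dg F n j)) → MvPolynomial (Fin n ⊕ Fin n) F)
    (h : ∑ p, psi F n (c p) * ((∏ i, X (Sum.inl i) ^ (p.1 i).val) *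
      ∏ j : Fin n, X (Sum.inr j.rev) ^ (p.2 j).val) = 0) : c = 0 := by
  obtain ⟨m, hm, hd⟩ := exists_order F n
  let e := Equiv.sumPiEquivProdPi (fun s => Fin (Sum.elim (dg F n) (dg F n) s))
  have h2 := congrArg (rename (rv n)) h
  rw [map_zero, map_sum] at h2
  have key := indep_of_leading m (Sum.elim (dg F n) (dg F n)) (fun s => rename (rv n) (gen F n s))
    hm hd (fun a => c (e a)) (by
      rw [← h2]
      refine (e.sum_comp (fun p => _)).symm.trans ?_ |>.symm
      refine Finset.sum_congr rfl fun a _ => ?_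
      rw [map_mul]
      congr 1
      · unfold psi
        have := comp_aeval_apply (gen F n) (rename (rv n) : _ →ₐ[F] MvPolynomial (Fin n ⊕ Fin n) F)
          (c (e a))
        exact this
      · rw [Fintype.prod_sum_type]
        simp only [map_mul, map_prod, map_pow, rename_X, rv, Sum.map_inl, Sum.map_inr, id,
          Fin.rev_rev]
        rfl)
  funext p
  have := key (e.symm p)
  have e3 : e (e.symm p) = p := e.apply_symm_apply p
  rw [e3] at this
  exact this

/-- The variables `X` in the coefficient ring. -/
noncomputable def av (g : ℕ) : MvPolynomial (Fin n ⊕ Fin n) F :=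
  if h : g < n then X (Sum.inl ⟨g, h⟩) else 0

theorem psi_av (g : ℕ) : psi F n (av F n g) =
    L (Fintype.card F) (xx F n) g (xx F n g) ^ (Fintype.card F - 1) := by
  rw [← fX_eq]
  unfold av
  split_ifs with h
  · simp [psi, gen]
  · unfold fX
    rw [dif_neg (by omega), map_zero, zero_pow (card_sub_one_ne F)]

theorem psi_cc (s t : ℕ) : psi F n (cc (Fintype.card F) (av F n) s t) = cc (Fintype.card F)
    (fun g => L (Fintype.card F) (xx F n) g (xx F n g) ^ (Fintype.card F - 1)) s t := by
  have := map_cc (psi F n).toRingHom (Fintype.card F) (av F n) s t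
  simp only [AlgHom.toRingHom_eq_coe, RingHom.coe_coe, psi_av] at this
  exact this

theorem hroot (i : Fin n) : ∃ p : Polynomial (MvPolynomial (Fin n ⊕ Fin n) F), p.Monic ∧
    p.natDegree = dg F n i ∧ p.eval₂ (psi F n).toRingHom (X (Sum.inl i)) = 0 := by
  have hq := Fintype.one_lt_card (α := F)
  let T : Polynomial (MvPolynomial (Fin n ⊕ Fin n) F) := Polynomial.X
  let rest : Polynomial (MvPolynomial (Fin n ⊕ Fin n) F) :=
    ∑ t ∈ Finset.range i.val, Polynomial.C ((-1) ^ (i.val + t) *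
      cc (Fintype.card F) (av F n) i.val t) * Polynomial.X ^ (Fintype.card F ^ t)
  have hrest : rest.degree < ((Fintype.card F ^ i.val : ℕ) : WithBot ℕ) := by
    refine lt_of_le_of_lt (Polynomial.degree_sum_le _ _) ?_
    rw [Finset.sup_lt_iff (WithBot.bot_lt_coe _)]
    intro t ht
    rw [Finset.mem_range] at ht
    refine lt_of_le_of_lt (Polynomial.degree_C_mul_X_pow_le _ _) ?_
    exact_mod_cast Nat.pow_lt_pow_right hq ht
  have h1 : (Polynomial.X ^ (Fintype.card F ^ i.val) + rest).Monic :=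
    Polynomial.monic_X_pow_add hrest
  have h1d : (Polynomial.X ^ (Fintype.card F ^ i.val) + rest).natDegree = Fintype.card F ^ i.val := by
    apply Polynomial.natDegree_eq_of_degree_eq_some
    rw [Polynomial.degree_add_eq_left_of_degree_lt, Polynomial.degree_X_pow]
    rwa [Polynomial.degree_X_pow]
  have h2 := h1.pow (Fintype.card F - 1)
  have h2d := h1.natDegree_pow (Fintype.card F - 1)
  rw [h1d] at h2d
  refine ⟨(Polynomial.X ^ (Fintype.card F ^ i.val) + rest) ^ (Fintype.card F - 1) -
    Polynomial.C (X (Sum.inl i)), ?_, ?_, ?_⟩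
  · apply h2.sub_of_left
    refine lt_of_le_of_lt Polynomial.degree_C_le ?_
    rw [← Polynomial.natDegree_pos_iff_degree_pos, h2d]
    exact dg_pos F n i
  · rw [Polynomial.natDegree_sub_C, h2d]
    rfl
  · have e : (X (Sum.inl i) : MvPolynomial (Fin n ⊕ Fin n) F) = xx F n i.val := by simp [xx]
    have e1 : (Polynomial.X ^ (Fintype.card F ^ i.val) + rest).eval₂ (psi F n).toRingHom
        (X (Sum.inl i)) = L (Fintype.card F) (xx F n) i.val (xx F n i.val) := by
      rw [L_sum F, Finset.sum_range_succ, cc_self, Polynomial.eval₂_add, Polynomial.eval₂_X_pow,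
        Polynomial.eval₂_finsetSum, add_comm, e]
      congr 1
      · refine Finset.sum_congr rfl fun t _ => ?_
        rw [Polynomial.eval₂_mul, Polynomial.eval₂_C, Polynomial.eval₂_X_pow, map_mul,
          map_pow, map_neg, map_one]
        congr 2
        exact psi_cc F n i.val t
      · rw [pow_add, neg_one_sq_pow]
        ring
    rw [Polynomial.eval₂_sub, Polynomial.eval₂_pow, e1, Polynomial.eval₂_C]
    have e2 := psi_av F n i.val
    have e3 : av F n i.val = X (Sum.inl i) := by simp [av]
    rw [e3] at e2
    rw [sub_eq_zero]
    exact e2.symm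

theorem L_mem {R : Type*} [CommRing R] (G : Subring R) (q : ℕ) (x : ℕ → R) (hx : ∀ g, x g ∈ G)
    (k : ℕ) (z : R) (hz : z ∈ G) : L q x k z ∈ G := by
  induction k generalizing z with
  | zero => exact hz
  | succ k ih =>
    simp only [L]
    exact sub_mem (pow_mem (ih z hz) _) (mul_mem (pow_mem (ih _ (hx k)) _) (ih z hz))

/-- The triangular matrix. -/
noncomputable def WW : Matrix (Fin n) (Fin n) (MvPolynomial (Fin n ⊕ Fin n) F) :=
  fun k m => L (Fintype.card F) (xx F n) k.val (X (Sum.inl m))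

theorem WW_det : (WW F n).det ≠ 0 := by
  rw [Matrix.det_of_upperTriangular]
  · rw [Finset.prod_ne_zero_iff]
    intro k _
    have e : (X (Sum.inl k) : MvPolynomial (Fin n ⊕ Fin n) F) = xx F n k.val := by simp [xx]
    unfold WW
    rw [e, ← fX_eq]
    exact fX_ne F n k
  · intro k m h
    have e : (X (Sum.inl m) : MvPolynomial (Fin n ⊕ Fin n) F) = xx F n m.val := by simp [xx]
    unfold WW
    rw [e]
    exact L_eq_zero F _ _ _ h

theorem WW_mulVec (k : Fin n) : (WW F n).mulVec (fun m => X (Sum.inr m)) k ∈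
    (phi F n).toRingHom.range := by
  have hk := k.isLt
  refine ⟨∑ i ∈ Finset.range (k.val + 1), (-1) ^ (k.val + i) * CXv F n k.val i *
    Zv F n ((i : ℤ) - ((0 : ℕ) : ℤ)), ?_⟩
  simp only [AlgHom.toRingHom_eq_coe, RingHom.coe_coe, map_sum, map_mul, map_pow, map_neg, map_one,
    phi_CXv]
  simp only [Matrix.mulVec, dotProduct, WW]
  have e : ∀ z, _ := fun z => L_sum F (xx F n) k.val z
  simp only [e, Finset.sum_mul]
  rw [Finset.sum_comm]
  refine Finset.sum_congr rfl fun i hi => ?_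
  rw [Finset.mem_range] at hi
  have := phi_Zv F n i 0 (by omega) (by omega)
  rw [Nat.min_zero, pow_zero, pow_one] at this
  rw [this, Finset.mul_sum]
  refine Finset.sum_congr rfl fun m _ => ?_
  ring

theorem adj_mem {R ι : Type*} [CommRing R] [Fintype ι] [DecidableEq ι] (G : Subring R)
    (M : Matrix ι ι R) (hM : ∀ i j, M i j ∈ G) :
    M.det ∈ G ∧ ∀ v : ι → R, (∀ i, M.mulVec v i ∈ G) → ∀ i, M.det * v i ∈ G := by
  let M' : Matrix ι ι G := fun i j => ⟨M i j, hM i j⟩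
  have hMM : M = G.subtype.mapMatrix M' := rfl
  have hdet : M.det = G.subtype M'.det := by rw [hMM, RingHom.map_det]
  have hadj : M.adjugate = G.subtype.mapMatrix M'.adjugate := by rw [hMM, RingHom.map_adjugate]
  refine ⟨by rw [hdet]; exact (M'.det).2, fun v hv i => ?_⟩
  have h1 : M.adjugate.mulVec (M.mulVec v) i = M.det * v i := by
    rw [Matrix.mulVec_mulVec, Matrix.adjugate_mul, Matrix.smul_mulVec, Matrix.one_mulVec]
    rfl
  rw [← h1]
  refine sum_mem fun j _ => mul_mem ?_ (hv j)
  rw [hadj]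
  exact (M'.adjugate i j).2

theorem exists_normal (p : MvPolynomial (Fin n ⊕ Fin n ⊕ Fin (2 * n - 1)) F) :
    ∃ c : (∀ t : Fin (2 * n - 1), Fin (Dex (Fintype.card F) n t.val)) →
      MvPolynomial (Fin n ⊕ Fin n) F,
      p - ∑ e, rename emb (c e) * ∏ t, X (Sum.inr (Sum.inr t)) ^ (e t).val ∈ II F n := by
  refine spanning (wt F n) ?_ (fun t => Dex (Fintype.card F) n t.val) (II F n) (hrel F n) p
  rintro (a | a)
  · exact dg_pos F n a
  · exact dg_pos F n a

theorem phi_normal (c : (∀ t : Fin (2 * n - 1), Fin (Dex (Fintype.card F) n t.val)) →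
      MvPolynomial (Fin n ⊕ Fin n) F) :
    phi F n (∑ e, rename emb (c e) * ∏ t, X (Sum.inr (Sum.inr t)) ^ (e t).val) =
    ∑ e, psi F n (c e) * ∏ t : Fin (2 * n - 1), uInv F n ((t : ℤ) + 1 - n) ^ (e t).val := by
  simp only [map_sum, map_mul, map_prod, map_pow, phi_rename]
  refine Finset.sum_congr rfl fun e _ => ?_
  congr 1
  refine Finset.prod_congr rfl fun t _ => ?_
  simp [phi]

theorem indep (hn : 1 ≤ n) (c : (∀ t : Fin (2 * n - 1), Fin (Dex (Fintype.card F) n t.val)) →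
      MvPolynomial (Fin n ⊕ Fin n) F)
    (h : ∑ e, psi F n (c e) * ∏ t : Fin (2 * n - 1), uInv F n ((t : ℤ) + 1 - n) ^ (e t).val = 0) :
    c = 0 := by
  set B : Subring (MvPolynomial (Fin n ⊕ Fin n) F) := (phi F n).toRingHom.range with hB
  set G : Subring (MvPolynomial (Fin n ⊕ Fin n) F) := Subring.closure
    ((B : Set (MvPolynomial (Fin n ⊕ Fin n) F)) ∪
      Set.range (fun i : Fin n => X (Sum.inl i))) with hG
  have hBG : ∀ b ∈ B, b ∈ G := fun b hb => Subring.subset_closure (Or.inl hb)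
  have hxG : ∀ i : Fin n, (X (Sum.inl i) : MvPolynomial (Fin n ⊕ Fin n) F) ∈ G :=
    fun i => Subring.subset_closure (Or.inr ⟨i, rfl⟩)
  have hxx : ∀ g, xx F n g ∈ G := by
    intro g
    unfold xx
    split_ifs with h
    · exact hxG _
    · exact zero_mem _
  have hadj := adj_mem G (WW F n) (fun k m => L_mem G _ _ hxx _ _ (hxG m))
  refine indep_u (psi F n).toRingHom (fun i : Fin n => X (Sum.inl i))
    (fun j : Fin n => X (Sum.inr j.rev)) (fun t : Fin (2 * n - 1) => uInv F n ((t : ℤ) + 1 - n))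
    (dg F n) (dg F n) (fun t => Dex (Fintype.card F) n t.val) (prod_Dex _ n hn) (hroot F n) B ?_
    (dg_pos F n) (WW F n).det (WW_det F n) G hG hadj.1 ?_ ?_ (hxy F n) c h
  · rintro b ⟨p, rfl⟩
    obtain ⟨c, hc⟩ := exists_normal F n p
    refine ⟨c, ?_⟩
    have := II_le_ker F n _ hc
    rw [map_sub, sub_eq_zero, phi_normal] at this
    exact this
  · intro j
    exact hadj.2 (fun m => X (Sum.inr m)) (fun k => hBG _ (WW_mulVec F n k)) j.rev
  · intro a
    exact ⟨rename emb a, phi_rename F n a⟩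

theorem main (hn : 1 ≤ n) (p) : phi F n p = 0 ↔ p ∈ II F n := by
  refine ⟨fun hp => ?_, II_le_ker F n p⟩
  obtain ⟨c, hc⟩ := exists_normal F n p
  have h := II_le_ker F n _ hc
  rw [map_sub, hp, zero_sub, neg_eq_zero, phi_normal] at h
  have h0 := indep F n hn c h
  subst h0
  simpa using hc

end Final

end KerBn

/-- Theorem (main, part (b), relations): for `n ≥ 1`, the kernel of the presentation map
`φ : P → F_q[V ⊕ V*]`, `X_i ↦ f̃_i`, `Y_i ↦ f̃_i^*`, `Z_j ↦ u_j`, is generated by the `2n-1`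
relations `R̃_1, R̃_1^+, R̃_2, R̃_2^+, …, R̃_{n-1}, R̃_{n-1}^+, R̃_n`. -/
theorem ker_presentation_Bn (hn : 1 ≤ n) :
    RingHom.ker (aeval (R := F)
        (Sum.elim (fun i : Fin n => fX F n (i.val + 1) ^ (Fintype.card F - 1))
          (Sum.elim (fun i : Fin n => fY F n (i.val + 1) ^ (Fintype.card F - 1))
            (fun m : Fin (2 * n - 1) => uInv F n ((m : ℤ) + 1 - n)))) :
        MvPolynomial (Fin n ⊕ Fin n ⊕ Fin (2 * n - 1)) F →+* MvPolynomial (Fin n ⊕ Fin n) F)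
      = Ideal.span ({p | ∃ k, (1 ≤ k ∧ k ≤ n) ∧ p = RvTilde F n k} ∪
          {p | ∃ k, (1 ≤ k ∧ k ≤ n - 1) ∧ p = RvTildePlus F n k}) := by
  refine Ideal.ext fun p => ?_
  exact KerBn.main F n hn p
end
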